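/- There is a constant c > 0 such that for every n ≥ 2 and every nonempty set S of triangulations of the convex (n+2)-gon with 2|S| ≤ |V(K_n)|, the number of edges of the associahedron graph K_n with exactly one endpoint in S is at least c·|S|/(√n · log n). In other words, the edge expansion of K_n is Ω(1/(√n·log n)). -/

import Mathlib

open Finset

/-- `x` lies strictly between `a` and `b` in cyclic (counterclockwise) order
on the vertices `0, 1, …, m-1` of a convex `m`-gon. -/
def CycBtw {m : ℕ} (a b x : Fin m) : Prop :=
  0 < (x - a).val ∧ (x - a).val < (b - a).val

/-- `a` and `b` are adjacent (cyclically consecutive) vertices of the convex `m`-gon. -/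
def PolyAdj {m : ℕ} (a b : Fin m) : Prop :=
  (b - a).val = 1 ∨ (a - b).val = 1

/-- `e` is a side of the convex `m`-gon. -/
def IsSide {m : ℕ} (e : Sym2 (Fin m)) : Prop :=
  ∃ a b : Fin m, e = s(a, b) ∧ PolyAdj a b

/-- `e` is a diagonal of the convex `m`-gon: a pair of distinct non-adjacent vertices. -/
def IsDiagonal {m : ℕ} (e : Sym2 (Fin m)) : Prop :=
  ¬ e.IsDiag ∧ ∀ a b : Fin m, e = s(a, b) → ¬ PolyAdj a b

/-- Two chords cross iff exactly one endpoint of one lies strictly between the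
endpoints of the other (for every representation of the endpoints). -/
def Crosses {m : ℕ} (e f : Sym2 (Fin m)) : Prop :=
  ∀ a b : Fin m, e = s(a, b) →
    ∃ c d : Fin m, f = s(c, d) ∧ Xor' (CycBtw a b c) (CycBtw a b d)

/-- A triangulation of the convex `(n+2)`-gon: a maximal set of pairwise
non-crossing diagonals. -/
def IsTriangulation (n : ℕ) (t : Finset (Sym2 (Fin (n + 2)))) : Prop :=
  (∀ e ∈ t, IsDiagonal e) ∧
  (∀ e ∈ t, ∀ f ∈ t, ¬ Crosses e f) ∧
  (∀ e, IsDiagonal e → (∀ f ∈ t, ¬ Crosses e f) → e ∈ t)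

/-- The type of triangulations of the convex `(n+2)`-gon. -/
def Triangulation (n : ℕ) : Type :=
  {t : Finset (Sym2 (Fin (n + 2))) // IsTriangulation n t}

instance (n : ℕ) : DecidableEq (Triangulation n) := fun a b =>
  decidable_of_iff (a.val = b.val) Subtype.ext_iff.symm

noncomputable instance (n : ℕ) : Fintype (Triangulation n) := by
  classical exact Subtype.fintype _

/-- The associahedron graph `K_n`: vertices are the triangulations of the convex
`(n+2)`-gon, with an edge between two triangulations iff they differ in exactly
one diagonal (a flip). -/
def assocGraph (n : ℕ) : SimpleGraph (Triangulation n) where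
  Adj s t := (s.val \ t.val).card = 1 ∧ (t.val \ s.val).card = 1
  symm := ⟨fun s t h => ⟨h.2, h.1⟩⟩
  loopless := ⟨fun s h => by simp at h⟩

/-- The set of edges of `G` with exactly one endpoint in `S`. -/
def edgeBoundary {V : Type*} (G : SimpleGraph V) (S : Set V) : Set (Sym2 V) :=
  {e | e ∈ G.edgeSet ∧ ∃ u v : V, e = s(u, v) ∧ u ∈ S ∧ v ∉ S}

/-!
It is enough to prove an `ℓ¹` Poincaré inequality `∑ |f - mean f| ≤ K * energy f` with
`K = O(√n)` on the flip graph of a convex `n`-gon: for the indicator function of a set `S` the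
energy is twice the edge boundary of `S`.

Assign to every triangulation a random triangle, the *median* triangle of three sides of the
polygon drawn independently from three well-separated blocks of sides. Such a triangle `pqr` is
central: it cuts the polygon into pieces that omit a fixed proportion of the vertices. The
triangulations containing `pqr` form a product of three smaller flip graphs, and Poincaré constants
tensorize, so deviations of `f` from its average over the triangulations containing `pqr` cost at
most `K ((1 - δ) n)`. To compare these averages for different triangles one moves the vertices one
at a time to independent uniform positions. Moving `p` amounts to moving the fourth vertex of a
quadrilateral, and the *apex projection* controls this: if `S` is the set of triangulations of a
polygon with root side `uv` and `T w` is the set of those with triangle `uwv`, then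
`∑ w, |∑ x ∈ T w, f x - #(T w) / #S * ∑ x ∈ S, f x| ≤ energy f`. By the `k ^ (-3/2)` decay of the
normalized Catalan numbers the total cost of the moves is `O(√n)`. The resulting recursion
`K n ≤ K ((1 - δ) n) + O(√n)` gives `K n = O(√n)`.
-/

namespace Associahedron

attribute [local instance] LinearOrder.toCircularOrder

/-! ### Cyclic order and crossing chords -/

section CyclicOrder

variable {V : Type*} [LinearOrder V] {a b c d p q r s u v w : V}

lemma sbtw_iff_lt : sbtw a b c ↔ a < b ∧ b < c ∨ b < c ∧ c < a ∨ c < a ∧ a < b := Iff.rfl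

lemma btw_iff_le : btw a b c ↔ a ≤ b ∧ b ≤ c ∨ b ≤ c ∧ c ≤ a ∨ c ≤ a ∧ a ≤ b := Iff.rfl

instance decidableSBtw (a b c : V) : Decidable (sbtw a b c) := decidable_of_iff' _ sbtw_iff_lt

instance decidableBtw (a b c : V) : Decidable (btw a b c) := decidable_of_iff' _ btw_iff_le

lemma sbtw_ne (h : sbtw a b c) : a ≠ b ∧ b ≠ c ∧ a ≠ c := by
  rw [sbtw_iff_lt] at h
  grind

lemma sbtw_or_sbtw (hab : a ≠ b) (hbc : b ≠ c) (hac : a ≠ c) : sbtw a b c ∨ sbtw a c b := by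
  rw [sbtw_iff_lt, sbtw_iff_lt]
  grind

lemma btw_iff_eq_or_sbtw (h : u ≠ v) : btw u w v ↔ w = u ∨ w = v ∨ sbtw u w v := by
  rw [btw_iff_le, sbtw_iff_lt]
  grind

lemma eq_of_btw_of_btw (h : sbtw p q r) (hc : btw p c q) (hc' : btw q c r) : c = q := by
  simp only [sbtw_iff_lt, btw_iff_le] at *
  grind

/-- The points `a`, `c`, `b`, `d` are distinct and in cyclic order, so that the chords `ab` and
`cd` cross. The relation is sensitive to the orientation of the two chords. -/
def Cross (a b c d : V) : Prop := sbtw a c b ∧ sbtw b d a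

lemma Cross.symm (h : Cross a b c d) : Cross c d b a := by
  simp only [Cross, sbtw_iff_lt] at *
  grind

lemma Cross.reverse (h : Cross a b c d) : Cross b a d c := And.symm h

lemma not_cross_self : ¬ Cross a a c d := fun h => (sbtw_ne h.1).2.2 rfl

lemma btw_of_cross_of_not_cross (ha : btw p a q) (hb : btw p b q)
    (h : Cross a b c d) (hcd : ¬ Cross p q c d) (hdc : ¬ Cross p q d c) :
    btw p c q ∧ btw p d q := by
  simp only [Cross, btw_iff_le, sbtw_iff_lt] at *
  grind

lemma not_cross_of_btw_of_btw (h : sbtw p q r) (ha : btw p a q) (hb : btw p b q)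
    (hc : btw q c r) (hd : btw q d r) : ¬ Cross a b c d := by
  have hc' : c = q ∨ sbtw q c p := by
    rw [btw_iff_le, sbtw_iff_lt] at *
    grind
  have hd' : d = q ∨ sbtw q d p := by
    rw [btw_iff_le, sbtw_iff_lt] at *
    grind
  clear h hc hd
  simp only [Cross, btw_iff_le, sbtw_iff_lt] at *
  grind (splits := 20)

lemma btw_of_not_cross_triangle (h : sbtw p q r)
    (hpq : ¬ Cross a b p q) (hqp : ¬ Cross a b q p) (hqr : ¬ Cross a b q r)
    (hrq : ¬ Cross a b r q) (hrp : ¬ Cross a b r p) (hpr : ¬ Cross a b p r) :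
    btw p a q ∧ btw p b q ∨ btw q a r ∧ btw q b r ∨ btw r a p ∧ btw r b p := by
  simp only [Cross, btw_iff_le, sbtw_iff_lt] at *
  grind

end CyclicOrder

/-! ### Triangulations as maximal sets of chords -/

section Triangulations

lemma sym2_finset_ext {V : Type*} {x y : Finset (Sym2 V)} (h : ∀ a b, s(a, b) ∈ x ↔ s(a, b) ∈ y) :
    x = y := Finset.ext (Sym2.forall.2 h)

variable {V : Type*} [LinearOrder V] {A B : Finset V} {x y x₁ x₂ x₃ y₁ : Finset (Sym2 V)}
  {a b c d p q r u v w : V}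

open Classical in
/-- The triangulations of the convex polygon with vertex set `A`, in its cyclic order, encoded as
the maximal sets of pairwise noncrossing chords. The loops `s(a, a)` and the sides of the polygon
count as chords and hence belong to every triangulation; this makes the encoding uniform in `A`,
down to polygons with fewer than three vertices. -/
noncomputable def triangulations (A : Finset V) : Finset (Finset (Sym2 V)) :=
  {x ∈ A.sym2.powerset |
    ∀ a ∈ A, ∀ b ∈ A, s(a, b) ∈ x ↔ ∀ c d, s(c, d) ∈ x → ¬ Cross a b c d}

lemma mem_triangulations : x ∈ triangulations A ↔ (∀ a b, s(a, b) ∈ x → a ∈ A ∧ b ∈ A) ∧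
    ∀ a ∈ A, ∀ b ∈ A, s(a, b) ∈ x ↔ ∀ c d, s(c, d) ∈ x → ¬ Cross a b c d := by
  simp [triangulations, subset_iff, Sym2.forall]

lemma mem_of_chord (hx : x ∈ triangulations A) (h : s(a, b) ∈ x) : a ∈ A ∧ b ∈ A :=
  (mem_triangulations.1 hx).1 a b h

lemma not_cross_of_mem (hx : x ∈ triangulations A) (h : s(a, b) ∈ x) (h' : s(c, d) ∈ x) :
    ¬ Cross a b c d :=
  have hab := mem_of_chord hx h
  ((mem_triangulations.1 hx).2 a hab.1 b hab.2).1 h c d h'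

lemma chord_mem_of_forall_not_cross (hx : x ∈ triangulations A) (ha : a ∈ A) (hb : b ∈ A)
    (h : ∀ c d, s(c, d) ∈ x → ¬ Cross a b c d) : s(a, b) ∈ x :=
  ((mem_triangulations.1 hx).2 a ha b hb).2 h

lemma loop_mem (hx : x ∈ triangulations A) (ha : a ∈ A) : s(a, a) ∈ x :=
  chord_mem_of_forall_not_cross hx ha ha fun _ _ _ => not_cross_self

lemma side_mem (hx : x ∈ triangulations A) (ha : a ∈ A) (hb : b ∈ A)
    (h : ∀ c ∈ A, ¬ sbtw a c b) : s(a, b) ∈ x :=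
  chord_mem_of_forall_not_cross hx ha hb fun c _ hcd hc => h c (mem_of_chord hx hcd).1 hc.1

lemma btw_of_triangle_mem (h : sbtw p q r) (hx : ∀ c d, s(c, d) ∈ x → ¬ Cross a b c d)
    (hpq : s(p, q) ∈ x) (hqr : s(q, r) ∈ x) (hrp : s(r, p) ∈ x) :
    btw p a q ∧ btw p b q ∨ btw q a r ∧ btw q b r ∨ btw r a p ∧ btw r b p :=
  btw_of_not_cross_triangle h (hx _ _ hpq) (hx _ _ (Sym2.eq_swap ▸ hpq)) (hx _ _ hqr)
    (hx _ _ (Sym2.eq_swap ▸ hqr)) (hx _ _ hrp) (hx _ _ (Sym2.eq_swap ▸ hrp))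

/-- The vertices of `A` on the closed arc from `u` to `v`; this is all of `A` if `u = v`. -/
def arc (A : Finset V) (u v : V) : Finset V := {w ∈ A | btw u w v}

lemma mem_arc : w ∈ arc A u v ↔ w ∈ A ∧ btw u w v := mem_filter

lemma root_mem (hp : p ∈ A) (hq : q ∈ A) (hx : x ∈ triangulations (arc A p q)) : s(p, q) ∈ x := by
  rw [Sym2.eq_swap]
  refine side_mem hx (mem_arc.2 ⟨hq, ?_⟩) (mem_arc.2 ⟨hp, ?_⟩) fun c hc => ?_
  · exact btw_refl_right p q
  · exact btw_refl_left p q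
  · exact (mem_arc.1 hc).2.not_sbtw

open Classical in
/-- The triangulations of the polygon on `A` that contain the triangle `pqr`. -/
noncomputable def withTriangle (A : Finset V) (p q r : V) : Finset (Finset (Sym2 V)) :=
  {x ∈ triangulations A | s(p, q) ∈ x ∧ s(q, r) ∈ x ∧ s(r, p) ∈ x}

lemma mem_withTriangle : x ∈ withTriangle A p q r ↔
    x ∈ triangulations A ∧ s(p, q) ∈ x ∧ s(q, r) ∈ x ∧ s(r, p) ∈ x := mem_filter

lemma withTriangle_rotate (A : Finset V) (p q r : V) :
    withTriangle A p q r = withTriangle A q r p := by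
  ext x
  simp only [mem_withTriangle]
  tauto

/-! ### Gluing triangulations of the three pieces cut off by a triangle -/

lemma not_cross_of_mem_of_mem (h : sbtw p q r) (h₁ : x₁ ∈ triangulations (arc A p q))
    (h₂ : x₂ ∈ triangulations (arc A q r)) (hab : s(a, b) ∈ x₁) (hcd : s(c, d) ∈ x₂) :
    ¬ Cross a b c d ∧ ¬ Cross c d a b := by
  obtain ⟨ha, hb⟩ := mem_of_chord h₁ hab
  obtain ⟨hc, hd⟩ := mem_of_chord h₂ hcd
  rw [mem_arc] at ha hb hc hd
  exact ⟨not_cross_of_btw_of_btw h ha.2 hb.2 hc.2 hd.2,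
    fun hcr => not_cross_of_btw_of_btw h ha.2 hb.2 hd.2 hc.2 hcr.symm⟩

lemma not_cross_of_mem_union (h : sbtw p q r) (h₁ : x₁ ∈ triangulations (arc A p q))
    (h₂ : x₂ ∈ triangulations (arc A q r)) (h₃ : x₃ ∈ triangulations (arc A r p))
    (hab : s(a, b) ∈ x₁ ∪ x₂ ∪ x₃) (hcd : s(c, d) ∈ x₁ ∪ x₂ ∪ x₃) : ¬ Cross a b c d := by
  have h' := h.cyclic_left
  have h'' := h'.cyclic_left
  simp only [mem_union] at hab hcd
  rcases hab with (hab | hab) | hab <;> rcases hcd with (hcd | hcd) | hcd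
  · exact not_cross_of_mem h₁ hab hcd
  · exact (not_cross_of_mem_of_mem h h₁ h₂ hab hcd).1
  · exact (not_cross_of_mem_of_mem h'' h₃ h₁ hcd hab).2
  · exact (not_cross_of_mem_of_mem h h₁ h₂ hcd hab).2
  · exact not_cross_of_mem h₂ hab hcd
  · exact (not_cross_of_mem_of_mem h' h₂ h₃ hab hcd).1
  · exact (not_cross_of_mem_of_mem h'' h₃ h₁ hab hcd).1
  · exact (not_cross_of_mem_of_mem h' h₂ h₃ hcd hab).2
  · exact not_cross_of_mem h₃ hab hcd

lemma union_mem_withTriangle (hp : p ∈ A) (hq : q ∈ A) (hr : r ∈ A) (h : sbtw p q r)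
    (h₁ : x₁ ∈ triangulations (arc A p q)) (h₂ : x₂ ∈ triangulations (arc A q r))
    (h₃ : x₃ ∈ triangulations (arc A r p)) : x₁ ∪ x₂ ∪ x₃ ∈ withTriangle A p q r := by
  have hpq : s(p, q) ∈ x₁ ∪ x₂ ∪ x₃ := by simp [root_mem hp hq h₁]
  have hqr : s(q, r) ∈ x₁ ∪ x₂ ∪ x₃ := by simp [root_mem hq hr h₂]
  have hrp : s(r, p) ∈ x₁ ∪ x₂ ∪ x₃ := by simp [root_mem hr hp h₃]
  refine mem_withTriangle.2 ⟨mem_triangulations.2 ⟨fun a b hab => ?_, fun a ha b hb =>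
    ⟨fun hab c d hcd => not_cross_of_mem_union h h₁ h₂ h₃ hab hcd, fun hmax => ?_⟩⟩, hpq, hqr, hrp⟩
  · simp only [mem_union] at hab
    rcases hab with (hab | hab) | hab
    · exact (mem_of_chord h₁ hab).imp (fun h => (mem_arc.1 h).1) fun h => (mem_arc.1 h).1
    · exact (mem_of_chord h₂ hab).imp (fun h => (mem_arc.1 h).1) fun h => (mem_arc.1 h).1
    · exact (mem_of_chord h₃ hab).imp (fun h => (mem_arc.1 h).1) fun h => (mem_arc.1 h).1
  · simp only [mem_union] at hmax ⊢
    rcases btw_of_triangle_mem h (x := x₁ ∪ x₂ ∪ x₃) (by simpa [or_assoc] using hmax)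
      hpq hqr hrp with
      ⟨ha', hb'⟩ | ⟨ha', hb'⟩ | ⟨ha', hb'⟩
    · exact .inl <| .inl <| chord_mem_of_forall_not_cross h₁ (mem_arc.2 ⟨ha, ha'⟩)
        (mem_arc.2 ⟨hb, hb'⟩) fun c d hcd => hmax c d (.inl (.inl hcd))
    · exact .inl <| .inr <| chord_mem_of_forall_not_cross h₂ (mem_arc.2 ⟨ha, ha'⟩)
        (mem_arc.2 ⟨hb, hb'⟩) fun c d hcd => hmax c d (.inl (.inr hcd))
    · exact .inr <| chord_mem_of_forall_not_cross h₃ (mem_arc.2 ⟨ha, ha'⟩)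
        (mem_arc.2 ⟨hb, hb'⟩) fun c d hcd => hmax c d (.inr hcd)

lemma mk_mem_inter_sym2 : s(a, b) ∈ x ∩ B.sym2 ↔ s(a, b) ∈ x ∧ a ∈ B ∧ b ∈ B := by
  rw [mem_inter, mk_mem_sym2_iff]

lemma inter_sym2_arc_mem_triangulations (hx : x ∈ triangulations A)
    (h : s(p, q) ∈ x) : x ∩ (arc A p q).sym2 ∈ triangulations (arc A p q) := by
  refine mem_triangulations.2 ⟨fun a b hab => (mk_mem_inter_sym2.1 hab).2, fun a ha b hb => ?_⟩
  rw [mk_mem_inter_sym2]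
  refine ⟨fun hab c d hcd => not_cross_of_mem hx hab.1 (mk_mem_inter_sym2.1 hcd).1,
    fun hmax => ⟨?_, ha, hb⟩⟩
  rw [mem_arc] at ha hb
  refine chord_mem_of_forall_not_cross hx ha.1 hb.1 fun c d hcd hcr => ?_
  obtain ⟨hc, hd⟩ := btw_of_cross_of_not_cross ha.2 hb.2 hcr (not_cross_of_mem hx h hcd)
    (not_cross_of_mem hx h (Sym2.eq_swap ▸ hcd))
  have hm := mem_of_chord hx hcd
  exact hmax c d (mk_mem_inter_sym2.2 ⟨hcd, mem_arc.2 ⟨hm.1, hc⟩, mem_arc.2 ⟨hm.2, hd⟩⟩) hcr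

lemma union_inter_sym2_arc (h : sbtw p q r) (hx : x ∈ withTriangle A p q r) :
    x ∩ (arc A p q).sym2 ∪ x ∩ (arc A q r).sym2 ∪ x ∩ (arc A r p).sym2 = x := by
  obtain ⟨hx, hpq, hqr, hrp⟩ := mem_withTriangle.1 hx
  refine sym2_finset_ext fun a b => ?_
  simp only [mem_union, mk_mem_inter_sym2, mem_arc]
  refine ⟨fun hab => ?_, fun hab => ?_⟩
  · rcases hab with (hab | hab) | hab <;> exact hab.1
  · obtain ⟨ha, hb⟩ := mem_of_chord hx hab
    rcases btw_of_triangle_mem h (fun _ _ => not_cross_of_mem hx hab) hpq hqr hrp with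
      ⟨ha', hb'⟩ | ⟨ha', hb'⟩ | ⟨ha', hb'⟩
    · exact .inl (.inl ⟨hab, ⟨ha, ha'⟩, hb, hb'⟩)
    · exact .inl (.inr ⟨hab, ⟨ha, ha'⟩, hb, hb'⟩)
    · exact .inr ⟨hab, ⟨ha, ha'⟩, hb, hb'⟩

lemma mem_union_iff_of_mem_arc (h : sbtw p q r) (h₁ : x₁ ∈ triangulations (arc A p q))
    (h₂ : x₂ ∈ triangulations (arc A q r)) (h₃ : x₃ ∈ triangulations (arc A r p))
    (ha : a ∈ arc A p q) (hb : b ∈ arc A p q) :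
    s(a, b) ∈ x₁ ∪ x₂ ∪ x₃ ↔ s(a, b) ∈ x₁ := by
  simp only [mem_union]
  refine ⟨?_, fun h => .inl (.inl h)⟩
  rintro ((hab | hab) | hab)
  · exact hab
  · obtain ⟨ha', hb'⟩ := mem_of_chord h₂ hab
    obtain rfl := eq_of_btw_of_btw h (mem_arc.1 ha).2 (mem_arc.1 ha').2
    obtain rfl := eq_of_btw_of_btw h (mem_arc.1 hb).2 (mem_arc.1 hb').2
    exact loop_mem h₁ ha
  · obtain ⟨ha', hb'⟩ := mem_of_chord h₃ hab
    obtain rfl := eq_of_btw_of_btw h.cyclic_right (mem_arc.1 ha').2 (mem_arc.1 ha).2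
    obtain rfl := eq_of_btw_of_btw h.cyclic_right (mem_arc.1 hb').2 (mem_arc.1 hb).2
    exact loop_mem h₁ ha

lemma union_inter_sym2_arc_eq_left (h : sbtw p q r) (h₁ : x₁ ∈ triangulations (arc A p q))
    (h₂ : x₂ ∈ triangulations (arc A q r)) (h₃ : x₃ ∈ triangulations (arc A r p)) :
    (x₁ ∪ x₂ ∪ x₃) ∩ (arc A p q).sym2 = x₁ := by
  refine sym2_finset_ext fun a b => ?_
  rw [mk_mem_inter_sym2]
  refine ⟨fun ⟨hab, ha, hb⟩ => (mem_union_iff_of_mem_arc h h₁ h₂ h₃ ha hb).1 hab, fun hab => ?_⟩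
  obtain ⟨ha, hb⟩ := mem_of_chord h₁ hab
  exact ⟨(mem_union_iff_of_mem_arc h h₁ h₂ h₃ ha hb).2 hab, ha, hb⟩

lemma sum_withTriangle (hp : p ∈ A) (hq : q ∈ A) (hr : r ∈ A) (h : sbtw p q r)
    {M : Type*} [AddCommMonoid M] (g : Finset (Sym2 V) → M) :
    ∑ x ∈ withTriangle A p q r, g x =
      ∑ x₁ ∈ triangulations (arc A p q), ∑ x₂ ∈ triangulations (arc A q r),
        ∑ x₃ ∈ triangulations (arc A r p), g (x₁ ∪ x₂ ∪ x₃) := by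
  simp_rw [← sum_product']
  symm
  refine sum_nbij' (fun z => z.1 ∪ z.2.1 ∪ z.2.2)
    (fun x => (x ∩ (arc A p q).sym2, x ∩ (arc A q r).sym2, x ∩ (arc A r p).sym2))
    ?_ ?_ ?_ (fun x hx => union_inter_sym2_arc h hx) fun _ _ => rfl
  · rintro ⟨x₁, x₂, x₃⟩ hz
    simp only [mem_product] at hz
    exact union_mem_withTriangle hp hq hr h hz.1 hz.2.1 hz.2.2
  · intro x hx
    obtain ⟨hx, hpq, hqr, hrp⟩ := mem_withTriangle.1 hx
    exact mem_product.2 ⟨inter_sym2_arc_mem_triangulations hx hpq, mem_product.2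
      ⟨inter_sym2_arc_mem_triangulations hx hqr, inter_sym2_arc_mem_triangulations hx hrp⟩⟩
  · rintro ⟨x₁, x₂, x₃⟩ hz
    simp only [mem_product] at hz
    obtain ⟨h₁, h₂, h₃⟩ := hz
    simp only [Prod.mk.injEq]
    refine ⟨union_inter_sym2_arc_eq_left h h₁ h₂ h₃, ?_, ?_⟩
    · rw [union_assoc, union_comm x₁]
      exact union_inter_sym2_arc_eq_left h.cyclic_left h₂ h₃ h₁
    · rw [union_comm, ← union_assoc]
      exact union_inter_sym2_arc_eq_left h.cyclic_right h₃ h₁ h₂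

/-- Two triangulations of the same polygon differ by a flip. -/
def FlipAdj (x y : Finset (Sym2 V)) : Prop := #(x \ y) = 1 ∧ #(y \ x) = 1

lemma flipAdj_comm : FlipAdj x y ↔ FlipAdj y x := and_comm

lemma union_sdiff_union (h : sbtw p q r) (hy : y₁ ∈ triangulations (arc A p q))
    (h₁ : x₁ ∈ triangulations (arc A p q)) (h₂ : x₂ ∈ triangulations (arc A q r))
    (h₃ : x₃ ∈ triangulations (arc A r p)) :
    (x₁ ∪ x₂ ∪ x₃) \ (y₁ ∪ x₂ ∪ x₃) = x₁ \ y₁ := by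
  refine sym2_finset_ext fun a b => ?_
  simp only [mem_sdiff]
  constructor
  · simp only [mem_union]
    tauto
  · rintro ⟨hx, hy'⟩
    obtain ⟨ha, hb⟩ := mem_of_chord h₁ hx
    rw [mem_union_iff_of_mem_arc h h₁ h₂ h₃ ha hb, mem_union_iff_of_mem_arc h hy h₂ h₃ ha hb]
    exact ⟨hx, hy'⟩

lemma flipAdj_union_iff (h : sbtw p q r) (hy : y₁ ∈ triangulations (arc A p q))
    (h₁ : x₁ ∈ triangulations (arc A p q)) (h₂ : x₂ ∈ triangulations (arc A q r))
    (h₃ : x₃ ∈ triangulations (arc A r p)) :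
    FlipAdj (x₁ ∪ x₂ ∪ x₃) (y₁ ∪ x₂ ∪ x₃) ↔ FlipAdj x₁ y₁ := by
  rw [FlipAdj, FlipAdj, union_sdiff_union h hy h₁ h₂ h₃, union_sdiff_union h h₁ hy h₂ h₃]

end Triangulations

/-! ### The triangle at a side of the polygon -/

section Apex

variable {V : Type*} [LinearOrder V] {A : Finset V} {x y : Finset (Sym2 V)}
  {a b c d p q r s u v w w' : V}

lemma sbtw_of_sbtw_of_sbtw (h : sbtw a b c) (h' : sbtw a c d) : sbtw a b d ∧ sbtw b c d := by
  simp only [sbtw_iff_lt] at *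
  grind

lemma card_arc_lt (hc : c ∈ A) (h : sbtw u w c) : #(arc A u w) < #(arc A u c) := by
  refine card_lt_card ((ssubset_iff_of_subset fun a ha => ?_).2
    ⟨c, mem_arc.2 ⟨hc, btw_refl_right u c⟩, fun hc' => (mem_arc.1 hc').2.not_sbtw h.cyclic_left⟩)
  rw [mem_arc] at *
  refine ⟨ha.1, ?_⟩
  have ha' := ha.2
  rw [btw_iff_le, sbtw_iff_lt] at *
  grind

/-- The vertices of `A` strictly inside the arc from `u` to `v`. -/
def openArc (A : Finset V) (u v : V) : Finset V := {w ∈ A | sbtw u w v}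

lemma mem_openArc : w ∈ openArc A u v ↔ w ∈ A ∧ sbtw u w v := mem_filter

lemma openArc_arc (A : Finset V) (u v : V) : openArc (arc A u v) u v = openArc A u v := by
  ext w
  simp only [mem_openArc, mem_arc]
  exact ⟨fun h => ⟨h.1.1, h.2⟩, fun h => ⟨⟨h.1, h.2.btw⟩, h.2⟩⟩

lemma exists_side_mem (hx : x ∈ triangulations A) (hu : u ∈ A) (hi : (openArc A u v).Nonempty) :
    ∃ w ∈ openArc A u v, s(u, w) ∈ x := by
  obtain ⟨w, hw, hmin⟩ := exists_min_image _ (fun w => #(arc A u w)) hi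
  obtain ⟨hwA, hwv⟩ := mem_openArc.1 hw
  refine ⟨w, hw, side_mem hx hu hwA fun c hc hcw => ?_⟩
  exact (card_arc_lt hwA hcw).not_ge
    (hmin c (mem_openArc.2 ⟨hc, (sbtw_of_sbtw_of_sbtw hcw hwv).1⟩))

/-- The apex is the last neighbour of `u` before `v`. -/
lemma exists_apex (hx : x ∈ triangulations A) (h : s(u, v) ∈ x)
    (hi : (openArc A u v).Nonempty) :
    ∃ w ∈ openArc A u v, s(u, w) ∈ x ∧ s(w, v) ∈ x := by
  classical
  obtain ⟨hu, hv⟩ := mem_of_chord hx h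
  obtain ⟨w₀, hw₀, huw₀⟩ := exists_side_mem hx hu hi
  obtain ⟨w, hw, hmax⟩ := exists_max_image {w ∈ openArc A u v | s(u, w) ∈ x}
    (fun w => #(arc A u w)) ⟨w₀, mem_filter.2 ⟨hw₀, huw₀⟩⟩
  obtain ⟨hw, huw⟩ := mem_filter.1 hw
  obtain ⟨hwA, hwv⟩ := mem_openArc.1 hw
  refine ⟨w, hw, huw, chord_mem_of_forall_not_cross hx hwA hv fun c d hcd hcr => ?_⟩
  have hdc : s(d, c) ∈ x := Sym2.eq_swap ▸ hcd
  have hcross : d = u ∧ sbtw u w c ∧ sbtw u c v := by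
    have huv := not_cross_of_mem hx h hcd
    have huw := not_cross_of_mem hx huw hdc
    clear hmax
    simp only [Cross, sbtw_iff_lt] at *
    grind
  obtain ⟨rfl, hwc, hcv⟩ := hcross
  have hc := (mem_of_chord hx hcd).1
  exact (card_arc_lt hc hwc).not_ge
    (hmax c (mem_filter.2 ⟨mem_openArc.2 ⟨hc, hcv⟩, hdc⟩))

lemma apex_unique (hx : x ∈ triangulations A) (hw : sbtw u w v) (huw : s(u, w) ∈ x)
    (hwv : s(w, v) ∈ x) (hw' : sbtw u w' v) (huw' : s(u, w') ∈ x) (hwv' : s(w', v) ∈ x) :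
    w = w' := by
  have h := not_cross_of_mem hx huw hwv'
  have h' := not_cross_of_mem hx huw' hwv
  simp only [Cross, sbtw_iff_lt] at *
  grind

open Classical in
lemma sum_apex (hi : (openArc A u v).Nonempty) {S : Finset (Finset (Sym2 V))}
    (hS : S ⊆ triangulations A) (huv : ∀ x ∈ S, s(u, v) ∈ x) {M : Type*} [AddCommMonoid M]
    (g : Finset (Sym2 V) → M) :
    ∑ x ∈ S, g x = ∑ w ∈ openArc A u v, ∑ x ∈ S with s(u, w) ∈ x ∧ s(w, v) ∈ x, g x := by
  simp_rw [sum_filter]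
  rw [sum_comm]
  refine sum_congr rfl fun x hx => ?_
  obtain ⟨w, hw, huw, hwv⟩ := exists_apex (hS hx) (huv x hx) hi
  rw [sum_eq_single w (fun w' hw' hne => if_neg fun h => hne ?_) fun h => absurd hw h,
    if_pos ⟨huw, hwv⟩]
  exact apex_unique (hS hx) (mem_openArc.1 hw').2 h.1 h.2 (mem_openArc.1 hw).2 huw hwv

/-- The chord `uv` is a side of the polygon on `A`, and all of `A` lies on the arc from `u` to
`v`. -/
structure IsRootSide (A : Finset V) (u v : V) : Prop where
  left_mem : u ∈ A
  right_mem : v ∈ A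
  ne : u ≠ v
  btw : ∀ a ∈ A, btw u a v

namespace IsRootSide

lemma arc_eq (h : IsRootSide A u v) : arc A u v = A := filter_true_of_mem h.btw

lemma mk_mem (h : IsRootSide A u v) (hx : x ∈ triangulations A) : s(u, v) ∈ x :=
  root_mem h.left_mem h.right_mem (h.arc_eq.symm ▸ hx)

lemma arc_swap (h : IsRootSide A u v) : Associahedron.arc A v u = {u, v} := by
  ext a
  simp only [mem_arc, mem_insert, mem_singleton]
  constructor
  · rintro ⟨ha, hvau⟩
    have := h.btw a ha
    have := h.ne
    rw [btw_iff_le] at *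
    grind
  · rintro (rfl | rfl)
    exacts [⟨h.left_mem, btw_refl_right _ _⟩, ⟨h.right_mem, btw_refl_left _ _⟩]

end IsRootSide

lemma isRootSide_arc (hu : u ∈ A) (hv : v ∈ A) (h : u ≠ v) : IsRootSide (arc A u v) u v :=
  ⟨mem_arc.2 ⟨hu, btw_refl_left u v⟩, mem_arc.2 ⟨hv, btw_refl_right u v⟩, h,
    fun _ ha => (mem_arc.1 ha).2⟩

lemma sum_triangulations (hr : IsRootSide A u v) (hi : (openArc A u v).Nonempty)
    {M : Type*} [AddCommMonoid M] (g : Finset (Sym2 V) → M) :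
    ∑ x ∈ triangulations A, g x = ∑ w ∈ openArc A u v, ∑ x ∈ withTriangle A u w v, g x := by
  classical
  rw [sum_apex hi Subset.rfl fun x hx => hr.mk_mem hx]
  refine sum_congr rfl fun w _ => sum_congr ?_ fun _ _ => rfl
  ext x
  rw [mem_filter, mem_withTriangle]
  exact ⟨fun ⟨hx, huw, hwv⟩ => ⟨hx, huw, hwv, Sym2.eq_swap ▸ hr.mk_mem hx⟩,
    fun ⟨hx, huw, hwv, _⟩ => ⟨hx, huw, hwv⟩⟩

lemma arc_arc_left (h : sbtw u w v) : arc (arc A u v) u w = arc A u w := by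
  ext a
  simp only [mem_arc, btw_iff_le, sbtw_iff_lt] at *
  grind

lemma arc_arc_right (h : sbtw u w v) : arc (arc A u v) w v = arc A w v := by
  ext a
  simp only [mem_arc, btw_iff_le, sbtw_iff_lt] at *
  grind

lemma triangulations_pair (u v : V) : triangulations {u, v} = {({u, v} : Finset V).sym2} := by
  have not_cross : ∀ a ∈ ({u, v} : Finset V), ∀ b ∈ ({u, v} : Finset V),
      ∀ c ∈ ({u, v} : Finset V), ∀ d, ¬ Cross a b c d := by
    intro a ha b hb c hc d hcr
    have := sbtw_ne hcr.1
    grind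
  ext x
  rw [mem_singleton, mem_triangulations]
  constructor
  · rintro ⟨hsub, hmax⟩
    refine sym2_finset_ext fun a b => ?_
    rw [mk_mem_sym2_iff]
    exact ⟨hsub a b, fun ⟨ha, hb⟩ => (hmax a ha b hb).2 fun c d hcd =>
      not_cross a ha b hb c (hsub c d hcd).1 d⟩
  · rintro rfl
    exact ⟨fun a b => mk_mem_sym2_iff.1, fun a ha b hb =>
      ⟨fun _ c d hcd => not_cross a ha b hb c (mk_mem_sym2_iff.1 hcd).1 d,
        fun _ => mk_mem_sym2_iff.2 ⟨ha, hb⟩⟩⟩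

end Apex

/-! ### Flips in a quadrilateral -/

section Flip

variable {V : Type*} [LinearOrder V] {A : Finset V} {x y : Finset (Sym2 V)}
  {a b c d p q r s : V}

lemma sbtw_of_sbtw_diagonal (h : sbtw p q r) (h' : sbtw r s p) : sbtw q r s ∧ sbtw s p q := by
  simp only [sbtw_iff_lt] at *
  grind

open Classical in
/-- The triangulations of the polygon on `A` that contain the triangles `pqr` and `rsp`, that is,
the quadrilateral `pqrs` with its diagonal `pr`. -/
noncomputable def withQuad (A : Finset V) (p q r s : V) : Finset (Finset (Sym2 V)) :=
  {x ∈ withTriangle A p q r | s(r, s) ∈ x ∧ s(s, p) ∈ x}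

lemma mem_withQuad : x ∈ withQuad A p q r s ↔
    x ∈ triangulations A ∧ s(p, q) ∈ x ∧ s(q, r) ∈ x ∧ s(r, p) ∈ x ∧ s(r, s) ∈ x ∧
      s(s, p) ∈ x := by
  simp only [withQuad, mem_filter, mem_withTriangle, and_assoc]

lemma withQuad_swap (A : Finset V) (p q r s : V) : withQuad A p q r s = withQuad A r s p q := by
  ext x
  rw [mem_withQuad, mem_withQuad, Sym2.eq_swap (a := r) (b := p)]
  tauto

lemma sum_withQuad (hi : (openArc A r p).Nonempty) {M : Type*} [AddCommMonoid M]
    (g : Finset (Sym2 V) → M) :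
    ∑ x ∈ withTriangle A p q r, g x = ∑ s ∈ openArc A r p, ∑ x ∈ withQuad A p q r s, g x := by
  rw [sum_apex hi (fun x hx => (mem_withTriangle.1 hx).1) fun x hx => (mem_withTriangle.1 hx).2.2.2]
  rfl

/-- The flip in the quadrilateral `pqrs` that replaces the diagonal `pr` by `qs`. -/
def flipDiag (p q r s : V) (x : Finset (Sym2 V)) : Finset (Sym2 V) :=
  insert s(q, s) (x.erase s(p, r))

lemma mem_flipDiag {e : Sym2 V} :
    e ∈ flipDiag p q r s x ↔ e = s(q, s) ∨ e ≠ s(p, r) ∧ e ∈ x := by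
  simp only [flipDiag, mem_insert, mem_erase]

lemma eq_of_cross_of_not_cross_quad (h : sbtw p q r) (h' : sbtw r s p) (hc : Cross q s c d)
    (hqp : ¬ Cross q p c d) (hqr : ¬ Cross q r c d) (hrq : ¬ Cross r q c d)
    (hrs : ¬ Cross r s c d) (hsr : ¬ Cross s r c d) (hsp : ¬ Cross s p c d)
    (hps : ¬ Cross p s c d) : c = r ∧ d = p := by
  simp only [Cross, sbtw_iff_lt] at *
  grind (splits := 20)

lemma mk_eq_of_cross_diagonal (h : sbtw p q r) (h' : sbtw r s p)
    (hy : ∀ a b, s(a, b) ∈ y → ¬ Cross a b c d) (hpq : s(p, q) ∈ y) (hqr : s(q, r) ∈ y)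
    (hrs : s(r, s) ∈ y) (hsp : s(s, p) ∈ y) (hab : s(a, b) = s(q, s)) (hc : Cross a b c d) :
    s(c, d) = s(p, r) := by
  have hqp := hy _ _ (Sym2.eq_swap ▸ hpq)
  have hrq := hy _ _ (Sym2.eq_swap ▸ hqr)
  have hsr := hy _ _ (Sym2.eq_swap ▸ hrs)
  have hps := hy _ _ (Sym2.eq_swap ▸ hsp)
  have hpq := hy _ _ hpq
  have hqr := hy _ _ hqr
  have hrs := hy _ _ hrs
  have hsp := hy _ _ hsp
  rcases Sym2.eq_iff.1 hab with ⟨rfl, rfl⟩ | ⟨rfl, rfl⟩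
  · obtain ⟨rfl, rfl⟩ := eq_of_cross_of_not_cross_quad h h' hc hqp hqr hrq hrs hsr hsp hps
    exact Sym2.eq_swap
  · obtain ⟨rfl, rfl⟩ := eq_of_cross_of_not_cross_quad h' h hc hsr hsp hps hpq hqp hqr hrq
    rfl

lemma sides_mem_flipDiag (h : sbtw p q r) (h' : sbtw r s p) (hx : x ∈ withQuad A p q r s) :
    s(p, q) ∈ flipDiag p q r s x ∧ s(q, r) ∈ flipDiag p q r s x ∧
      s(r, s) ∈ flipDiag p q r s x ∧ s(s, p) ∈ flipDiag p q r s x := by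
  obtain ⟨-, hpq, hqr, -, hrs, hsp⟩ := mem_withQuad.1 hx
  have ne := sbtw_ne h
  have ne' := sbtw_ne h'
  refine ⟨mem_flipDiag.2 (.inr ⟨?_, hpq⟩), mem_flipDiag.2 (.inr ⟨?_, hqr⟩),
    mem_flipDiag.2 (.inr ⟨?_, hrs⟩), mem_flipDiag.2 (.inr ⟨?_, hsp⟩)⟩ <;>
  · rw [Ne, Sym2.eq_iff]
    grind

lemma not_cross_of_mem_flipDiag (h : sbtw p q r) (h' : sbtw r s p)
    (hx : x ∈ withQuad A p q r s) (hab : s(a, b) ∈ flipDiag p q r s x)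
    (hcd : s(c, d) ∈ flipDiag p q r s x) : ¬ Cross a b c d := by
  obtain ⟨hx, hpq, hqr, -, hrs, hsp⟩ := mem_withQuad.1 hx
  have not_cross_new {a b c d : V} (hab : s(a, b) = s(q, s)) (hne : s(c, d) ≠ s(p, r))
      (hcd : s(c, d) ∈ x) : ¬ Cross a b c d := fun hcr =>
    hne (mk_eq_of_cross_diagonal h h' (fun _ _ hab => not_cross_of_mem hx hab hcd)
      hpq hqr hrs hsp hab hcr)
  intro hcr
  rcases mem_flipDiag.1 hab with hab | ⟨hab, habx⟩ <;>
    rcases mem_flipDiag.1 hcd with hcd | ⟨hcd, hcdx⟩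
  · have ne := sbtw_ne hcr.1
    have ne' := sbtw_ne hcr.2
    rcases Sym2.eq_iff.1 (hab.trans hcd.symm) with ⟨rfl, rfl⟩ | ⟨rfl, rfl⟩
    exacts [ne.1 rfl, ne.2.1 rfl]
  · exact not_cross_new hab hcd hcdx hcr
  · exact not_cross_new hcd (Sym2.eq_swap ▸ hab) (Sym2.eq_swap ▸ habx) hcr.symm
  · exact not_cross_of_mem hx habx hcdx hcr

lemma mem_flipDiag_of_forall_not_cross (h : sbtw p q r) (h' : sbtw r s p)
    (hx : x ∈ withQuad A p q r s) (ha : a ∈ A) (hb : b ∈ A)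
    (hmax : ∀ c d, s(c, d) ∈ flipDiag p q r s x → ¬ Cross a b c d) :
    s(a, b) ∈ flipDiag p q r s x := by
  obtain ⟨hqr', hspq⟩ := sbtw_of_sbtw_diagonal h h'
  obtain ⟨hpq, hqr, hrs, hsp⟩ := sides_mem_flipDiag h h' hx
  have hqs : s(q, s) ∈ flipDiag p q r s x := mem_flipDiag.2 (.inl rfl)
  have hx := (mem_withQuad.1 hx).1
  by_cases hall : ∀ c d, s(c, d) ∈ x → ¬ Cross a b c d
  · refine mem_flipDiag.2 (.inr ⟨fun he => ?_, chord_mem_of_forall_not_cross hx ha hb hall⟩)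
    rcases Sym2.eq_iff.1 he with ⟨rfl, rfl⟩ | ⟨rfl, rfl⟩
    exacts [hmax _ _ hqs ⟨h, h'⟩, hmax _ _ (Sym2.eq_swap ▸ hqs) ⟨h', h⟩]
  · push Not at hall
    obtain ⟨c, d, hcd, hcr⟩ := hall
    have hcd' : s(c, d) = s(p, r) := by
      by_contra hne
      exact hmax c d (mem_flipDiag.2 (.inr ⟨hne, hcd⟩)) hcr
    have not_cross_new (e f : V) (hef : s(e, f) ∈ flipDiag p q r s x) : ¬ Cross e f b a :=
      fun hcr => hmax e f hef hcr.symm.symm.symm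
    have hba : s(b, a) = s(q, s) := mk_eq_of_cross_diagonal hqr' hspq not_cross_new hqr hrs hsp hpq
      (hcd'.trans Sym2.eq_swap) hcr.symm
    exact mem_flipDiag.2 (.inl (Sym2.eq_swap.trans hba))

lemma flipDiag_mem_withQuad (h : sbtw p q r) (h' : sbtw r s p) (hx : x ∈ withQuad A p q r s) :
    flipDiag p q r s x ∈ withQuad A q r s p := by
  obtain ⟨hpq, hqr, hrs, hsp⟩ := sides_mem_flipDiag h h' hx
  refine mem_withQuad.2 ⟨mem_triangulations.2 ⟨fun a b hab => ?_, fun a ha b hb =>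
    ⟨fun hab c d hcd => not_cross_of_mem_flipDiag h h' hx hab hcd,
      mem_flipDiag_of_forall_not_cross h h' hx ha hb⟩⟩,
    hqr, hrs, Sym2.eq_swap ▸ mem_flipDiag.2 (.inl rfl), hsp, hpq⟩
  obtain ⟨hx, hpq, -, -, hrs, -⟩ := mem_withQuad.1 hx
  rcases mem_flipDiag.1 hab with hab | hab
  · have hq := (mem_of_chord hx hpq).2
    have hs := (mem_of_chord hx hrs).2
    rcases Sym2.eq_iff.1 hab with ⟨rfl, rfl⟩ | ⟨rfl, rfl⟩
    exacts [⟨hq, hs⟩, ⟨hs, hq⟩]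
  · exact mem_of_chord hx hab.2

lemma diagonal_mem_and_notMem (h : sbtw p q r) (h' : sbtw r s p)
    (hx : x ∈ withQuad A p q r s) : s(p, r) ∈ x ∧ s(q, s) ∉ x := by
  obtain ⟨hx, -, -, hrp, -⟩ := mem_withQuad.1 hx
  have hpr : s(p, r) ∈ x := Sym2.eq_swap ▸ hrp
  exact ⟨hpr, fun hqs => not_cross_of_mem hx hpr hqs ⟨h, h'⟩⟩

lemma flipAdj_flipDiag (h : sbtw p q r) (h' : sbtw r s p) (hx : x ∈ withQuad A p q r s) :
    FlipAdj x (flipDiag p q r s x) := by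
  obtain ⟨hpr, hqs⟩ := diagonal_mem_and_notMem h h' hx
  have removed : x \ flipDiag p q r s x = {s(p, r)} := by
    ext e
    rw [mem_sdiff, mem_flipDiag, mem_singleton]
    grind
  have added : flipDiag p q r s x \ x = {s(q, s)} := by
    ext e
    rw [mem_sdiff, mem_flipDiag, mem_singleton]
    grind
  rw [FlipAdj, removed, added, card_singleton, card_singleton]
  exact ⟨rfl, rfl⟩

lemma flipDiag_flipDiag (h : sbtw p q r) (h' : sbtw r s p) (hx : x ∈ withQuad A p q r s) :
    flipDiag q r s p (flipDiag p q r s x) = x := by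
  obtain ⟨hpr, hqs⟩ := diagonal_mem_and_notMem h h' hx
  ext e
  rw [mem_flipDiag, mem_flipDiag, Sym2.eq_swap (a := r) (b := p)]
  grind

lemma sum_withQuad_flip (h : sbtw p q r) (h' : sbtw r s p) {M : Type*} [AddCommMonoid M]
    (g : Finset (Sym2 V) → M) :
    ∑ x ∈ withQuad A q r s p, g x = ∑ x ∈ withQuad A p q r s, g (flipDiag p q r s x) := by
  obtain ⟨hqrs, hspq⟩ := sbtw_of_sbtw_diagonal h h'
  have flip_swap : flipDiag r s p q = flipDiag p q r s := by
    funext y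
    rw [flipDiag, flipDiag, Sym2.eq_swap (a := s), Sym2.eq_swap (a := r)]
  refine (sum_nbij' (flipDiag p q r s) (flipDiag q r s p)
    (fun x hx => flipDiag_mem_withQuad h h' hx) (fun x hx => ?_)
    (fun x hx => flipDiag_flipDiag h h' hx) (fun x hx => ?_) fun _ _ => rfl).symm
  · rw [withQuad_swap]
    exact flipDiag_mem_withQuad hqrs hspq hx
  · rw [← flip_swap]
    exact flipDiag_flipDiag hqrs hspq hx

end Flip

/-! ### Counting triangulations -/

section Counting

variable {V : Type*} [LinearOrder V] {A : Finset V} {a b p q r s u v w : V}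

lemma two_le_card_arc (hu : u ∈ A) (hv : v ∈ A) (h : u ≠ v) : 2 ≤ #(arc A u v) := by
  rw [← card_pair h]
  refine card_le_card (insert_subset (mem_arc.2 ⟨hu, btw_refl_left u v⟩) ?_)
  exact singleton_subset_iff.2 (mem_arc.2 ⟨hv, btw_refl_right u v⟩)

/-- The number of sides of the polygon on `A` along the arc from the vertex `u` to the vertex
`v ≠ u`. -/
def arcLen (A : Finset V) (u v : V) : ℕ := #(arc A u v) - 1

lemma card_arc (hu : u ∈ A) (hv : v ∈ A) (h : u ≠ v) : #(arc A u v) = arcLen A u v + 1 := by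
  have := two_le_card_arc hu hv h
  rw [arcLen]
  omega

lemma arcLen_pos (hu : u ∈ A) (hv : v ∈ A) (h : u ≠ v) : 1 ≤ arcLen A u v := by
  have := two_le_card_arc hu hv h
  rw [arcLen]
  omega

lemma arcLen_add (hu : u ∈ A) (hw : w ∈ A) (hv : v ∈ A) (h : sbtw u w v) :
    arcLen A u w + arcLen A w v = arcLen A u v := by
  obtain ⟨huw, hwv, huv⟩ := sbtw_ne h
  have hunion : arc A u w ∪ arc A w v = arc A u v := by
    ext a
    simp only [mem_union, mem_arc, btw_iff_le, sbtw_iff_lt] at *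
    grind
  have hinter : arc A u w ∩ arc A w v = {w} := by
    ext a
    simp only [mem_inter, mem_arc, mem_singleton]
    constructor
    · exact fun ⟨h₁, h₂⟩ => eq_of_btw_of_btw h h₁.2 h₂.2
    · rintro rfl
      exact ⟨⟨hw, btw_refl_right u a⟩, hw, btw_refl_left a v⟩
  have := card_union_add_card_inter (arc A u w) (arc A w v)
  rw [hunion, hinter, card_singleton, card_arc hu hw huw, card_arc hw hv hwv,
    card_arc hu hv huv] at this
  omega

lemma arcLen_add_swap (hu : u ∈ A) (hv : v ∈ A) (h : u ≠ v) :
    arcLen A u v + arcLen A v u = #A := by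
  have hunion : arc A u v ∪ arc A v u = A := by
    ext a
    simp only [mem_union, mem_arc, ← and_or_left, and_iff_left (btw_total u a v)]
  have hinter : arc A u v ∩ arc A v u = {u, v} := by
    ext a
    simp only [mem_inter, mem_arc, mem_singleton, mem_insert, btw_iff_le]
    grind
  have := card_union_add_card_inter (arc A u v) (arc A v u)
  rw [hunion, hinter, card_pair h, card_arc hu hv h, card_arc hv hu h.symm] at this
  omega

lemma arcLen_left_injOn (hu : u ∈ A) : Set.InjOn (arcLen A u) {w | w ∈ A ∧ w ≠ u} := by
  rintro a ⟨ha, hau⟩ b ⟨hb, hbu⟩ hab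
  by_contra hne
  rcases sbtw_or_sbtw hau.symm hne hbu.symm with h | h
  · have := arcLen_add hu ha hb h
    have := arcLen_pos ha hb hne
    omega
  · have := arcLen_add hu hb ha h
    have := arcLen_pos hb ha (Ne.symm hne)
    omega

lemma arcLen_right_injOn (hu : u ∈ A) :
    Set.InjOn (fun w => arcLen A w u) {w | w ∈ A ∧ w ≠ u} := by
  rintro a ⟨ha, hau⟩ b ⟨hb, hbu⟩ hab
  refine arcLen_left_injOn hu ⟨ha, hau⟩ ⟨hb, hbu⟩ ?_
  have := arcLen_add_swap ha hu hau
  have := arcLen_add_swap hb hu hbu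
  dsimp only at hab
  omega

lemma arcLen_arc_left (h : sbtw u w v) : arcLen (arc A u v) u w = arcLen A u w := by
  rw [arcLen, arc_arc_left h, arcLen]

lemma arcLen_arc_right (h : sbtw u w v) : arcLen (arc A u v) w v = arcLen A w v := by
  rw [arcLen, arc_arc_right h, arcLen]

lemma card_openArc (hu : u ∈ A) (hv : v ∈ A) (h : u ≠ v) :
    #(openArc A u v) + 1 = arcLen A u v := by
  have harc : arc A u v = insert u (insert v (openArc A u v)) := by
    ext a
    simp only [mem_insert, mem_arc, mem_openArc, btw_iff_eq_or_sbtw h]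
    grind
  have hcard := congrArg card harc
  rw [card_arc hu hv h, card_insert_of_notMem, card_insert_of_notMem] at hcard
  · omega
  · exact fun hv => (sbtw_ne (mem_openArc.1 hv).2).2.1 rfl
  · rw [mem_insert, mem_openArc]
    rintro (huv | ⟨-, hu⟩)
    exacts [h huv, (sbtw_ne hu).1 rfl]

namespace IsRootSide

lemma two_le_card (hr : IsRootSide A u v) : 2 ≤ #A := by
  have := two_le_card_arc hr.left_mem hr.right_mem hr.ne
  rwa [hr.arc_eq] at this

lemma arcLen_swap (hr : IsRootSide A u v) : arcLen A v u = 1 := by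
  rw [arcLen, hr.arc_swap, card_pair hr.ne]

lemma arcLen_add_one (hr : IsRootSide A u v) : arcLen A u v + 1 = #A := by
  rw [← hr.arcLen_swap, arcLen_add_swap hr.left_mem hr.right_mem hr.ne]

lemma image_arcLen (hr : IsRootSide A u v) :
    (openArc A u v).image (fun w => arcLen A u w - 1) = range (#A - 2) := by
  have harcLen : ∀ w ∈ openArc A u v, arcLen A u w + arcLen A w v + 1 = #A ∧
      1 ≤ arcLen A u w ∧ 1 ≤ arcLen A w v := by
    intro w hw
    obtain ⟨hw, huwv⟩ := mem_openArc.1 hw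
    obtain ⟨huw, hwv, -⟩ := sbtw_ne huwv
    rw [arcLen_add hr.left_mem hw hr.right_mem huwv]
    exact ⟨hr.arcLen_add_one, arcLen_pos hr.left_mem hw huw, arcLen_pos hw hr.right_mem hwv⟩
  refine eq_of_subset_of_card_le (image_subset_iff.2 fun w hw => ?_) ?_
  · have := harcLen w hw
    rw [mem_range]
    omega
  · rw [card_image_of_injOn, card_range]
    · have := card_openArc hr.left_mem hr.right_mem hr.ne
      have := hr.arcLen_add_one
      omega
    · intro w hw w' hw' heq
      have h := harcLen w hw
      have h' := harcLen w' hw'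
      dsimp only at heq
      rw [mem_coe, mem_openArc] at hw hw'
      exact arcLen_left_injOn hr.left_mem ⟨hw.1, (sbtw_ne hw.2).1.symm⟩
        ⟨hw'.1, (sbtw_ne hw'.2).1.symm⟩ (by omega)

end IsRootSide

lemma card_withTriangle_eq_mul (hp : p ∈ A) (hq : q ∈ A) (hr : r ∈ A) (h : sbtw p q r) :
    #(withTriangle A p q r) =
      #(triangulations (arc A p q)) * #(triangulations (arc A q r)) *
        #(triangulations (arc A r p)) := by
  rw [card_eq_sum_ones, sum_withTriangle hp hq hr h]
  simp only [sum_const, smul_eq_mul, mul_one, mul_assoc]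

lemma IsRootSide.card_withTriangle (hr : IsRootSide A u v) (hw : w ∈ openArc A u v) :
    #(withTriangle A u w v) = #(triangulations (arc A u w)) * #(triangulations (arc A w v)) := by
  rw [mem_openArc] at hw
  rw [card_withTriangle_eq_mul hr.left_mem hw.1 hr.right_mem hw.2, hr.arc_swap, triangulations_pair,
    card_singleton, mul_one]

lemma IsRootSide.card_triangulations_eq_catalan (hr : IsRootSide A u v) :
    #(triangulations A) = catalan (#A - 2) := by
  induction hk : #A - 2 using Nat.strong_induction_on generalizing A u v with
  | _ k ih =>
  have hA := hr.arcLen_add_one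
  rcases k with _ | k
  · have hpair : {u, v} = A := eq_of_subset_of_card_le
      (insert_subset hr.left_mem (singleton_subset_iff.2 hr.right_mem))
      (by rw [card_pair hr.ne]; omega)
    rw [← hpair, triangulations_pair, card_singleton, catalan_zero]
  · have hi : (openArc A u v).Nonempty := by
      rw [← card_pos]
      have := card_openArc hr.left_mem hr.right_mem hr.ne
      omega
    have himg := hr.image_arcLen
    have hinj := card_image_iff.1 (himg ▸ card_range _ |>.trans (by
      have := card_openArc hr.left_mem hr.right_mem hr.ne
      omega))
    rw [card_eq_sum_ones, sum_triangulations hr hi, catalan_succ',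
      Nat.sum_antidiagonal_eq_sum_range_succ fun a b => catalan a * catalan b,
      Nat.succ_eq_add_one, ← hk, ← himg, sum_image hinj]
    refine sum_congr rfl fun w hw => ?_
    rw [← card_eq_sum_ones, hr.card_withTriangle hw]
    obtain ⟨hw, huwv⟩ := mem_openArc.1 hw
    obtain ⟨huw, hwv, -⟩ := sbtw_ne huwv
    have hadd := arcLen_add hr.left_mem hw hr.right_mem huwv
    have h₁ := card_arc hr.left_mem hw huw
    have h₂ := card_arc hw hr.right_mem hwv
    have := arcLen_pos hr.left_mem hw huw
    have := arcLen_pos hw hr.right_mem hwv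
    rw [ih (arcLen A u w - 1) (by omega) (isRootSide_arc hr.left_mem hw huw) (by omega),
      ih (arcLen A w v - 1) (by omega) (isRootSide_arc hw hr.right_mem hwv) (by omega)]
    congr 2
    omega

lemma exists_isRootSide (hA : 2 ≤ #A) : ∃ u v, IsRootSide A u v := by
  have hne : A.Nonempty := card_pos.1 (by omega)
  exact ⟨A.min' hne, A.max' hne, A.min'_mem hne, A.max'_mem hne,
    (A.min'_lt_max'_of_card hA).ne, fun a ha => .inl ⟨A.min'_le a ha, A.le_max' a ha⟩⟩

/-- The number of triangulations of a polygon with `k + 1` sides, for `k ≥ 1`. It is indexed by the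
number `k` of sides of the remaining arc if one side is removed. -/
noncomputable def triCount (k : ℕ) : ℝ := catalan (k - 1)

lemma triCount_one : triCount 1 = 1 := by
  rw [triCount, catalan_zero, Nat.cast_one]

lemma card_triangulations (hA : 2 ≤ #A) : (#(triangulations A) : ℝ) = triCount (#A - 1) := by
  obtain ⟨u, v, h⟩ := exists_isRootSide hA
  rw [triCount, h.card_triangulations_eq_catalan, Nat.sub_sub]

lemma card_triangulations_arc (hu : u ∈ A) (hv : v ∈ A) (h : u ≠ v) :
    (#(triangulations (arc A u v)) : ℝ) = triCount (arcLen A u v) :=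
  card_triangulations (two_le_card_arc hu hv h)

lemma card_withTriangle (hp : p ∈ A) (hq : q ∈ A) (hr : r ∈ A) (h : sbtw p q r) :
    (#(withTriangle A p q r) : ℝ) =
      triCount (arcLen A p q) * triCount (arcLen A q r) * triCount (arcLen A r p) := by
  obtain ⟨hpq, hqr, hpr⟩ := sbtw_ne h
  rw [card_withTriangle_eq_mul hp hq hr h, Nat.cast_mul, Nat.cast_mul,
    card_triangulations_arc hp hq hpq, card_triangulations_arc hq hr hqr,
    card_triangulations_arc hr hp hpr.symm]

lemma IsRootSide.card_withTriangle_eq_triCount (hr : IsRootSide A u v) (hw : w ∈ openArc A u v) :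
    (#(withTriangle A u w v) : ℝ) = triCount (arcLen A u w) * triCount (arcLen A w v) := by
  rw [mem_openArc] at hw
  rw [Associahedron.card_withTriangle hr.left_mem hw.1 hr.right_mem hw.2, hr.arcLen_swap,
    triCount_one, mul_one]

lemma sum_withQuad_eq_sum_pieces (hp : p ∈ A) (hq : q ∈ A) (hr : r ∈ A) (hs : s ∈ A)
    (h : sbtw p q r) (h' : sbtw r s p) {M : Type*} [AddCommMonoid M]
    (g : Finset (Sym2 V) → M) :
    ∑ x ∈ withQuad A p q r s, g x =
      ∑ x₁ ∈ triangulations (arc A p q), ∑ x₂ ∈ triangulations (arc A q r),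
        ∑ x₃ ∈ withTriangle (arc A r p) r s p, g (x₁ ∪ x₂ ∪ x₃) := by
  classical
  rw [withQuad, sum_filter, sum_withTriangle hp hq hr h]
  refine sum_congr rfl fun x₁ h₁ => sum_congr rfl fun x₂ h₂ => ?_
  rw [withTriangle, sum_filter]
  refine sum_congr rfl fun x₃ h₃ => if_congr ?_ rfl rfl
  have hr' : r ∈ arc A r p := mem_arc.2 ⟨hr, btw_refl_left r p⟩
  have hp' : p ∈ arc A r p := mem_arc.2 ⟨hp, btw_refl_right r p⟩
  have hs' : s ∈ arc A r p := mem_arc.2 ⟨hs, h'.btw⟩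
  have hpr : s(p, r) ∈ x₃ := Sym2.eq_swap ▸ root_mem hr hp h₃
  rw [union_comm, ← union_assoc, mem_union_iff_of_mem_arc h.cyclic_right h₃ h₁ h₂ hr' hs',
    mem_union_iff_of_mem_arc h.cyclic_right h₃ h₁ h₂ hs' hp', and_iff_left hpr]

lemma card_withQuad (hp : p ∈ A) (hq : q ∈ A) (hr : r ∈ A) (hs : s ∈ A) (h : sbtw p q r)
    (h' : sbtw r s p) :
    (#(withQuad A p q r s) : ℝ) = triCount (arcLen A p q) * triCount (arcLen A q r) *
      (triCount (arcLen A r s) * triCount (arcLen A s p)) := by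
  obtain ⟨hpq, hqr, hpr⟩ := sbtw_ne h
  have hcard : #(withQuad A p q r s) = #(triangulations (arc A p q)) *
      (#(triangulations (arc A q r)) * #(withTriangle (arc A r p) r s p)) := by
    rw [card_eq_sum_ones, sum_withQuad_eq_sum_pieces hp hq hr hs h h']
    simp only [sum_const, smul_eq_mul, mul_one]
  have hs' : s ∈ openArc (arc A r p) r p := by
    rw [openArc_arc]
    exact mem_openArc.2 ⟨hs, h'⟩
  rw [hcard, Nat.cast_mul, Nat.cast_mul,
    (isRootSide_arc hr hp hpr.symm).card_withTriangle_eq_triCount hs',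
    card_triangulations_arc hp hq hpq, card_triangulations_arc hq hr hqr, arcLen_arc_left h',
    arcLen_arc_right h', mul_assoc]

end Counting

section CatalanEstimates

lemma triCount_pos (k : ℕ) : 0 < triCount k := by
  have hpos : 0 < catalan (k - 1) :=
    Nat.pos_of_mul_pos_left (succ_mul_catalan_eq_centralBinom (k - 1) ▸ Nat.centralBinom_pos _)
  exact Nat.cast_pos.2 hpos

lemma triCount_succ_mul {k : ℕ} (hk : 1 ≤ k) :
    triCount (k + 1) * (k + 1) = 2 * (2 * k - 1) * triCount k := by
  obtain ⟨n, rfl⟩ : ∃ n, k = n + 1 := ⟨k - 1, by omega⟩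
  have hrec : ((n : ℝ) + 1) * ((n + 1 + 1) * catalan (n + 1)) =
      2 * (2 * n + 1) * ((n + 1) * catalan n) := by
    have h := Nat.succ_mul_centralBinom_succ n
    rw [← succ_mul_catalan_eq_centralBinom n, ← succ_mul_catalan_eq_centralBinom (n + 1)] at h
    exact_mod_cast h
  simp only [triCount, Nat.add_sub_cancel]
  push_cast
  apply mul_left_cancel₀ (by positivity : (n : ℝ) + 1 ≠ 0)
  linarith

lemma triCount_succ_mul_le {k l : ℕ} (hk : 1 ≤ k) (hkl : k ≤ l) :
    triCount (k + 1) * triCount l ≤ triCount k * triCount (l + 1) := by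
  have hkl' : (k : ℝ) ≤ l := by exact_mod_cast hkl
  have hratio : (2 * (k : ℝ) - 1) * (l + 1) ≤ (2 * l - 1) * (k + 1) := by nlinarith
  have hmul := mul_le_mul_of_nonneg_right hratio (mul_pos (triCount_pos k) (triCount_pos l)).le
  rw [eq_div_of_mul_eq (by positivity) (triCount_succ_mul hk),
    eq_div_of_mul_eq (by positivity) (triCount_succ_mul (hk.trans hkl)),
    div_mul_eq_mul_div, mul_div_assoc', div_le_div_iff₀ (by positivity) (by positivity)]
  linarith

lemma triCount_mul_le {d : ℕ} (hd : 1 ≤ d) (a b : ℕ) :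
    triCount (b + d) * triCount (a + d) ≤ triCount d * triCount (a + b + d) := by
  induction a with
  | zero => simp [mul_comm]
  | succ a ih =>
    have hstep : triCount (a + d + 1) * triCount (a + b + d) ≤
        triCount (a + d) * triCount (a + b + d + 1) :=
      triCount_succ_mul_le (by omega) (by omega)
    rw [show a + 1 + d = a + d + 1 by omega, show a + 1 + b + d = a + b + d + 1 by omega]
    have hbd := triCount_pos (b + d)
    have hsucc := triCount_pos (a + b + d + 1)
    refine le_of_mul_le_mul_right ?_ (triCount_pos (a + b + d))
    calc triCount (b + d) * triCount (a + d + 1) * triCount (a + b + d)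
        = triCount (b + d) * (triCount (a + d + 1) * triCount (a + b + d)) := by ring
      _ ≤ triCount (b + d) * (triCount (a + d) * triCount (a + b + d + 1)) := by gcongr
      _ = triCount (b + d) * triCount (a + d) * triCount (a + b + d + 1) := by ring
      _ ≤ triCount d * triCount (a + b + d) * triCount (a + b + d + 1) := by gcongr
      _ = _ := by ring

lemma triCount_sq_mul_le {k : ℕ} (hk : 1 ≤ k) : triCount k ^ 2 * k ^ 3 ≤ 16 ^ k / 16 := by
  induction k, hk using Nat.le_induction with
  | base => simp [triCount]
  | succ k hk ih =>
    have hk' : (1 : ℝ) ≤ k := by exact_mod_cast hk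
    have hrec : triCount (k + 1) ^ 2 * ((k : ℝ) + 1) ^ 3 =
        4 * (2 * k - 1) ^ 2 * triCount k ^ 2 * (k + 1) := by
      calc _ = (triCount (k + 1) * (k + 1)) ^ 2 * (k + 1) := by ring
        _ = _ := by rw [triCount_succ_mul hk]; ring
    have hpoly : 4 * (2 * (k : ℝ) - 1) ^ 2 * (k + 1) ≤ 16 * k ^ 3 := by
      nlinarith [sq_nonneg ((k : ℝ) - 1)]
    have hmul := mul_le_mul_of_nonneg_right hpoly (sq_nonneg (triCount k))
    push_cast
    rw [hrec, pow_succ (16 : ℝ)]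
    linarith

-- The factor `k - 1` in place of `k` makes the bound inductive.
lemma le_triCount_sq_mul_pred {k : ℕ} (hk : 2 ≤ k) :
    16 ^ k / 64 ≤ triCount k ^ 2 * (k ^ 2 * (k - 1)) := by
  induction k, hk using Nat.le_induction with
  | base => norm_num [triCount]
  | succ k hk ih =>
    have hk' : (2 : ℝ) ≤ k := by exact_mod_cast hk
    have hrec : triCount (k + 1) ^ 2 * (((k : ℝ) + 1) ^ 2 * (k + 1 - 1)) =
        4 * (2 * k - 1) ^ 2 * triCount k ^ 2 * k := by
      calc _ = (triCount (k + 1) * (k + 1)) ^ 2 * k := by ring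
        _ = _ := by rw [triCount_succ_mul (by omega)]; ring
    have hpoly : 16 * ((k : ℝ) ^ 2 * (k - 1)) ≤ 4 * (2 * k - 1) ^ 2 * k := by nlinarith
    have hmul := mul_le_mul_of_nonneg_right hpoly (sq_nonneg (triCount k))
    push_cast
    rw [hrec, pow_succ (16 : ℝ)]
    linarith

lemma le_triCount_sq_mul {k : ℕ} (hk : 1 ≤ k) : 16 ^ k / 64 ≤ triCount k ^ 2 * k ^ 3 := by
  obtain rfl | h := hk.eq_or_lt
  · norm_num [triCount]
  · calc (16 : ℝ) ^ k / 64 ≤ triCount k ^ 2 * (k ^ 2 * (k - 1)) := le_triCount_sq_mul_pred h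
      _ ≤ triCount k ^ 2 * k ^ 3 := by
        gcongr
        nlinarith [sq_nonneg (k : ℝ)]

/-- The power `k ^ (3 / 2)`, the polynomial correction in `triCount k ≍ 4 ^ k / k ^ (3 / 2)`. -/
noncomputable def pow32 (k : ℕ) : ℝ := k * √k

lemma pow32_sq (k : ℕ) : pow32 k ^ 2 = (k : ℝ) ^ 3 := by
  rw [pow32, mul_pow, Real.sq_sqrt (Nat.cast_nonneg k)]
  ring

lemma pow32_nonneg (k : ℕ) : 0 ≤ pow32 k := mul_nonneg (Nat.cast_nonneg k) (Real.sqrt_nonneg _)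

lemma pow32_pos {k : ℕ} (hk : 1 ≤ k) : 0 < pow32 k := by
  have : (0 : ℝ) < k := by exact_mod_cast hk
  unfold pow32
  positivity

lemma pow32_mono : Monotone pow32 := by
  intro k l h
  unfold pow32
  gcongr

lemma triCount_mul_pow32_le {k : ℕ} (hk : 1 ≤ k) : triCount k * pow32 k ≤ 4 ^ k / 4 := by
  refine (sq_le_sq₀ (mul_pos (triCount_pos k) (pow32_pos hk)).le (by positivity)).1 ?_
  have h := triCount_sq_mul_le hk
  rw [mul_pow, pow32_sq, div_pow, ← pow_mul, mul_comm k 2, pow_mul]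
  norm_num
  exact h

lemma le_triCount_mul_pow32 {k : ℕ} (hk : 1 ≤ k) : 4 ^ k / 8 ≤ triCount k * pow32 k := by
  refine (sq_le_sq₀ (by positivity) (mul_pos (triCount_pos k) (pow32_pos hk)).le).1 ?_
  have h := le_triCount_sq_mul hk
  rw [mul_pow, pow32_sq, div_pow, ← pow_mul, mul_comm k 2, pow_mul]
  norm_num
  exact h

lemma triCount_add_le {a b m : ℕ} (ha : 1 ≤ a) (hb : 1 ≤ b) (hm : a + b ≤ m) :
    triCount (a + b) ≤ 16 * pow32 m * (triCount a * triCount b) := by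
  have hpa := pow32_pos ha
  have hpb := pow32_pos hb
  have hta := triCount_pos a
  have htb := triCount_pos b
  have hpow : pow32 a * pow32 b ≤ pow32 m * pow32 (a + b) :=
    mul_le_mul (pow32_mono (by omega)) (pow32_mono (by omega)) hpb.le (pow32_pos (by omega)).le
  have hprod : (4 : ℝ) ^ (a + b) / 64 ≤ triCount a * triCount b * (pow32 a * pow32 b) := by
    calc (4 : ℝ) ^ (a + b) / 64 = (4 ^ a / 8) * (4 ^ b / 8) := by rw [pow_add]; ring
      _ ≤ (triCount a * pow32 a) * (triCount b * pow32 b) :=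
        mul_le_mul (le_triCount_mul_pow32 ha) (le_triCount_mul_pow32 hb) (by positivity)
          (by positivity)
      _ = _ := by ring
  refine le_of_mul_le_mul_right ?_ (pow32_pos (k := a + b) (by omega))
  calc triCount (a + b) * pow32 (a + b) ≤ 16 * (4 ^ (a + b) / 64) := by
        linarith [triCount_mul_pow32_le (k := a + b) (by omega)]
    _ ≤ 16 * (triCount a * triCount b * (pow32 a * pow32 b)) := by gcongr
    _ ≤ 16 * (triCount a * triCount b * (pow32 m * pow32 (a + b))) := by gcongr
    _ = _ := by ring

lemma triCount_mul_mul_pow32_le {a b c d : ℕ} (ha : 1 ≤ a) (hb : 1 ≤ b) (hc : 1 ≤ c)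
    (hd : 1 ≤ d) (h : a + b = c + d) :
    triCount a * triCount b * (pow32 a * pow32 b) ≤
      4 * (triCount c * triCount d) * (pow32 c * pow32 d) := by
  have htb := triCount_pos b
  have hpb := pow32_pos hb
  have htc := triCount_pos c
  have hpc := pow32_pos hc
  calc triCount a * triCount b * (pow32 a * pow32 b)
      = (triCount a * pow32 a) * (triCount b * pow32 b) := by ring
    _ ≤ (4 ^ a / 4) * (4 ^ b / 4) :=
      mul_le_mul (triCount_mul_pow32_le ha) (triCount_mul_pow32_le hb) (by positivity)
        (by positivity)
    _ = 4 * ((4 ^ c / 8) * (4 ^ d / 8)) := by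
      rw [show (4 : ℝ) ^ a / 4 * (4 ^ b / 4) = 4 ^ (a + b) / 16 by rw [pow_add]; ring, h,
        pow_add]
      ring
    _ ≤ 4 * ((triCount c * pow32 c) * (triCount d * pow32 d)) := by
      gcongr
      · exact le_triCount_mul_pow32 hc
      · exact le_triCount_mul_pow32 hd
    _ = _ := by ring

end CatalanEstimates

/-! ### Energy on the flip graph -/

section Energy

variable {V : Type*} [LinearOrder V] {A : Finset V} {S T : Finset (Finset (Sym2 V))}
  {p q r u v w w' : V}

open Classical in
/-- The variation of `f` along the edge `{x, y}` of the flip graph, and `0` if there is no such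
edge. -/
noncomputable def edgeVar (f : Finset (Sym2 V) → ℝ) (x y : Finset (Sym2 V)) : ℝ :=
  if FlipAdj x y then |f x - f y| else 0

/-- The `ℓ¹` Dirichlet energy of `f` on the subgraph of the flip graph induced by `S`. Every edge
is counted twice, once for each orientation. -/
noncomputable def energy (S : Finset (Finset (Sym2 V))) (f : Finset (Sym2 V) → ℝ) : ℝ :=
  ∑ x ∈ S, ∑ y ∈ S, edgeVar f x y

/-- The part of the energy of `f` on the triangulations with triangle `pqr` that comes from flips
inside the third piece, the one cut off by `rp`. -/
noncomputable def pieceEnergy (A : Finset V) (p q r : V) (f : Finset (Sym2 V) → ℝ) : ℝ :=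
  ∑ x₁ ∈ triangulations (arc A p q), ∑ x₂ ∈ triangulations (arc A q r),
    energy (triangulations (arc A r p)) fun x₃ => f (x₁ ∪ x₂ ∪ x₃)

variable (f : Finset (Sym2 V) → ℝ)

lemma edgeVar_nonneg (x y : Finset (Sym2 V)) : 0 ≤ edgeVar f x y := by
  unfold edgeVar
  split_ifs <;> positivity

lemma edgeVar_comm (x y : Finset (Sym2 V)) : edgeVar f x y = edgeVar f y x := by
  unfold edgeVar
  rw [flipAdj_comm, abs_sub_comm]

lemma edgeVar_self (x : Finset (Sym2 V)) : edgeVar f x x = 0 := by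
  simp only [edgeVar, sub_self, abs_zero, ite_self]

lemma edgeVar_of_flipAdj {x y : Finset (Sym2 V)} (h : FlipAdj x y) :
    edgeVar f x y = |f x - f y| := if_pos h

lemma energy_nonneg : 0 ≤ energy S f :=
  sum_nonneg fun _ _ => sum_nonneg fun _ _ => edgeVar_nonneg _ _ _

lemma pieceEnergy_nonneg : 0 ≤ pieceEnergy A p q r f :=
  sum_nonneg fun _ _ => sum_nonneg fun _ _ => energy_nonneg _

lemma pieceEnergy_eq_sum (h : sbtw p q r) :
    pieceEnergy A p q r f = ∑ x₁ ∈ triangulations (arc A p q), ∑ x₂ ∈ triangulations (arc A q r),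
      ∑ x₃ ∈ triangulations (arc A r p), ∑ y₃ ∈ triangulations (arc A r p),
        edgeVar f (x₁ ∪ x₂ ∪ x₃) (x₁ ∪ x₂ ∪ y₃) := by
  classical
  refine sum_congr rfl fun x₁ h₁ => sum_congr rfl fun x₂ h₂ => sum_congr rfl fun x₃ h₃ =>
    sum_congr rfl fun y₃ hy => if_congr ?_ rfl rfl
  have hrot (z : Finset (Sym2 V)) : x₁ ∪ x₂ ∪ z = z ∪ x₁ ∪ x₂ := by
    rw [union_comm, ← union_assoc]
  rw [hrot, hrot]
  exact (flipAdj_union_iff h.cyclic_right hy h₃ h₁ h₂).symm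

lemma sum_add_le_sum_add_of_le {α : Type*} {s : Finset α} {φ ψ : α → ℝ}
    (h : ∀ y ∈ s, φ y ≤ ψ y) {x : α} (hx : x ∈ s) :
    ∑ y ∈ s, φ y + ψ x ≤ ∑ y ∈ s, ψ y + φ x := by
  have hsingle := single_le_sum (f := fun y => ψ y - φ y) (fun y hy => sub_nonneg.2 (h y hy)) hx
  rw [sum_sub_distrib] at hsingle
  linarith

lemma sum_add_sum_add_sum_le {α : Type*} {s₁ s₂ s₃ : Finset α} {g : α → α → α → ℝ}
    (hg : ∀ a b c, 0 ≤ g a b c) {x₁ x₂ x₃ : α} (h₁ : x₁ ∈ s₁) (h₂ : x₂ ∈ s₂) (h₃ : x₃ ∈ s₃)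
    (h₀ : g x₁ x₂ x₃ = 0) :
    ∑ y₁ ∈ s₁, g y₁ x₂ x₃ + ∑ y₂ ∈ s₂, g x₁ y₂ x₃ + ∑ y₃ ∈ s₃, g x₁ x₂ y₃ ≤
      ∑ y₁ ∈ s₁, ∑ y₂ ∈ s₂, ∑ y₃ ∈ s₃, g y₁ y₂ y₃ := by
  have hle₃ (y₁ y₂ : α) : g y₁ y₂ x₃ ≤ ∑ y₃ ∈ s₃, g y₁ y₂ y₃ :=
    single_le_sum (f := g y₁ y₂) (fun _ _ => hg _ _ _) h₃
  have hle₂ (y₁ : α) : ∑ y₃ ∈ s₃, g y₁ x₂ y₃ ≤ ∑ y₂ ∈ s₂, ∑ y₃ ∈ s₃, g y₁ y₂ y₃ :=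
    single_le_sum (f := fun y₂ => ∑ y₃ ∈ s₃, g y₁ y₂ y₃)
      (fun _ _ => sum_nonneg fun _ _ => hg _ _ _) h₂
  have hfirst := sum_add_le_sum_add_of_le (fun y₁ _ => (hle₃ y₁ x₂).trans (hle₂ y₁)) h₁
  have hsecond := sum_add_le_sum_add_of_le (fun y₂ _ => hle₃ x₁ y₂) h₂
  linarith

theorem pieceEnergy_add_add_le_energy (hp : p ∈ A) (hq : q ∈ A) (hr : r ∈ A) (h : sbtw p q r) :
    pieceEnergy A p q r f + pieceEnergy A q r p f + pieceEnergy A r p q f ≤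
      energy (withTriangle A p q r) f := by
  have henergy : energy (withTriangle A p q r) f =
      ∑ x₁ ∈ triangulations (arc A p q), ∑ x₂ ∈ triangulations (arc A q r),
        ∑ x₃ ∈ triangulations (arc A r p), ∑ y₁ ∈ triangulations (arc A p q),
          ∑ y₂ ∈ triangulations (arc A q r), ∑ y₃ ∈ triangulations (arc A r p),
            edgeVar f (x₁ ∪ x₂ ∪ x₃) (y₁ ∪ y₂ ∪ y₃) := by
    simp only [energy, sum_withTriangle hp hq hr h]
  have hrot (x₁ x₂ x₃ : Finset (Sym2 V)) : x₂ ∪ x₃ ∪ x₁ = x₁ ∪ x₂ ∪ x₃ := by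
    rw [union_comm, ← union_assoc]
  have hfirst : pieceEnergy A q r p f =
      ∑ x₁ ∈ triangulations (arc A p q), ∑ x₂ ∈ triangulations (arc A q r),
        ∑ x₃ ∈ triangulations (arc A r p), ∑ y₁ ∈ triangulations (arc A p q),
          edgeVar f (x₁ ∪ x₂ ∪ x₃) (y₁ ∪ x₂ ∪ x₃) := by
    rw [pieceEnergy_eq_sum f h.cyclic_left, sum_comm_cycle]
    simp only [hrot]
  have hsecond : pieceEnergy A r p q f =
      ∑ x₁ ∈ triangulations (arc A p q), ∑ x₂ ∈ triangulations (arc A q r),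
        ∑ x₃ ∈ triangulations (arc A r p), ∑ y₂ ∈ triangulations (arc A q r),
          edgeVar f (x₁ ∪ x₂ ∪ x₃) (x₁ ∪ y₂ ∪ x₃) := by
    rw [pieceEnergy_eq_sum f h.cyclic_right, ← sum_comm_cycle]
    simp only [← hrot]
  rw [henergy, hfirst, hsecond, pieceEnergy_eq_sum f h]
  simp only [← sum_add_distrib]
  refine sum_le_sum fun x₁ h₁ => sum_le_sum fun x₂ h₂ => sum_le_sum fun x₃ h₃ => ?_
  have hthree := sum_add_sum_add_sum_le
    (g := fun y₁ y₂ y₃ => edgeVar f (x₁ ∪ x₂ ∪ x₃) (y₁ ∪ y₂ ∪ y₃))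
    (fun _ _ _ => edgeVar_nonneg _ _ _) h₁ h₂ h₃ (edgeVar_self f _)
  linarith

end Energy

section Excess

/-- The amount by which the sum of `f` over `T` exceeds the share `#T / #S` of its sum over `S`. -/
noncomputable def excess {α : Type*} (S T : Finset α) (f : α → ℝ) : ℝ :=
  ∑ x ∈ T, f x - #T / #S * ∑ x ∈ S, f x

variable {α ι : Type*} {I : Finset ι} {S : Finset α} {T : ι → Finset α}
  {Q : ι → ι → Finset α} {f : α → ℝ}

lemma sum_card_of_sum_eq (hST : ∀ g : α → ℝ, ∑ x ∈ S, g x = ∑ i ∈ I, ∑ x ∈ T i, g x) :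
    ∑ i ∈ I, (#(T i) : ℝ) = #S := by
  simpa using (hST 1).symm

lemma sum_excess_eq_zero (hST : ∀ g : α → ℝ, ∑ x ∈ S, g x = ∑ i ∈ I, ∑ x ∈ T i, g x) :
    ∑ i ∈ I, excess S (T i) f = 0 := by
  simp only [excess]
  rw [sum_sub_distrib, ← sum_mul, ← sum_div, ← hST, sum_card_of_sum_eq hST]
  obtain rfl | hS := S.eq_empty_or_nonempty
  · simp
  · rw [div_self (by simpa using hS.ne_empty), one_mul, sub_self]

lemma sum_abs_eq_two_mul_sum {d : ι → ℝ} (hd : ∑ i ∈ I, d i = 0) :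
    ∑ i ∈ I, |d i| = 2 * ∑ i ∈ I, (if 0 ≤ d i then 1 else 0) * d i := by
  calc ∑ i ∈ I, |d i| = ∑ i ∈ I, (2 * ((if 0 ≤ d i then 1 else 0) * d i) - d i) := by
        refine sum_congr rfl fun i _ => ?_
        split_ifs with h
        · rw [abs_of_nonneg h]
          ring
        · rw [abs_of_neg (not_le.1 h)]
          ring
    _ = 2 * ∑ i ∈ I, (if 0 ≤ d i then 1 else 0) * d i := by
      rw [sum_sub_distrib, hd, sub_zero, mul_sum]

lemma sum_mul_le_half_sum_abs {d ψ : ι → ℝ} {c : ℝ} (hd : ∑ i ∈ I, d i = 0)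
    (hψ : ∀ i ∈ I, c ≤ ψ i ∧ ψ i ≤ c + 1) :
    ∑ i ∈ I, ψ i * d i ≤ 1 / 2 * ∑ i ∈ I, |d i| := by
  calc ∑ i ∈ I, ψ i * d i = ∑ i ∈ I, (ψ i - (c + 1 / 2)) * d i := by
        simp only [sub_mul, sum_sub_distrib, ← mul_sum, hd, mul_zero, sub_zero]
    _ ≤ ∑ i ∈ I, 1 / 2 * |d i| := by
      refine sum_le_sum fun i hi => (le_abs_self _).trans ?_
      rw [abs_mul]
      gcongr
      rw [abs_le]
      constructor <;> linarith [hψ i hi]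
    _ = 1 / 2 * ∑ i ∈ I, |d i| := (mul_sum _ _ _).symm

lemma card_div_mul_sum_eq {T T' Q : Finset α} (hT : T.Nonempty) (hQ : Q.Nonempty) :
    #T' / #S * ∑ x ∈ T, f x = #T * #T' / (#S * #Q) * (∑ x ∈ Q, f x - excess T Q f) := by
  have hT₀ : (#T : ℝ) ≠ 0 := by simpa using hT.ne_empty
  have hQ₀ : (#Q : ℝ) ≠ 0 := by simpa using hQ.ne_empty
  simp only [excess]
  field_simp
  ring

variable [DecidableEq ι]

lemma sum_sum_erase_comm (g : ι → ι → ℝ) :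
    ∑ i ∈ I, ∑ j ∈ I.erase i, g i j = ∑ i ∈ I, ∑ j ∈ I.erase i, g j i :=
  sum_comm' fun i j => by simp only [mem_erase]; tauto

lemma sum_mul_le_of_antisymm {a : ι → ι → ℝ} (G : ι → ι → ℝ)
    (ha : ∀ i ∈ I, ∀ j ∈ I, i ≠ j → a j i = -a i j)
    (ha₁ : ∀ i ∈ I, ∀ j ∈ I, i ≠ j → |a i j| ≤ 1) :
    ∑ i ∈ I, ∑ j ∈ I.erase i, a i j * G i j ≤
      1 / 2 * ∑ i ∈ I, ∑ j ∈ I.erase i, |G i j - G j i| := by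
  have hswap : ∑ i ∈ I, ∑ j ∈ I.erase i, a i j * G i j =
      ∑ i ∈ I, ∑ j ∈ I.erase i, -a i j * G j i := by
    rw [sum_sum_erase_comm]
    refine sum_congr rfl fun i hi => sum_congr rfl fun j hj => ?_
    rw [mem_erase] at hj
    rw [ha i hi j hj.2 hj.1.symm]
  have hsymm : ∑ i ∈ I, ∑ j ∈ I.erase i, a i j * G i j =
      1 / 2 * ∑ i ∈ I, ∑ j ∈ I.erase i, a i j * (G i j - G j i) := by
    have hadd : ∑ i ∈ I, ∑ j ∈ I.erase i, a i j * (G i j - G j i) =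
        ∑ i ∈ I, ∑ j ∈ I.erase i, a i j * G i j +
          ∑ i ∈ I, ∑ j ∈ I.erase i, -a i j * G j i := by
      simp only [← sum_add_distrib]
      exact sum_congr rfl fun i _ => sum_congr rfl fun j _ => by ring
    rw [hadd, ← hswap]
    ring
  rw [hsymm]
  gcongr with i hi j hj
  rw [mem_erase] at hj
  calc a i j * (G i j - G j i) ≤ |a i j| * |G i j - G j i| :=
        (le_abs_self _).trans (abs_mul _ _).le
    _ ≤ |G i j - G j i| := mul_le_of_le_one_left (abs_nonneg _) (ha₁ i hi j hj.2 hj.1.symm)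

lemma sum_mul_excess_eq (hST : ∀ g : α → ℝ, ∑ x ∈ S, g x = ∑ i ∈ I, ∑ x ∈ T i, g x)
    (hS : S.Nonempty) (φ : ι → ℝ) :
    ∑ i ∈ I, φ i * excess S (T i) f =
      ∑ i ∈ I, ∑ j ∈ I.erase i, (φ i - φ j) * (#(T j) / #S * ∑ x ∈ T i, f x) := by
  have hS₀ : (#S : ℝ) ≠ 0 := by simpa using hS.ne_empty
  have hone : ∑ j ∈ I, (#(T j) : ℝ) / #S = 1 := by
    rw [← sum_div, sum_card_of_sum_eq hST, div_self hS₀]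
  have hrow (i : ι) (_ : i ∈ I) :
      ∑ j ∈ I.erase i, (φ i - φ j) * (#(T j) / #S * ∑ x ∈ T i, f x) =
        φ i * ∑ x ∈ T i, f x - ∑ j ∈ I, φ j * (#(T j) / #S * ∑ x ∈ T i, f x) := by
    rw [sum_erase _ (by rw [sub_self, zero_mul])]
    simp only [sub_mul, sum_sub_distrib, ← mul_sum, ← sum_mul, hone, one_mul]
  rw [sum_congr rfl hrow, sum_sub_distrib, sum_comm]
  simp only [excess, mul_sub, sum_sub_distrib, hST f, mul_sum]

/-- For each pair of parts, compare a sample `Q i j` of `T i` with a sample `Q j i` of `T j` of the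
same size. -/
lemma sum_mul_excess_le (hST : ∀ g : α → ℝ, ∑ x ∈ S, g x = ∑ i ∈ I, ∑ x ∈ T i, g x)
    (hS : S.Nonempty) (hT : ∀ i ∈ I, (T i).Nonempty)
    (hQ : ∀ i ∈ I, ∀ j ∈ I, i ≠ j → (Q i j).Nonempty)
    (hcard : ∀ i ∈ I, ∀ j ∈ I, i ≠ j → #(Q i j) = #(Q j i))
    (hle : ∀ i ∈ I, ∀ j ∈ I, i ≠ j → #(T i) * #(T j) ≤ #S * #(Q i j))
    (hzero : ∀ i ∈ I, ∑ j ∈ I.erase i, excess (T i) (Q i j) f = 0)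
    {φ : ι → ℝ} (hφ : ∀ i, 0 ≤ φ i ∧ φ i ≤ 1) :
    ∑ i ∈ I, φ i * excess S (T i) f ≤ 1 / 2 * ∑ i ∈ I,
      (∑ j ∈ I.erase i, |excess (T i) (Q i j) f| +
      ∑ j ∈ I.erase i, |∑ x ∈ Q i j, f x - ∑ x ∈ Q j i, f x|) := by
  set ρ : ι → ι → ℝ := fun i j => #(T i) * #(T j) / (#S * #(Q i j))
  have hρ₀ (i j : ι) : 0 ≤ ρ i j := by positivity
  have hρ₁ (i : ι) (hi : i ∈ I) (j : ι) (hj : j ∈ I) (hij : i ≠ j) : ρ i j ≤ 1 :=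
    div_le_one_of_le₀ (by exact_mod_cast hle i hi j hj hij) (by positivity)
  have hρ_comm (i : ι) (hi : i ∈ I) (j : ι) (hj : j ∈ I) (hij : i ≠ j) : ρ j i = ρ i j := by
    simp only [ρ, hcard i hi j hj hij, mul_comm (#(T i) : ℝ)]
  have hsplit (i : ι) (hi : i ∈ I) (j : ι) (hj : j ∈ I.erase i) :
      (φ i - φ j) * (#(T j) / #S * ∑ x ∈ T i, f x) =
        (φ j - φ i) * ρ i j * excess (T i) (Q i j) f +
          (φ i - φ j) * ρ i j * ∑ x ∈ Q i j, f x := by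
    rw [mem_erase] at hj
    rw [card_div_mul_sum_eq (hT i hi) (hQ i hi j hj.2 hj.1.symm)]
    ring
  have hwindow (i : ι) (hi : i ∈ I) : ∑ j ∈ I.erase i, (φ j - φ i) * ρ i j *
      excess (T i) (Q i j) f ≤ 1 / 2 * ∑ j ∈ I.erase i, |excess (T i) (Q i j) f| := by
    refine sum_mul_le_half_sum_abs (c := -φ i) (hzero i hi) fun j hj => ?_
    rw [mem_erase] at hj
    have := hρ₀ i j
    have := hρ₁ i hi j hj.2 hj.1.symm
    have := hφ i
    have := hφ j
    constructor <;> nlinarith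
  have hantisymm : ∑ i ∈ I, ∑ j ∈ I.erase i, (φ i - φ j) * ρ i j * ∑ x ∈ Q i j, f x ≤
      1 / 2 * ∑ i ∈ I, ∑ j ∈ I.erase i, |∑ x ∈ Q i j, f x - ∑ x ∈ Q j i, f x| := by
    refine sum_mul_le_of_antisymm (fun i j => ∑ x ∈ Q i j, f x) (fun i hi j hj hij => ?_)
      fun i hi j hj hij => ?_
    · rw [hρ_comm i hi j hj hij]
      ring
    · rw [abs_mul, abs_of_nonneg (hρ₀ i j)]
      refine mul_le_one₀ (abs_le.2 ?_) (hρ₀ i j) (hρ₁ i hi j hj hij)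
      constructor <;> linarith [hφ i, hφ j]
  have hdiag := sum_le_sum hwindow
  rw [← mul_sum] at hdiag
  rw [sum_mul_excess_eq hST hS φ, sum_congr rfl fun i hi => sum_congr rfl (hsplit i hi)]
  simp only [sum_add_distrib]
  linarith

theorem sum_abs_excess_le (hST : ∀ g : α → ℝ, ∑ x ∈ S, g x = ∑ i ∈ I, ∑ x ∈ T i, g x)
    (hS : S.Nonempty) (hT : ∀ i ∈ I, (T i).Nonempty)
    (hQ : ∀ i ∈ I, ∀ j ∈ I, i ≠ j → (Q i j).Nonempty)
    (hcard : ∀ i ∈ I, ∀ j ∈ I, i ≠ j → #(Q i j) = #(Q j i))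
    (hle : ∀ i ∈ I, ∀ j ∈ I, i ≠ j → #(T i) * #(T j) ≤ #S * #(Q i j))
    (hzero : ∀ i ∈ I, ∑ j ∈ I.erase i, excess (T i) (Q i j) f = 0) :
    ∑ i ∈ I, |excess S (T i) f| ≤ ∑ i ∈ I, (∑ j ∈ I.erase i, |excess (T i) (Q i j) f| +
      ∑ j ∈ I.erase i, |∑ x ∈ Q i j, f x - ∑ x ∈ Q j i, f x|) := by
  rw [sum_abs_eq_two_mul_sum (sum_excess_eq_zero hST)]
  have := sum_mul_excess_le hST hS hT hQ hcard hle hzero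
    (φ := fun i => if 0 ≤ excess S (T i) f then 1 else 0) fun i => by split_ifs <;> norm_num
  linarith

end Excess

/-! ### The apex projection -/

section ApexProjection

variable {V : Type*} [LinearOrder V] {A : Finset V} {p q r s u v w i j : V}

lemma triangulations_nonempty (hA : 2 ≤ #A) : (triangulations A).Nonempty := by
  rw [← card_pos, ← Nat.cast_pos (α := ℝ), card_triangulations hA]
  exact triCount_pos _

lemma withTriangle_nonempty (hp : p ∈ A) (hq : q ∈ A) (hr : r ∈ A) (h : sbtw p q r) :
    (withTriangle A p q r).Nonempty := by
  rw [← card_pos, ← Nat.cast_pos (α := ℝ), card_withTriangle hp hq hr h]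
  exact mul_pos (mul_pos (triCount_pos _) (triCount_pos _)) (triCount_pos _)

lemma withQuad_nonempty (hp : p ∈ A) (hq : q ∈ A) (hr : r ∈ A) (hs : s ∈ A) (h : sbtw p q r)
    (h' : sbtw r s p) : (withQuad A p q r s).Nonempty := by
  rw [← card_pos, ← Nat.cast_pos (α := ℝ), card_withQuad hp hq hr hs h h']
  exact mul_pos (mul_pos (triCount_pos _) (triCount_pos _))
    (mul_pos (triCount_pos _) (triCount_pos _))

lemma withQuad_subset (A : Finset V) (p q r s : V) : withQuad A p q r s ⊆ withTriangle A p q r :=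
  filter_subset _ _

lemma arc_subset (A : Finset V) (u v : V) : arc A u v ⊆ A := filter_subset _ _

lemma card_arc_lt_card (hv : v ∈ A) (h : sbtw u w v) : #(arc A u w) < #A :=
  (card_arc_lt hv h).trans_le (card_le_card (arc_subset A u v))

lemma sbtw_or_sbtw_of_mem_openArc (hi : i ∈ openArc A u v) (hj : j ∈ openArc A u v)
    (hij : i ≠ j) : sbtw u i j ∨ sbtw u j i :=
  sbtw_or_sbtw (sbtw_ne (mem_openArc.1 hi).2).1 hij (sbtw_ne (mem_openArc.1 hj).2).1

lemma sum_erase_openArc (hi : i ∈ openArc A u v) (g : V → ℝ) :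
    ∑ j ∈ (openArc A u v).erase i, g j = ∑ j ∈ openArc A u i, g j + ∑ j ∈ openArc A i v, g j := by
  have h := (mem_openArc.1 hi).2
  rw [← sum_union]
  · refine sum_congr ?_ fun _ _ => rfl
    ext j
    simp only [mem_erase, mem_union, mem_openArc, sbtw_iff_lt] at *
    grind
  · rw [disjoint_left]
    intro j hj hj'
    simp only [mem_openArc, sbtw_iff_lt] at *
    grind

variable (f : Finset (Sym2 V) → ℝ)

lemma sum_excess_withQuad_eq_zero (A : Finset V) (p q r : V) :
    ∑ s ∈ openArc A r p, excess (withTriangle A p q r) (withQuad A p q r s) f = 0 := by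
  obtain h | h := (openArc A r p).eq_empty_or_nonempty
  · rw [h, sum_empty]
  · exact sum_excess_eq_zero (sum_withQuad h)

lemma excess_withQuad_eq_sum (hp : p ∈ A) (hq : q ∈ A) (hr : r ∈ A) (h : sbtw p q r)
    (hs : s ∈ openArc A r p) :
    excess (withTriangle A p q r) (withQuad A p q r s) f =
      ∑ x₁ ∈ triangulations (arc A p q), ∑ x₂ ∈ triangulations (arc A q r),
        excess (triangulations (arc A r p)) (withTriangle (arc A r p) r s p)
          fun x₃ => f (x₁ ∪ x₂ ∪ x₃) := by
  rw [mem_openArc] at hs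
  obtain ⟨hpq, hqr, -⟩ := sbtw_ne h
  have h₁ : (#(triangulations (arc A p q)) : ℝ) ≠ 0 := by
    simpa using (triangulations_nonempty (two_le_card_arc hp hq hpq)).ne_empty
  have h₂ : (#(triangulations (arc A q r)) : ℝ) ≠ 0 := by
    simpa using (triangulations_nonempty (two_le_card_arc hq hr hqr)).ne_empty
  have hratio : (#(withQuad A p q r s) : ℝ) / #(withTriangle A p q r) =
      #(withTriangle (arc A r p) r s p) / #(triangulations (arc A r p)) := by
    have hquad : #(withQuad A p q r s) = #(triangulations (arc A p q)) *
        #(triangulations (arc A q r)) * #(withTriangle (arc A r p) r s p) := by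
      rw [card_eq_sum_ones, sum_withQuad_eq_sum_pieces hp hq hr hs.1 h hs.2]
      simp only [sum_const, smul_eq_mul, mul_one, mul_assoc]
    rw [hquad, card_withTriangle_eq_mul hp hq hr h]
    push_cast
    exact mul_div_mul_left _ _ (mul_ne_zero h₁ h₂)
  simp only [excess, hratio]
  rw [sum_withQuad_eq_sum_pieces hp hq hr hs.1 h hs.2, sum_withTriangle hp hq hr h]
  simp only [sum_sub_distrib, mul_sum]

lemma sum_abs_excess_withQuad_le_pieceEnergy (hp : p ∈ A) (hq : q ∈ A) (hr : r ∈ A)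
    (h : sbtw p q r)
    (hD : ∀ g : Finset (Sym2 V) → ℝ, ∑ s ∈ openArc (arc A r p) r p,
      |excess (triangulations (arc A r p)) (withTriangle (arc A r p) r s p) g| ≤
        energy (triangulations (arc A r p)) g) :
    ∑ s ∈ openArc A r p, |excess (withTriangle A p q r) (withQuad A p q r s) f| ≤
      pieceEnergy A p q r f := by
  rw [openArc_arc] at hD
  calc ∑ s ∈ openArc A r p, |excess (withTriangle A p q r) (withQuad A p q r s) f|
      ≤ ∑ s ∈ openArc A r p, ∑ x₁ ∈ triangulations (arc A p q),
          ∑ x₂ ∈ triangulations (arc A q r),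
            |excess (triangulations (arc A r p)) (withTriangle (arc A r p) r s p)
              fun x₃ => f (x₁ ∪ x₂ ∪ x₃)| := by
        refine sum_le_sum fun s hs => ?_
        rw [excess_withQuad_eq_sum f hp hq hr h hs]
        exact (abs_sum_le_sum_abs _ _).trans (sum_le_sum fun _ _ => abs_sum_le_sum_abs _ _)
    _ = ∑ x₁ ∈ triangulations (arc A p q), ∑ x₂ ∈ triangulations (arc A q r),
          ∑ s ∈ openArc A r p,
            |excess (triangulations (arc A r p)) (withTriangle (arc A r p) r s p)
              fun x₃ => f (x₁ ∪ x₂ ∪ x₃)| := (sum_comm_cycle ..).symm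
    _ ≤ pieceEnergy A p q r f := sum_le_sum fun _ _ => sum_le_sum fun _ _ => hD _

lemma abs_sum_withQuad_sub_le (h : sbtw p q r) (h' : sbtw r s p) :
    |∑ x ∈ withQuad A p q r s, f x - ∑ x ∈ withQuad A q r s p, f x| ≤
      ∑ x ∈ withQuad A p q r s, edgeVar f x (flipDiag p q r s x) := by
  rw [sum_withQuad_flip h h', ← sum_sub_distrib]
  refine (abs_sum_le_sum_abs _ _).trans (sum_le_sum fun x hx => ?_)
  rw [edgeVar_of_flipAdj f (flipAdj_flipDiag h h' hx)]

lemma card_withQuad_flip (h : sbtw p q r) (h' : sbtw r s p) :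
    #(withQuad A q r s p) = #(withQuad A p q r s) := by
  simpa only [card_eq_sum_ones] using sum_withQuad_flip h h' fun _ => 1

/-- The triangulations containing the triangle `u i v` whose neighbouring triangle, across the
side of `u i v` that faces `j`, has apex `j`. -/
noncomputable def apexQuad (A : Finset V) (u v i j : V) : Finset (Finset (Sym2 V)) :=
  if sbtw u j i then withQuad A i v u j else withQuad A v u i j

lemma apexQuad_of_sbtw (h : sbtw u i j) : apexQuad A u v i j = withQuad A v u i j :=
  if_neg h.cyclic_left.not_sbtw

lemma apexQuad_swap_of_sbtw (h : sbtw u i j) : apexQuad A u v j i = withQuad A u i j v := by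
  rw [apexQuad, if_pos h, withQuad_swap]

lemma sum_apexQuad (hi : i ∈ openArc A u v) (g : Finset (Finset (Sym2 V)) → ℝ) :
    ∑ j ∈ (openArc A u v).erase i, g (apexQuad A u v i j) =
      ∑ j ∈ openArc A u i, g (withQuad A i v u j) +
        ∑ j ∈ openArc A i v, g (withQuad A v u i j) := by
  rw [sum_erase_openArc hi]
  congr 1 <;> refine sum_congr rfl fun j hj => ?_
  · rw [apexQuad, if_pos (mem_openArc.1 hj).2]
  · have h : sbtw u i j := by
      simp only [mem_openArc, sbtw_iff_lt] at *
      grind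
    rw [apexQuad_of_sbtw h]

section Pair

variable (hi : i ∈ openArc A u v) (hj : j ∈ openArc A u v) (hij : i ≠ j)
include hi hj hij

lemma card_apexQuad_comm : #(apexQuad A u v i j) = #(apexQuad A u v j i) := by
  wlog h : sbtw u i j generalizing i j
  · exact (this hj hi hij.symm ((sbtw_or_sbtw_of_mem_openArc hi hj hij).resolve_left h)).symm
  rw [mem_openArc] at hi hj
  rw [apexQuad_of_sbtw h, apexQuad_swap_of_sbtw h,
    card_withQuad_flip hi.2.cyclic_right (sbtw_of_sbtw_of_sbtw h hj.2).2]

lemma card_withTriangle_mul_le (hr : IsRootSide A u v) :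
    #(withTriangle A u i v) * #(withTriangle A u j v) ≤
      #(triangulations A) * #(apexQuad A u v i j) := by
  wlog h : sbtw u i j generalizing i j
  · rw [mul_comm, card_apexQuad_comm hi hj hij]
    exact this hj hi hij.symm ((sbtw_or_sbtw_of_mem_openArc hi hj hij).resolve_left h)
  have hcard_i := hr.card_withTriangle_eq_triCount hi
  have hcard_j := hr.card_withTriangle_eq_triCount hj
  rw [mem_openArc] at hi hj
  have hijv := (sbtw_of_sbtw_of_sbtw h hj.2).2
  have hcard := card_triangulations_arc hr.left_mem hr.right_mem hr.ne
  rw [hr.arc_eq] at hcard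
  have hlen_j := arcLen_add hi.1 hj.1 hr.right_mem hijv
  have hlen_i := arcLen_add hr.left_mem hi.1 hj.1 h
  have hlen := arcLen_add hr.left_mem hi.1 hr.right_mem hi.2
  have hconv := triCount_mul_le (arcLen_pos hi.1 hj.1 hij) (arcLen A u i) (arcLen A j v)
  have hmul := mul_le_mul_of_nonneg_left hconv
    (mul_pos (triCount_pos (arcLen A u i)) (triCount_pos (arcLen A j v))).le
  rw [← Nat.cast_le (α := ℝ), apexQuad_of_sbtw h]
  push_cast
  rw [hcard_i, hcard_j, hcard,
    card_withQuad hr.right_mem hr.left_mem hi.1 hj.1 hi.2.cyclic_right hijv, hr.arcLen_swap,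
    triCount_one, show arcLen A i v = arcLen A j v + arcLen A i j by omega, ← hlen_i,
    show arcLen A u v = arcLen A u i + arcLen A j v + arcLen A i j by omega]
  linarith

lemma apexQuad_nonempty (hr : IsRootSide A u v) : (apexQuad A u v i j).Nonempty := by
  rw [mem_openArc] at hi hj
  have hpos := mul_pos (withTriangle_nonempty hr.left_mem hi.1 hr.right_mem hi.2).card_pos
    (withTriangle_nonempty hr.left_mem hj.1 hr.right_mem hj.2).card_pos
  exact card_pos.1 (Nat.pos_of_mul_pos_left (hpos.trans_le
    (card_withTriangle_mul_le (mem_openArc.2 hi) (mem_openArc.2 hj) hij hr)))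

lemma abs_sum_apexQuad_sub_le :
    |∑ x ∈ apexQuad A u v i j, f x - ∑ x ∈ apexQuad A u v j i, f x| ≤
      ∑ x ∈ withTriangle A u i v, ∑ y ∈ withTriangle A u j v, edgeVar f x y := by
  wlog h : sbtw u i j generalizing i j
  · rw [abs_sub_comm, sum_comm]
    simp only [edgeVar_comm f _ (_ : Finset (Sym2 V))]
    exact this hj hi hij.symm ((sbtw_or_sbtw_of_mem_openArc hi hj hij).resolve_left h)
  rw [mem_openArc] at hi hj
  have hvui : sbtw v u i := hi.2.cyclic_right
  have hijv : sbtw i j v := (sbtw_of_sbtw_of_sbtw h hj.2).2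
  have hsub_i : withQuad A v u i j ⊆ withTriangle A u i v := by
    rw [← withTriangle_rotate]
    exact withQuad_subset _ _ _ _ _
  have hsub_j : withQuad A u i j v ⊆ withTriangle A u j v := by
    rw [withQuad_swap, withTriangle_rotate]
    exact withQuad_subset _ _ _ _ _
  rw [apexQuad_of_sbtw h, apexQuad_swap_of_sbtw h]
  calc |∑ x ∈ withQuad A v u i j, f x - ∑ x ∈ withQuad A u i j v, f x|
      ≤ ∑ x ∈ withQuad A v u i j, edgeVar f x (flipDiag v u i j x) :=
        abs_sum_withQuad_sub_le f hvui hijv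
    _ ≤ ∑ x ∈ withQuad A v u i j, ∑ y ∈ withTriangle A u j v, edgeVar f x y :=
      sum_le_sum fun x hx => single_le_sum (f := edgeVar f x) (fun _ _ => edgeVar_nonneg _ _ _)
        (hsub_j (flipDiag_mem_withQuad hvui hijv hx))
    _ ≤ ∑ x ∈ withTriangle A u i v, ∑ y ∈ withTriangle A u j v, edgeVar f x y :=
      sum_le_sum_of_subset_of_nonneg hsub_i fun _ _ _ =>
        sum_nonneg fun _ _ => edgeVar_nonneg _ _ _

end Pair

lemma IsRootSide.energy_eq_sum (hr : IsRootSide A u v) (h : (openArc A u v).Nonempty) :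
    energy (triangulations A) f = ∑ i ∈ openArc A u v, (energy (withTriangle A u i v) f +
      ∑ j ∈ (openArc A u v).erase i, ∑ x ∈ withTriangle A u i v,
        ∑ y ∈ withTriangle A u j v, edgeVar f x y) := by
  simp only [energy, sum_triangulations hr h]
  refine sum_congr rfl fun i hi => ?_
  rw [sum_comm, ← add_sum_erase _ _ hi]

/-- A triangulation with apex `i` at `uv` can be flipped to one with apex `j` if it contains the
quadrilateral on `u`, `i`, `j` and `v`; by the induction hypothesis for the pieces, `f` does not
distinguish much between these and the other triangulations with apex `i`. -/
theorem IsRootSide.sum_abs_excess_le_energy (hr : IsRootSide A u v) :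
    ∑ w ∈ openArc A u v, |excess (triangulations A) (withTriangle A u w v) f| ≤
      energy (triangulations A) f := by
  induction hA : #A using Nat.strong_induction_on generalizing A u v f with
  | _ n ih =>
    subst hA
    obtain h | h := (openArc A u v).eq_empty_or_nonempty
    · rw [h, sum_empty]
      exact energy_nonneg f
    have hu := hr.left_mem
    have hv := hr.right_mem
    rw [hr.energy_eq_sum f h]
    refine (sum_abs_excess_le (Q := apexQuad A u v) (sum_triangulations hr h)
      (triangulations_nonempty hr.two_le_card)
      (fun i hi => withTriangle_nonempty hu (mem_openArc.1 hi).1 hv (mem_openArc.1 hi).2)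
      (fun i hi j hj hij => apexQuad_nonempty hi hj hij hr)
      (fun i hi j hj hij => card_apexQuad_comm hi hj hij)
      (fun i hi j hj hij => card_withTriangle_mul_le hi hj hij hr) fun i hi => ?_).trans
      (sum_le_sum fun i hi => add_le_add ?_ (sum_le_sum fun j hj => ?_))
    · rw [sum_apexQuad hi fun Q => excess (withTriangle A u i v) Q f]
      nth_rw 1 [withTriangle_rotate]
      rw [← withTriangle_rotate A v u i, sum_excess_withQuad_eq_zero, sum_excess_withQuad_eq_zero,
        add_zero]
    · obtain ⟨hi', huiv⟩ := mem_openArc.1 hi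
      obtain ⟨hui, hiv, -⟩ := sbtw_ne huiv
      have hleft := sum_abs_excess_withQuad_le_pieceEnergy f hi' hv hu huiv.cyclic_left fun g =>
        ih _ (card_arc_lt_card hv huiv) g (isRootSide_arc hu hi' hui) rfl
      have hright := sum_abs_excess_withQuad_le_pieceEnergy f hv hu hi' huiv.cyclic_right fun g =>
        ih _ (card_arc_lt_card hu huiv.cyclic_left) g (isRootSide_arc hi' hv hiv) rfl
      have hpieces := pieceEnergy_add_add_le_energy f hu hi' hv huiv
      rw [← withTriangle_rotate A u i v] at hleft
      rw [withTriangle_rotate A v u i] at hright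
      rw [sum_apexQuad hi fun Q => |excess (withTriangle A u i v) Q f|]
      linarith [pieceEnergy_nonneg (A := A) (p := u) (q := i) (r := v) f]
    · rw [mem_erase] at hj
      exact abs_sum_apexQuad_sub_le f hi hj.2 hj.1.symm

lemma sum_abs_excess_withQuad_le (hp : p ∈ A) (hq : q ∈ A) (hr : r ∈ A) (h : sbtw p q r) :
    ∑ s ∈ openArc A r p, |excess (withTriangle A p q r) (withQuad A p q r s) f| ≤
      energy (withTriangle A p q r) f := by
  have hpiece := sum_abs_excess_withQuad_le_pieceEnergy f hp hq hr h
    (isRootSide_arc hr hp (sbtw_ne h).2.2.symm).sum_abs_excess_le_energy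
  linarith [pieceEnergy_add_add_le_energy f hp hq hr h,
    pieceEnergy_nonneg (A := A) (p := q) (q := r) (r := p) f,
    pieceEnergy_nonneg (A := A) (p := r) (q := p) (r := q) f]

end ApexProjection

/-! ### Poincaré inequalities -/

section Poincare

/-- The total `ℓ¹` deviation of `f` from its mean over `S`. -/
noncomputable def meanDev {α : Type*} (S : Finset α) (f : α → ℝ) : ℝ :=
  ∑ x ∈ S, |f x - (∑ y ∈ S, f y) / #S|

lemma meanDev_le_sum_meanDev_add {α ι : Type*} {I : Finset ι} {S : Finset α} {T : ι → Finset α}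
    (hST : ∀ g : α → ℝ, ∑ x ∈ S, g x = ∑ i ∈ I, ∑ x ∈ T i, g x)
    (hT : ∀ i ∈ I, (T i).Nonempty) (f : α → ℝ) :
    meanDev S f ≤ ∑ i ∈ I, meanDev (T i) f + ∑ i ∈ I, |excess S (T i) f| := by
  rw [meanDev, hST fun x => |f x - (∑ y ∈ S, f y) / #S|, ← sum_add_distrib]
  refine sum_le_sum fun i hi => ?_
  have hpos : (0 : ℝ) < #(T i) := Nat.cast_pos.2 (hT i hi).card_pos
  have hmean : #(T i) * ((∑ x ∈ T i, f x) / #(T i) - (∑ y ∈ S, f y) / #S) =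
      excess S (T i) f := by
    rw [excess]
    field_simp
  calc ∑ x ∈ T i, |f x - (∑ y ∈ S, f y) / #S|
      ≤ ∑ x ∈ T i, (|f x - (∑ y ∈ T i, f y) / #(T i)| +
          |(∑ y ∈ T i, f y) / #(T i) - (∑ y ∈ S, f y) / #S|) :=
        sum_le_sum fun x _ => abs_sub_le _ _ _
    _ = meanDev (T i) f + |excess S (T i) f| := by
        rw [sum_add_distrib, sum_const, nsmul_eq_mul, ← hmean, abs_mul, abs_of_pos hpos, meanDev]

variable {V : Type*} [LinearOrder V] {A : Finset V} {S : Finset (Finset (Sym2 V))} {K L : ℝ}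
  {p q r u v w : V}

/-- `S`, as an induced subgraph of the flip graph, satisfies an `ℓ¹` Poincaré inequality with
constant `K`. -/
def Poincare (S : Finset (Finset (Sym2 V))) (K : ℝ) : Prop :=
  ∀ f, meanDev S f ≤ K * energy S f

lemma Poincare.mono (h : Poincare S K) (hKL : K ≤ L) : Poincare S L := fun f =>
  (h f).trans (mul_le_mul_of_nonneg_right hKL (energy_nonneg f))

section Product

variable {β : Type*} {T : Finset β}

lemma card_mul_energy_average_le (hT : T.Nonempty) (g : Finset (Sym2 V) → β → ℝ) :
    #T * energy S (fun x => (∑ y ∈ T, g x y) / #T) ≤ ∑ y ∈ T, energy S fun x => g x y := by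
  have hpos : (0 : ℝ) < #T := Nat.cast_pos.2 hT.card_pos
  simp only [energy, mul_sum]
  rw [sum_comm (s := T)]
  refine sum_le_sum fun x _ => ?_
  rw [sum_comm (s := T)]
  refine sum_le_sum fun x' _ => ?_
  simp only [edgeVar]
  split_ifs
  · rw [← sub_div, abs_div, abs_of_pos hpos, mul_div_cancel₀ _ hpos.ne', ← sum_sub_distrib]
    exact abs_sum_le_sum_abs _ T
  · rw [mul_zero, sum_const_zero]

lemma Poincare.meanDev_product_le (hS : Poincare S K) (hK : 0 ≤ K) (hT : T.Nonempty)
    (g : Finset (Sym2 V) → β → ℝ) :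
    meanDev (S ×ˢ T) (fun z => g z.1 z.2) ≤
      ∑ x ∈ S, meanDev T (g x) + K * ∑ y ∈ T, energy S fun x => g x y := by
  set G : Finset (Sym2 V) → ℝ := fun x => (∑ y ∈ T, g x y) / #T
  have hmean : (∑ x ∈ S, ∑ y ∈ T, g x y) / #(S ×ˢ T) = (∑ x ∈ S, G x) / #S := by
    rw [← sum_div, div_div, card_product, Nat.cast_mul, mul_comm (#S : ℝ)]
  rw [meanDev, sum_product, sum_product, hmean]
  calc ∑ x ∈ S, ∑ y ∈ T, |g x y - (∑ x ∈ S, G x) / #S|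
      ≤ ∑ x ∈ S, ∑ y ∈ T, (|g x y - G x| + |G x - (∑ x ∈ S, G x) / #S|) :=
        sum_le_sum fun x _ => sum_le_sum fun y _ => abs_sub_le _ _ _
    _ = ∑ x ∈ S, meanDev T (g x) + #T * meanDev S G := by
        simp only [sum_add_distrib, sum_const, nsmul_eq_mul, ← mul_sum, meanDev, G]
    _ ≤ ∑ x ∈ S, meanDev T (g x) + #T * (K * energy S G) := by gcongr; exact hS G
    _ ≤ ∑ x ∈ S, meanDev T (g x) + K * ∑ y ∈ T, energy S fun x => g x y := by
        rw [mul_left_comm]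
        gcongr
        exact card_mul_energy_average_le hT g

end Product

lemma meanDev_withTriangle (hp : p ∈ A) (hq : q ∈ A) (hr : r ∈ A) (h : sbtw p q r)
    (f : Finset (Sym2 V) → ℝ) :
    meanDev (withTriangle A p q r) f =
      meanDev (triangulations (arc A p q) ×ˢ triangulations (arc A q r) ×ˢ
        triangulations (arc A r p)) fun z => f (z.1 ∪ z.2.1 ∪ z.2.2) := by
  simp only [meanDev, sum_withTriangle hp hq hr h, sum_product, card_product,
    card_withTriangle_eq_mul hp hq hr h, mul_assoc]

/-- The flip graph of `withTriangle A p q r` contains the Cartesian product of the flip graphs of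
the three pieces, and Poincaré inequalities tensorize. -/
lemma poincare_withTriangle (hp : p ∈ A) (hq : q ∈ A) (hr : r ∈ A) (h : sbtw p q r) (hK : 0 ≤ K)
    (h₁ : Poincare (triangulations (arc A p q)) K) (h₂ : Poincare (triangulations (arc A q r)) K)
    (h₃ : Poincare (triangulations (arc A r p)) K) : Poincare (withTriangle A p q r) K := by
  intro f
  obtain ⟨-, hqr, hpr⟩ := sbtw_ne h
  have hne₂ := triangulations_nonempty (two_le_card_arc hq hr hqr)
  have hne₃ := triangulations_nonempty (two_le_card_arc hr hp hpr.symm)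
  have hrot : ∀ x y z : Finset (Sym2 V), x ∪ y ∪ z = y ∪ z ∪ x := fun x y z => by
    rw [union_assoc, union_comm]
  have hpiece₁ : pieceEnergy A q r p f = ∑ z ∈ triangulations (arc A q r) ×ˢ
      triangulations (arc A r p), energy (triangulations (arc A p q))
        fun x => f (x ∪ z.1 ∪ z.2) := by
    rw [pieceEnergy, sum_product]
    refine sum_congr rfl fun y _ => sum_congr rfl fun z _ => ?_
    simp only [hrot _ y z]
  have hpiece₂ : pieceEnergy A r p q f = ∑ x ∈ triangulations (arc A p q),
      ∑ z ∈ triangulations (arc A r p), energy (triangulations (arc A q r))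
        fun y => f (x ∪ y ∪ z) := by
    rw [pieceEnergy, sum_comm]
    refine sum_congr rfl fun x _ => sum_congr rfl fun z _ => ?_
    simp only [hrot z x]
  have hsum₁ := h₁.meanDev_product_le hK (hne₂.product hne₃) fun x z => f (x ∪ z.1 ∪ z.2)
  have hsum₂ := sum_le_sum fun x (_ : x ∈ triangulations (arc A p q)) =>
    h₂.meanDev_product_le hK hne₃ fun y z => f (x ∪ y ∪ z)
  have hsum₃ : ∑ x ∈ triangulations (arc A p q), ∑ y ∈ triangulations (arc A q r),
      meanDev (triangulations (arc A r p)) (fun z => f (x ∪ y ∪ z)) ≤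
        K * pieceEnergy A p q r f := by
    simp only [pieceEnergy, mul_sum]
    exact sum_le_sum fun x _ => sum_le_sum fun y _ => h₃ _
  rw [sum_add_distrib, ← mul_sum, ← hpiece₂] at hsum₂
  rw [← meanDev_withTriangle hp hq hr h, ← hpiece₁] at hsum₁
  linarith [mul_le_mul_of_nonneg_left (pieceEnergy_add_add_le_energy f hp hq hr h) hK]

lemma IsRootSide.eq_pair_of_openArc_eq_empty (hr : IsRootSide A u v) (h : openArc A u v = ∅) :
    A = {u, v} := by
  ext w
  rw [mem_insert, mem_singleton]
  refine ⟨fun hw => ?_, ?_⟩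
  · have hw' : ¬ sbtw u w v := fun hs => notMem_empty w (h ▸ mem_openArc.2 ⟨hw, hs⟩)
    simpa [hw'] using (btw_iff_eq_or_sbtw hr.ne).1 (hr.btw w hw)
  · rintro (rfl | rfl)
    exacts [hr.left_mem, hr.right_mem]

lemma IsRootSide.sum_energy_withTriangle_le (hr : IsRootSide A u v)
    (h : (openArc A u v).Nonempty) (f : Finset (Sym2 V) → ℝ) :
    ∑ w ∈ openArc A u v, energy (withTriangle A u w v) f ≤ energy (triangulations A) f := by
  rw [hr.energy_eq_sum f h]
  exact sum_le_sum fun w _ => le_add_of_nonneg_right <| sum_nonneg fun _ _ =>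
    sum_nonneg fun _ _ => sum_nonneg fun _ _ => edgeVar_nonneg f _ _

/-- A polynomial bound, needed only to start the recursion that yields the order `√n`. -/
theorem poincare_triangulations_card (hA : 2 ≤ #A) : Poincare (triangulations A) #A := by
  induction hn : #A using Nat.strong_induction_on generalizing A with
  | _ n ih =>
    subst hn
    intro f
    obtain ⟨u, v, hr⟩ := exists_isRootSide hA
    obtain h | h := (openArc A u v).eq_empty_or_nonempty
    · have hzero : meanDev (triangulations A) f = 0 := by
        rw [hr.eq_pair_of_openArc_eq_empty h, triangulations_pair]
        simp [meanDev]
      rw [hzero]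
      exact mul_nonneg (Nat.cast_nonneg _) (energy_nonneg f)
    have hcard : (0 : ℝ) ≤ #A - 1 := sub_nonneg.2 (mod_cast hr.two_le_card.trans' one_le_two)
    have hpiece : ∀ {a b c : V}, a ∈ A → b ∈ A → c ∈ A → sbtw a b c →
        Poincare (triangulations (arc A a b)) (#A - 1) := fun {a b c} ha hb hc habc => by
      have hlt := card_arc_lt_card hc habc
      refine (ih _ hlt (two_le_card_arc ha hb (sbtw_ne habc).1) rfl).mono ?_
      rw [le_sub_iff_add_le]
      exact_mod_cast hlt
    have hu := hr.left_mem
    have hv := hr.right_mem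
    have hblock : ∀ w ∈ openArc A u v, Poincare (withTriangle A u w v) (#A - 1) := fun w hw => by
      obtain ⟨hw, hs⟩ := mem_openArc.1 hw
      exact poincare_withTriangle hu hw hv hs hcard (hpiece hu hw hv hs)
        (hpiece hw hv hu hs.cyclic_left) (hpiece hv hu hw hs.cyclic_right)
    have hmean := meanDev_le_sum_meanDev_add (sum_triangulations hr h) (fun w hw =>
      withTriangle_nonempty hu (mem_openArc.1 hw).1 hv (mem_openArc.1 hw).2) f
    have hdev := sum_le_sum fun w hw => hblock w hw f
    rw [← mul_sum] at hdev
    linarith [hr.sum_abs_excess_le_energy f,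
      mul_le_mul_of_nonneg_left (hr.sum_energy_withTriangle_le h f) hcard]

end Poincare

/-! ### The median triangle -/

section Median

variable {V : Type*} [LinearOrder V] {A : Finset V} {x : Finset (Sym2 V)}
  {e e₁ e₂ e₃ p p' q q' r r' u v w : V}

/-- The half-open circular interval `[u, v)`, read as the sides of a polygon on its way from `u`
to `v` when every side is named after its first vertex. It is `{u}` for `u = v`. -/
def cIco (u v : V) : Set V := {e | e = u ∨ sbtw u e v}

lemma mem_cIco : e ∈ cIco u v ↔ e = u ∨ sbtw u e v := Iff.rfl

/-- The half-open circular interval `(u, v]`. It is `{v}` for `u = v`. -/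
def cIoc (u v : V) : Set V := {e | e = v ∨ sbtw u e v}

lemma mem_cIoc : e ∈ cIoc u v ↔ e = v ∨ sbtw u e v := Iff.rfl

lemma ne_of_mem_cIoc (h : sbtw u v w) (he : e ∈ cIoc u v) : u ≠ e := by
  obtain rfl | he := he
  exacts [(sbtw_ne h).1, (sbtw_ne he).1]

lemma mem_cIoc_of_mem_cIco (h : sbtw p q r) (h₁ : e₁ ∈ cIco r p) (h₂ : e₂ ∈ cIco p q) :
    p ∈ cIoc e₁ e₂ := by
  simp only [mem_cIco, mem_cIoc, sbtw_iff_lt] at *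
  grind (splits := 30)

/-- `pqr` is the triangle of `x` that separates the sides `e₁`, `e₂` and `e₃` from each other. -/
structure IsMedian (A : Finset V) (x : Finset (Sym2 V)) (e₁ e₂ e₃ p q r : V) : Prop where
  oriented : sbtw p q r
  mem : x ∈ withTriangle A p q r
  mem₁ : e₁ ∈ cIco r p
  mem₂ : e₂ ∈ cIco p q
  mem₃ : e₃ ∈ cIco q r

namespace IsMedian

lemma rotate (h : IsMedian A x e₁ e₂ e₃ p q r) : IsMedian A x e₂ e₃ e₁ q r p where
  oriented := h.oriented.cyclic_left
  mem := withTriangle_rotate A p q r ▸ h.mem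
  mem₁ := h.mem₂
  mem₂ := h.mem₃
  mem₃ := h.mem₁

lemma mem_cIoc (h : IsMedian A x e₁ e₂ e₃ p q r) : p ∈ cIoc e₁ e₂ :=
  mem_cIoc_of_mem_cIco h.oriented h.mem₁ h.mem₂

end IsMedian

lemma cross_of_mem_cIoc (he : sbtw e₁ e₂ e₃) (hp : p ∈ cIoc e₁ e₂) (hp' : p' ∈ cIoc e₁ e₂)
    (hq : q ∈ cIoc e₂ e₃) (hr : r ∈ cIoc e₃ e₁) (h : sbtw e₁ p p') : Cross p q p' r := by
  have hpq : sbtw e₁ p q := by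
    simp only [mem_cIoc, sbtw_iff_lt] at *
    grind (splits := 30)
  have hpq' : sbtw e₁ p' q := by
    simp only [mem_cIoc, sbtw_iff_lt] at *
    grind (splits := 30)
  have hqr : r = e₁ ∨ sbtw e₁ q r := by
    simp only [mem_cIoc, sbtw_iff_lt] at *
    grind (splits := 30)
  clear he hp hp' hq hr
  simp only [Cross, sbtw_iff_lt] at *
  grind

lemma IsMedian.eq_fst (he : sbtw e₁ e₂ e₃) (h : IsMedian A x e₁ e₂ e₃ p q r)
    (h' : IsMedian A x e₁ e₂ e₃ p' q' r') : p = p' := by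
  have hne := ne_of_mem_cIoc he h.mem_cIoc
  have hne' := ne_of_mem_cIoc he h'.mem_cIoc
  obtain ⟨hx, hpq, -, hrp⟩ := mem_withTriangle.1 h.mem
  obtain ⟨-, hpq', -, hrp'⟩ := mem_withTriangle.1 h'.mem
  rw [Sym2.eq_swap] at hrp hrp'
  by_contra hpp
  obtain hs | hs := sbtw_or_sbtw hne hpp hne'
  · exact not_cross_of_mem hx hpq hrp' (cross_of_mem_cIoc he h.mem_cIoc h'.mem_cIoc
      h.rotate.mem_cIoc h'.rotate.rotate.mem_cIoc hs)
  · exact not_cross_of_mem hx hpq' hrp (cross_of_mem_cIoc he h'.mem_cIoc h.mem_cIoc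
      h'.rotate.mem_cIoc h.rotate.rotate.mem_cIoc hs)

lemma IsMedian.eq (he : sbtw e₁ e₂ e₃) (h : IsMedian A x e₁ e₂ e₃ p q r)
    (h' : IsMedian A x e₁ e₂ e₃ p' q' r') : p = p' ∧ q = q' ∧ r = r' :=
  ⟨h.eq_fst he h', h.rotate.eq_fst he.cyclic_left h'.rotate,
    h.rotate.rotate.eq_fst he.cyclic_right h'.rotate.rotate⟩

lemma cIco_cases_of_sbtw (he : sbtw e₁ e₂ e₃) (h₁ : e₁ ∈ cIco v u) (h₂ : e₂ ∈ cIco u v)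
    (h₃ : e₃ ∈ cIco u v) (hw : sbtw u w v) :
    e₂ ∈ cIco u w ∧ e₃ ∈ cIco w v ∨ e₂ ∈ cIco w v ∧ e₃ ∈ cIco w v ∨
      e₂ ∈ cIco u w ∧ e₃ ∈ cIco u w := by
  simp only [mem_cIco, sbtw_iff_lt] at *
  grind (splits := 30)

lemma mem_cIco_and_mem_cIco_of_sbtw (h : e ∈ cIco v u) (hw : sbtw u w v) :
    e ∈ cIco v w ∧ e ∈ cIco w u := by
  simp only [mem_cIco, sbtw_iff_lt] at *
  grind (splits := 30)

lemma sbtw_of_mem_cIco (he : sbtw e₁ e₂ e₃) (h₁ : e₁ ∈ cIco v u) (h₂ : e₂ ∈ cIco u v)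
    (h₃ : e₃ ∈ cIco u v) : sbtw u e₃ v := by
  simp only [mem_cIco, sbtw_iff_lt] at *
  grind (splits := 30)

/-- Starting from a chord `uv` with `e₁` on one side and `e₂`, `e₃` on the other, pass through the
triangle at `uv`, towards `e₂` and `e₃`, until it separates them. -/
lemma exists_isMedian_of_chord_mem (hx : x ∈ triangulations A) (he₃ : e₃ ∈ A)
    (he : sbtw e₁ e₂ e₃) (huv : s(u, v) ∈ x) (h₁ : e₁ ∈ cIco v u) (h₂ : e₂ ∈ cIco u v)
    (h₃ : e₃ ∈ cIco u v) : ∃ p q r, IsMedian A x e₁ e₂ e₃ p q r := by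
  induction hn : arcLen A u v using Nat.strong_induction_on generalizing u v with
  | _ n ih =>
    subst hn
    obtain ⟨hu, hv⟩ := mem_of_chord hx huv
    obtain ⟨w, hw, huw, hwv⟩ :=
      exists_apex hx huv ⟨e₃, mem_openArc.2 ⟨he₃, sbtw_of_mem_cIco he h₁ h₂ h₃⟩⟩
    obtain ⟨hw, hs⟩ := mem_openArc.1 hw
    obtain ⟨hne, hne', -⟩ := sbtw_ne hs
    have hadd := arcLen_add hu hw hv hs
    have hpos := arcLen_pos hu hw hne
    have hpos' := arcLen_pos hw hv hne'
    obtain ⟨hvw, hwu⟩ := mem_cIco_and_mem_cIco_of_sbtw h₁ hs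
    obtain h | h | h := cIco_cases_of_sbtw he h₁ h₂ h₃ hs
    · exact ⟨u, w, v, hs, mem_withTriangle.2 ⟨hx, huw, hwv, Sym2.eq_swap ▸ huv⟩, h₁, h.1, h.2⟩
    · exact ih _ (by omega) hwv hvw h.1 h.2 rfl
    · exact ih _ (by omega) huw hwu h.1 h.2 rfl

lemma exists_isMedian (hx : x ∈ triangulations A) (he₁ : e₁ ∈ A) (he₂ : e₂ ∈ A) (he₃ : e₃ ∈ A)
    (he : sbtw e₁ e₂ e₃) : ∃ p q r, IsMedian A x e₁ e₂ e₃ p q r := by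
  obtain ⟨hne₂, -, hne₃⟩ := sbtw_ne he
  obtain ⟨u, hu, hmin⟩ := (A.erase e₁).exists_min_image (fun u => #(arc A e₁ u))
    ⟨e₂, mem_erase.2 ⟨hne₂.symm, he₂⟩⟩
  rw [mem_erase] at hu
  have hside : ∀ c ∈ A, ¬ sbtw e₁ c u := fun c hc hs =>
    (hmin c (mem_erase.2 ⟨(sbtw_ne hs).1.symm, hc⟩)).not_gt (card_arc_lt hu.2 hs)
  have hIco : ∀ c ∈ A, e₁ ≠ c → c ∈ cIco u e₁ := fun c hc hne =>
    or_iff_not_imp_left.2 fun hcu =>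
      ((sbtw_or_sbtw hne hcu hu.1.symm).resolve_left (hside c hc)).cyclic_left
  exact exists_isMedian_of_chord_mem hx he₃ he (Sym2.eq_swap ▸ side_mem hx he₁ hu.2 hside)
    (Or.inl rfl) (hIco e₂ he₂ hne₂) (hIco e₃ he₃ hne₃)

open Classical in
lemma sum_median (he₁ : e₁ ∈ A) (he₂ : e₂ ∈ A) (he₃ : e₃ ∈ A) (he : sbtw e₁ e₂ e₃)
    (g : Finset (Sym2 V) → ℝ) :
    ∑ x ∈ triangulations A, g x = ∑ p ∈ A, ∑ q ∈ A, ∑ r ∈ A,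
      if sbtw p q r ∧ e₁ ∈ cIco r p ∧ e₂ ∈ cIco p q ∧ e₃ ∈ cIco q r then
        ∑ x ∈ withTriangle A p q r, g x else 0 := by
  have hmedian : ∀ x ∈ triangulations A, g x = ∑ t ∈ A ×ˢ A ×ˢ A,
      if IsMedian A x e₁ e₂ e₃ t.1 t.2.1 t.2.2 then g x else 0 := fun x hx => by
    obtain ⟨p, q, r, h⟩ := exists_isMedian hx he₁ he₂ he₃ he
    have hmem := mem_withTriangle.1 h.mem
    obtain ⟨hp, hq⟩ := mem_of_chord hx hmem.2.1
    rw [sum_eq_single_of_mem (p, q, r)]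
    · rw [if_pos h]
    · simp only [mem_product]
      exact ⟨hp, hq, (mem_of_chord hx hmem.2.2.1).2⟩
    · rintro ⟨p', q', r'⟩ - hne
      refine if_neg fun h' => hne ?_
      obtain ⟨rfl, rfl, rfl⟩ := h.eq he h'
      rfl
  have hterm : ∀ p q r : V, (∑ x ∈ triangulations A,
      if IsMedian A x e₁ e₂ e₃ p q r then g x else 0) =
        if sbtw p q r ∧ e₁ ∈ cIco r p ∧ e₂ ∈ cIco p q ∧ e₃ ∈ cIco q r then
          ∑ x ∈ withTriangle A p q r, g x else 0 := fun p q r => by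
    rw [← sum_filter]
    split_ifs with h
    · refine sum_congr ?_ fun _ _ => rfl
      ext x
      rw [mem_filter]
      exact ⟨fun hx => hx.2.mem,
        fun hx => ⟨(mem_withTriangle.1 hx).1, h.1, hx, h.2.1, h.2.2.1, h.2.2.2⟩⟩
    · rw [filter_false_of_mem fun x _ hx => h ⟨hx.oriented, hx.mem₁, hx.mem₂, hx.mem₃⟩, sum_empty]
  rw [sum_congr rfl hmedian, sum_comm, sum_product]
  simp only [sum_product, hterm]

end Median

section TriangleWeight

variable {V : Type*} [LinearOrder V] {A E E₁ E₂ E₃ : Finset V} {κ : V → V → V → ℝ} {u v : V}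

open Classical in
/-- The number of elements of `E` in the half-open circular interval `[u, v)`. -/
noncomputable def sideCount (E : Finset V) (u v : V) : ℕ := #{e ∈ E | e ∈ cIco u v}

open Classical in
/-- The probability that, in a triangulation that contains the triangle `pqr`, this triangle is the
median of three independent uniformly distributed sides from `E₁`, `E₂` and `E₃`. -/
noncomputable def medianWeight (E₁ E₂ E₃ : Finset V) (p q r : V) : ℝ :=
  if sbtw p q r then
    sideCount E₁ r p * sideCount E₂ p q * sideCount E₃ q r / (#E₁ * #E₂ * #E₃) else 0

/-- `κ` chooses a random triangle in each triangulation of `A`: it is a weight on the positively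
oriented triangles such that the triangles of every triangulation have total weight `1`. The latter
is stated in integrated form, as a disintegration of sums over all triangulations. -/
structure IsTriangleWeight (A : Finset V) (κ : V → V → V → ℝ) : Prop where
  nonneg : ∀ p q r, 0 ≤ κ p q r
  sbtw_of_ne_zero : ∀ p q r, κ p q r ≠ 0 → sbtw p q r
  sum_eq : ∀ g : Finset (Sym2 V) → ℝ, ∑ p ∈ A, ∑ q ∈ A, ∑ r ∈ A,
    κ p q r * ∑ x ∈ withTriangle A p q r, g x = ∑ x ∈ triangulations A, g x

lemma IsTriangleWeight.rotate (h : IsTriangleWeight A κ) :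
    IsTriangleWeight A fun q r p => κ p q r where
  nonneg _ _ _ := h.nonneg _ _ _
  sbtw_of_ne_zero _ _ _ hne := (h.sbtw_of_ne_zero _ _ _ hne).cyclic_left
  sum_eq g := by
    rw [← h.sum_eq g]
    calc ∑ q ∈ A, ∑ r ∈ A, ∑ p ∈ A, κ p q r * ∑ x ∈ withTriangle A q r p, g x
        = ∑ q ∈ A, ∑ p ∈ A, ∑ r ∈ A, κ p q r * ∑ x ∈ withTriangle A p q r, g x :=
          sum_congr rfl fun q _ => sum_comm.trans <| sum_congr rfl fun p _ =>
            sum_congr rfl fun r _ => by rw [withTriangle_rotate A p q r]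
      _ = ∑ p ∈ A, ∑ q ∈ A, ∑ r ∈ A, κ p q r * ∑ x ∈ withTriangle A p q r, g x := sum_comm

open Classical in
lemma sideCount_mul_sideCount_mul_sideCount (p q r : V) :
    (sideCount E₁ r p : ℝ) * sideCount E₂ p q * sideCount E₃ q r = ∑ e₁ ∈ E₁, ∑ e₂ ∈ E₂,
      ∑ e₃ ∈ E₃, if e₁ ∈ cIco r p ∧ e₂ ∈ cIco p q ∧ e₃ ∈ cIco q r then 1 else 0 := by
  have hmul : ∀ e₁ e₂ e₃ : V,
      (if e₁ ∈ cIco r p ∧ e₂ ∈ cIco p q ∧ e₃ ∈ cIco q r then 1 else 0 : ℝ) =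
        (if e₁ ∈ cIco r p then 1 else 0) * (if e₂ ∈ cIco p q then 1 else 0) *
          (if e₃ ∈ cIco q r then 1 else 0) := fun e₁ e₂ e₃ => by
    simp only [ite_and, ite_mul, one_mul, zero_mul]
  simp only [hmul, ← mul_sum, ← sum_mul, sum_boole, sideCount]

open Classical in
lemma medianWeight_mul (p q r : V) (c : ℝ) :
    medianWeight E₁ E₂ E₃ p q r * c = (∑ e₁ ∈ E₁, ∑ e₂ ∈ E₂, ∑ e₃ ∈ E₃,
      if sbtw p q r ∧ e₁ ∈ cIco r p ∧ e₂ ∈ cIco p q ∧ e₃ ∈ cIco q r then c else 0) /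
        (#E₁ * #E₂ * #E₃) := by
  by_cases hs : sbtw p q r
  · rw [medianWeight, if_pos hs, div_mul_eq_mul_div, sideCount_mul_sideCount_mul_sideCount]
    simp only [hs, true_and, sum_mul, ite_mul, one_mul, zero_mul]
  · simp [medianWeight, hs]

lemma isTriangleWeight_medianWeight (h₁ : E₁ ⊆ A) (h₂ : E₂ ⊆ A) (h₃ : E₃ ⊆ A)
    (hne₁ : E₁.Nonempty) (hne₂ : E₂.Nonempty) (hne₃ : E₃.Nonempty)
    (h : ∀ e₁ ∈ E₁, ∀ e₂ ∈ E₂, ∀ e₃ ∈ E₃, sbtw e₁ e₂ e₃) :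
    IsTriangleWeight A (medianWeight E₁ E₂ E₃) where
  nonneg p q r := by
    unfold medianWeight
    split_ifs <;> positivity
  sbtw_of_ne_zero p q r hne := by
    by_contra hs
    exact hne (if_neg hs)
  sum_eq g := by
    classical
    have hpos : (0 : ℝ) < #E₁ * #E₂ * #E₃ := by
      have := hne₁.card_pos
      have := hne₂.card_pos
      have := hne₃.card_pos
      positivity
    simp only [medianWeight_mul, ← sum_div]
    rw [div_eq_iff hpos.ne']
    calc ∑ p ∈ A, ∑ q ∈ A, ∑ r ∈ A, ∑ e₁ ∈ E₁, ∑ e₂ ∈ E₂, ∑ e₃ ∈ E₃,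
          (if sbtw p q r ∧ e₁ ∈ cIco r p ∧ e₂ ∈ cIco p q ∧ e₃ ∈ cIco q r then
            ∑ x ∈ withTriangle A p q r, g x else 0)
        = ∑ e₁ ∈ E₁, ∑ e₂ ∈ E₂, ∑ e₃ ∈ E₃, ∑ p ∈ A, ∑ q ∈ A, ∑ r ∈ A,
          (if sbtw p q r ∧ e₁ ∈ cIco r p ∧ e₂ ∈ cIco p q ∧ e₃ ∈ cIco q r then
            ∑ x ∈ withTriangle A p q r, g x else 0) := by
          have := sum_comm (s := A ×ˢ A ×ˢ A) (t := E₁ ×ˢ E₂ ×ˢ E₃) (f := fun t e =>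
            if sbtw t.1 t.2.1 t.2.2 ∧ e.1 ∈ cIco t.2.2 t.1 ∧ e.2.1 ∈ cIco t.1 t.2.1 ∧
              e.2.2 ∈ cIco t.2.1 t.2.2 then ∑ x ∈ withTriangle A t.1 t.2.1 t.2.2, g x else 0)
          simpa only [sum_product] using this
      _ = ∑ _ ∈ E₁, ∑ _ ∈ E₂, ∑ _ ∈ E₃, ∑ x ∈ triangulations A, g x :=
          sum_congr rfl fun _ he₁ => sum_congr rfl fun _ he₂ => sum_congr rfl fun _ he₃ =>
            (sum_median (h₁ he₁) (h₂ he₂) (h₃ he₃) (h _ he₁ _ he₂ _ he₃) g).symm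
      _ = (∑ x ∈ triangulations A, g x) * (#E₁ * #E₂ * #E₃) := by
          simp only [sum_const, nsmul_eq_mul]
          ring

end TriangleWeight

/-! ### Moving one vertex of a random triangle -/

section Reindex

variable {ι : Type*} {I : Finset ι} (g : ι → ι → ι → ι → ℝ)

lemma sum_cycle_four : ∑ p ∈ I, ∑ q ∈ I, ∑ r ∈ I, ∑ s ∈ I, g p q r s =
    ∑ q ∈ I, ∑ r ∈ I, ∑ s ∈ I, ∑ p ∈ I, g p q r s :=
  sum_comm.trans <| sum_congr rfl fun _ _ => sum_comm.trans <| sum_congr rfl fun _ _ => sum_comm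

lemma sum_swap_ends : ∑ p ∈ I, ∑ q ∈ I, ∑ r ∈ I, ∑ s ∈ I, g p q r s =
    ∑ p ∈ I, ∑ q ∈ I, ∑ r ∈ I, ∑ s ∈ I, g s q r p := by
  simp only [← sum_product']
  refine sum_nbij' (fun t => (t.2.2.2, t.2.1, t.2.2.1, t.1))
    (fun t => (t.2.2.2, t.2.1, t.2.2.1, t.1)) ?_ ?_ ?_ ?_ ?_ <;>
  simp +contextual

end Reindex

section Transport

variable {V : Type*} [LinearOrder V] {A : Finset V} {κ κ' : V → V → V → ℝ} {K : ℝ}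
  {w : V → V → V → V → ℝ} {p q r s : V}

lemma IsTriangleWeight.sum_mul_energy_le (hκ : IsTriangleWeight A κ) (f : Finset (Sym2 V) → ℝ) :
    ∑ p ∈ A, ∑ q ∈ A, ∑ r ∈ A, κ p q r * energy (withTriangle A p q r) f ≤
      energy (triangulations A) f := by
  refine le_trans ?_ (hκ.sum_eq fun x => ∑ y ∈ triangulations A, edgeVar f x y).le
  gcongr with p _ q _ r _
  · exact hκ.nonneg p q r
  · exact sum_le_sum fun x _ => sum_le_sum_of_subset_of_nonneg (filter_subset _ _)
      fun y _ _ => edgeVar_nonneg f x y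

lemma IsTriangleWeight.sum_mul_le_energy (hκ : IsTriangleWeight A κ) {f : Finset (Sym2 V) → ℝ}
    {X : V → V → V → V → ℝ} (hX : ∀ p ∈ A, ∀ q ∈ A, ∀ r ∈ A, sbtw p q r →
      ∑ s ∈ openArc A r p, X p q r s ≤
        ∑ x ∈ withTriangle A p q r, ∑ y ∈ triangulations A, edgeVar f x y) :
    ∑ p ∈ A, ∑ q ∈ A, ∑ r ∈ A, ∑ s ∈ A, κ p q r * (if sbtw r s p then X p q r s else 0) ≤
      energy (triangulations A) f := by
  refine le_trans (sum_le_sum fun p hp => sum_le_sum fun q hq => sum_le_sum fun r hr => ?_)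
    (hκ.sum_eq fun x => ∑ y ∈ triangulations A, edgeVar f x y).le
  rw [← mul_sum, ← sum_filter]
  obtain hκ₀ | hκ₀ := eq_or_ne (κ p q r) 0
  · rw [hκ₀, zero_mul, zero_mul]
  · have := hκ.nonneg p q r
    gcongr
    exact hX p hp q hq r hr (hκ.sbtw_of_ne_zero p q r hκ₀)

lemma IsTriangleWeight.sum_mul_abs_excess_le (hκ : IsTriangleWeight A κ)
    (f : Finset (Sym2 V) → ℝ) :
    ∑ p ∈ A, ∑ q ∈ A, ∑ r ∈ A, ∑ s ∈ A, κ p q r *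
      (if sbtw r s p then |excess (withTriangle A p q r) (withQuad A p q r s) f| else 0) ≤
        energy (triangulations A) f :=
  hκ.sum_mul_le_energy fun _ hp _ hq _ hr h =>
    (sum_abs_excess_withQuad_le f hp hq hr h).trans <| sum_le_sum fun x _ =>
      sum_le_sum_of_subset_of_nonneg (filter_subset _ _) fun y _ _ => edgeVar_nonneg f x y

lemma IsTriangleWeight.sum_mul_abs_flip_le (hκ : IsTriangleWeight A κ)
    (f : Finset (Sym2 V) → ℝ) :
    ∑ p ∈ A, ∑ q ∈ A, ∑ r ∈ A, ∑ s ∈ A, κ p q r *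
      (if sbtw r s p then |∑ x ∈ withQuad A p q r s, f x - ∑ x ∈ withQuad A q r s p, f x|
        else 0) ≤ energy (triangulations A) f := by
  refine hκ.sum_mul_le_energy fun p _ q _ r _ h => ?_
  obtain h₀ | hi := (openArc A r p).eq_empty_or_nonempty
  · rw [h₀, sum_empty]
    exact sum_nonneg fun x _ => sum_nonneg fun y _ => edgeVar_nonneg f x y
  · rw [sum_withQuad hi]
    refine sum_le_sum fun s hs => ?_
    have h' := (mem_openArc.1 hs).2
    refine (abs_sum_withQuad_sub_le f h h').trans (sum_le_sum fun x hx => ?_)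
    exact single_le_sum (f := edgeVar f x) (fun y _ => edgeVar_nonneg f x y)
      (mem_withQuad.1 (flipDiag_mem_withQuad h h' hx)).1

/-- The mean of `f` over the triangulations of `A` that contain the triangle `pqr`. -/
noncomputable def triAvg (A : Finset V) (f : Finset (Sym2 V) → ℝ) (p q r : V) : ℝ :=
  (∑ x ∈ withTriangle A p q r, f x) / #(withTriangle A p q r)

lemma triAvg_rotate (A : Finset V) (f : Finset (Sym2 V) → ℝ) (p q r : V) :
    triAvg A f p q r = triAvg A f q r p := by
  rw [triAvg, triAvg, withTriangle_rotate]

lemma card_mul_abs_average_sub_le {α : Type*} {S S' T T' : Finset α} (h : #T' = #T) (f : α → ℝ) :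
    #T * |(∑ x ∈ S, f x) / #S - (∑ x ∈ S', f x) / #S'| ≤
      |excess S T f| + |∑ x ∈ T, f x - ∑ x ∈ T', f x| + |excess S' T' f| := by
  have hsplit : #T * ((∑ x ∈ S, f x) / #S - (∑ x ∈ S', f x) / #S') =
      -excess S T f + (∑ x ∈ T, f x - ∑ x ∈ T', f x) + excess S' T' f := by
    rw [excess, excess, h]
    ring
  rw [← Nat.abs_cast, ← abs_mul, hsplit, ← abs_neg (excess S T f)]
  exact abs_add_three _ _ _

lemma mul_abs_triAvg_sub_le (hp : p ∈ A) (hq : q ∈ A) (hr : r ∈ A) (hs : s ∈ A) (h : sbtw p q r)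
    (h' : sbtw r s p) (f : Finset (Sym2 V) → ℝ) {c a b : ℝ} (hc : 0 ≤ c)
    (ha : c ≤ a * #(withQuad A p q r s)) (hb : c ≤ b * #(withQuad A p q r s)) :
    c * |triAvg A f p q r - triAvg A f s q r| ≤
      a * |excess (withTriangle A p q r) (withQuad A p q r s) f| +
        a * |∑ x ∈ withQuad A p q r s, f x - ∑ x ∈ withQuad A q r s p, f x| +
        b * |excess (withTriangle A q r s) (withQuad A q r s p) f| := by
  have hm : (0 : ℝ) < #(withQuad A p q r s) :=
    mod_cast (withQuad_nonempty hp hq hr hs h h').card_pos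
  rw [← div_le_iff₀ hm] at ha hb
  rw [triAvg_rotate A f s q r]
  have havg := card_mul_abs_average_sub_le (S := withTriangle A p q r)
    (S' := withTriangle A q r s) (card_withQuad_flip (A := A) h h') f
  calc c * |triAvg A f p q r - triAvg A f q r s|
      = c / #(withQuad A p q r s) *
          (#(withQuad A p q r s) * |triAvg A f p q r - triAvg A f q r s|) := by
        rw [← mul_assoc, div_mul_cancel₀ _ hm.ne']
    _ ≤ c / #(withQuad A p q r s) *
          (|excess (withTriangle A p q r) (withQuad A p q r s) f| +
            |∑ x ∈ withQuad A p q r s, f x - ∑ x ∈ withQuad A q r s p, f x| +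
            |excess (withTriangle A q r s) (withQuad A q r s p) f|) := by
        gcongr
        exact havg
    _ ≤ _ := by
        rw [mul_add, mul_add]
        gcongr

lemma sum_mul_abs_triAvg_sub_le_of_quad (hκ : IsTriangleWeight A κ) (hκ' : IsTriangleWeight A κ')
    (hK : 0 ≤ K) (hw₀ : ∀ p q r s, 0 ≤ w p q r s)
    (hw : ∀ p ∈ A, ∀ q ∈ A, ∀ r ∈ A, ∀ s ∈ A, w p q r s ≠ 0 → sbtw p q r ∧ sbtw r s p ∧
      w p q r s ≤ K * κ p q r * #(withQuad A p q r s) ∧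
      w p q r s ≤ K * κ' s q r * #(withQuad A p q r s)) (f : Finset (Sym2 V) → ℝ) :
    ∑ p ∈ A, ∑ q ∈ A, ∑ r ∈ A, ∑ s ∈ A, w p q r s * |triAvg A f p q r - triAvg A f s q r| ≤
      3 * K * energy (triangulations A) f := by
  have hex := hκ.sum_mul_abs_excess_le f
  have hflip := hκ.sum_mul_abs_flip_le f
  have hex' := hκ'.rotate.sum_mul_abs_excess_le f
  rw [← sum_cycle_four fun p q r s => κ' s q r *
    (if sbtw s p q then |excess (withTriangle A q r s) (withQuad A q r s p) f| else 0)] at hex'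
  have hterm : ∀ p ∈ A, ∀ q ∈ A, ∀ r ∈ A, ∀ s ∈ A,
      w p q r s * |triAvg A f p q r - triAvg A f s q r| ≤
        K * (κ p q r *
          (if sbtw r s p then |excess (withTriangle A p q r) (withQuad A p q r s) f| else 0)) +
        K * (κ p q r * (if sbtw r s p then
          |∑ x ∈ withQuad A p q r s, f x - ∑ x ∈ withQuad A q r s p, f x| else 0)) +
        K * (κ' s q r * (if sbtw s p q then
          |excess (withTriangle A q r s) (withQuad A q r s p) f| else 0)) :=
      fun p hp q hq r hr s hs => by
    obtain h₀ | h₀ := eq_or_ne (w p q r s) 0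
    · have := hκ.nonneg p q r
      have := hκ'.nonneg s q r
      rw [h₀, zero_mul]
      positivity
    · obtain ⟨h, h', hwκ, hwκ'⟩ := hw p hp q hq r hr s hs h₀
      rw [if_pos h', if_pos h', if_pos (sbtw_of_sbtw_diagonal h h').2]
      simp only [← mul_assoc]
      exact mul_abs_triAvg_sub_le hp hq hr hs h h' f (hw₀ p q r s) hwκ hwκ'
  refine (sum_le_sum fun p hp => sum_le_sum fun q hq => sum_le_sum fun r hr =>
    sum_le_sum fun s hs => hterm p hp q hq r hr s hs).trans ?_
  simp only [sum_add_distrib, ← mul_sum]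
  simp only [← mul_sum] at hex hflip hex'
  linear_combination K * hex + K * hflip + K * hex'

lemma arcLen_le_card (A : Finset V) (u v : V) : arcLen A u v ≤ #A :=
  (Nat.sub_le _ _).trans (card_le_card (arc_subset A u v))

lemma card_withTriangle_le_mul_card_withQuad (hp : p ∈ A) (hq : q ∈ A) (hr : r ∈ A) (hs : s ∈ A)
    (h : sbtw p q r) (h' : sbtw r s p) :
    (#(withTriangle A p q r) : ℝ) ≤ 16 * pow32 #A * #(withQuad A p q r s) := by
  rw [card_withQuad hp hq hr hs h h', card_withTriangle hp hq hr h, ← arcLen_add hr hs hp h']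
  obtain ⟨hrs, hsp, -⟩ := sbtw_ne h'
  have hsplit := triCount_add_le (arcLen_pos hr hs hrs) (arcLen_pos hs hp hsp)
    ((arcLen_add hr hs hp h').trans_le (arcLen_le_card A r p))
  have := mul_le_mul_of_nonneg_left hsplit
    (mul_pos (triCount_pos (arcLen A p q)) (triCount_pos (arcLen A q r))).le
  linarith

lemma sum_ite_mul_abs_triAvg_sub_le {L : ℝ} {N : V → V → V → V → ℝ} (hκ : IsTriangleWeight A κ)
    (hκ' : IsTriangleWeight A κ') (hK : 0 ≤ K) (hL : 0 ≤ L)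
    (hN : ∀ p ∈ A, ∀ q ∈ A, ∀ r ∈ A, ∀ s ∈ A, sbtw p q r → sbtw r s p →
      N p q r s ≤ L * #(withQuad A p q r s)) (hw₀ : ∀ p q r s, 0 ≤ w p q r s)
    (hw : ∀ p ∈ A, ∀ q ∈ A, ∀ r ∈ A, ∀ s ∈ A, w p q r s ≠ 0 → sbtw p q r ∧
      w p q r s ≤ K * κ p q r * N p q r s ∧ w p q r s ≤ K * κ' s q r * N p q r s)
    (f : Finset (Sym2 V) → ℝ) :
    ∑ p ∈ A, ∑ q ∈ A, ∑ r ∈ A, ∑ s ∈ A,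
      (if sbtw r s p then w p q r s else 0) * |triAvg A f p q r - triAvg A f s q r| ≤
        3 * (L * K) * energy (triangulations A) f := by
  have hmul : ∀ {a b c m : ℝ}, 0 ≤ a → c ≤ K * a * m → m ≤ L * b → c ≤ L * K * a * b :=
    fun {a b c m} ha hc hm => by
      have := mul_le_mul_of_nonneg_left hm (mul_nonneg hK ha)
      linarith
  refine sum_mul_abs_triAvg_sub_le_of_quad hκ hκ' (mul_nonneg hL hK)
    (w := fun p q r s => if sbtw r s p then w p q r s else 0)
    (fun p q r s => ite_nonneg (hw₀ p q r s) le_rfl) (fun p hp q hq r hr s hs h₀ => ?_) f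
  obtain ⟨h', hne⟩ := ite_ne_right_iff.1 h₀
  obtain ⟨h, hwκ, hwκ'⟩ := hw p hp q hq r hr s hs hne
  have hcard := hN p hp q hq r hr s hs h h'
  rw [if_pos h']
  exact ⟨h, h', hmul (hκ.nonneg p q r) hwκ hcard, hmul (hκ'.nonneg s q r) hwκ' hcard⟩

lemma mul_abs_sub_le_ite_add_ite {c y z : ℝ} (hc : 0 ≤ c) (h : sbtw p q r) (h' : sbtw s q r)
    (hps : p ≠ s) : c * |y - z| ≤
      (if sbtw r s p then c else 0) * |y - z| + (if sbtw r p s then c else 0) * |z - y| := by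
  rw [abs_sub_comm z y, ← add_mul]
  gcongr
  obtain hs | hs := sbtw_or_sbtw (sbtw_ne h').2.2.symm hps.symm (sbtw_ne h).2.2.symm
  · exact (if_pos hs).ge.trans (le_add_of_nonneg_right (ite_nonneg hc le_rfl))
  · exact (if_pos hs).ge.trans (le_add_of_nonneg_left (ite_nonneg hc le_rfl))

/-- If `s` lies between `r` and `p`, then the move `pqr → sqr` takes place in the quadrilateral
`pqrs`; otherwise the reverse move takes place in the quadrilateral `sqrp`. -/
theorem sum_mul_abs_triAvg_sub_le (hκ : IsTriangleWeight A κ) (hκ' : IsTriangleWeight A κ')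
    (hK : 0 ≤ K) (hw₀ : ∀ p q r s, 0 ≤ w p q r s)
    (hw : ∀ p ∈ A, ∀ q ∈ A, ∀ r ∈ A, ∀ s ∈ A, w p q r s ≠ 0 → sbtw p q r ∧ sbtw s q r ∧
      w p q r s ≤ K * κ p q r * #(withTriangle A p q r) ∧
      w p q r s ≤ K * κ' s q r * #(withTriangle A p q r)) (f : Finset (Sym2 V) → ℝ) :
    ∑ p ∈ A, ∑ q ∈ A, ∑ r ∈ A, ∑ s ∈ A, w p q r s * |triAvg A f p q r - triAvg A f s q r| ≤
      96 * K * pow32 #A * energy (triangulations A) f := by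
  have hL : 0 ≤ 16 * pow32 #A := by
    unfold pow32
    positivity
  have hleft := sum_ite_mul_abs_triAvg_sub_le hκ hκ' hK hL
    (fun _ hp _ hq _ hr _ hs => card_withTriangle_le_mul_card_withQuad hp hq hr hs) hw₀
    (fun p hp q hq r hr s hs h₀ => (hw p hp q hq r hr s hs h₀).imp_right And.right) f
  have hright := sum_ite_mul_abs_triAvg_sub_le hκ' hκ hK hL
    (N := fun _ q r s => #(withTriangle A s q r)) (w := fun p q r s => w s q r p)
    (fun p hp q hq r hr s hs h h' => by
      obtain ⟨hqrs, hspq⟩ := sbtw_of_sbtw_diagonal h h'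
      rw [← card_withQuad_flip h h', withTriangle_rotate A s q r]
      exact card_withTriangle_le_mul_card_withQuad hq hr hs hp hqrs hspq)
    (fun p q r s => hw₀ s q r p)
    (fun p hp q hq r hr s hs h₀ => by
      obtain ⟨-, h, hwκ, hwκ'⟩ := hw s hs q hq r hr p hp h₀
      exact ⟨h, hwκ', hwκ⟩) f
  rw [sum_swap_ends] at hright
  have hterm : ∀ p q r s, p ∈ A → q ∈ A → r ∈ A → s ∈ A →
      w p q r s * |triAvg A f p q r - triAvg A f s q r| ≤
        (if sbtw r s p then w p q r s else 0) * |triAvg A f p q r - triAvg A f s q r| +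
        (if sbtw r p s then w p q r s else 0) * |triAvg A f s q r - triAvg A f p q r| :=
      fun p q r s hp hq hr hs => by
    obtain rfl | hps := eq_or_ne p s
    · simp
    obtain h₀ | h₀ := eq_or_ne (w p q r s) 0
    · simp [h₀]
    obtain ⟨h, h', -⟩ := hw p hp q hq r hr s hs h₀
    exact mul_abs_sub_le_ite_add_ite (hw₀ p q r s) h h' hps
  refine (sum_le_sum fun p hp => sum_le_sum fun q hq => sum_le_sum fun r hr =>
    sum_le_sum fun s hs => hterm p q r s hp hq hr hs).trans ?_
  simp only [sum_add_distrib]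
  linarith

end Transport

/-! ### Central triangles -/

section Blocks

variable {V : Type*} [LinearOrder V] {A E E' : Finset V} {a a' b b' : ℕ} {e u v w : V}

/-- The position of `v` in the increasing enumeration of `A`, starting from `0`. -/
def rank (A : Finset V) (v : V) : ℕ := #{w ∈ A | w < v}

lemma rank_lt_rank (hu : u ∈ A) (h : u < v) : rank A u < rank A v := by
  refine card_lt_card ⟨fun w hw => ?_, fun hsub => ?_⟩
  · rw [mem_filter] at hw ⊢
    exact ⟨hw.1, hw.2.trans h⟩
  · exact lt_irrefl u (mem_filter.1 (hsub (mem_filter.2 ⟨hu, h⟩))).2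

lemma strictMonoOn_rank (A : Finset V) : StrictMonoOn (rank A) A :=
  fun _ hu _ _ h => rank_lt_rank hu h

lemma rank_lt_card (hu : u ∈ A) : rank A u < #A :=
  card_lt_card (filter_ssubset.2 ⟨u, hu, lt_irrefl u⟩)

lemma sbtw_rank_iff (hu : u ∈ A) (hv : v ∈ A) (hw : w ∈ A) :
    sbtw (rank A u) (rank A v) (rank A w) ↔ sbtw u v w := by
  simp only [sbtw_iff_lt, (strictMonoOn_rank A).lt_iff_lt, mem_coe, hu, hv, hw]

lemma rank_mem_cIco_iff (he : e ∈ A) (hu : u ∈ A) (hv : v ∈ A) :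
    rank A e ∈ cIco (rank A u) (rank A v) ↔ e ∈ cIco u v := by
  rw [mem_cIco, mem_cIco, sbtw_rank_iff hu he hv, (strictMonoOn_rank A).injOn.eq_iff he hu]

lemma rank_mem_cIoc_iff (he : e ∈ A) (hu : u ∈ A) (hv : v ∈ A) :
    rank A e ∈ cIoc (rank A u) (rank A v) ↔ e ∈ cIoc u v := by
  rw [mem_cIoc, mem_cIoc, sbtw_rank_iff hu he hv, (strictMonoOn_rank A).injOn.eq_iff he hv]

/-- The elements of `A` in the positions `a, …, b - 1`. -/
def block (A : Finset V) (a b : ℕ) : Finset V := {v ∈ A | rank A v ∈ Set.Ico a b}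

lemma mem_block : v ∈ block A a b ↔ v ∈ A ∧ a ≤ rank A v ∧ rank A v < b := mem_filter

lemma block_subset (A : Finset V) (a b : ℕ) : block A a b ⊆ A := filter_subset _ _

lemma block_subset_block (ha : a ≤ a') (hb : b' ≤ b) : block A a' b' ⊆ block A a b := by
  intro v hv
  rw [mem_block] at hv ⊢
  exact ⟨hv.1, ha.trans hv.2.1, hv.2.2.trans_le hb⟩

lemma image_rank (A : Finset V) : A.image (rank A) = range #A := by
  refine eq_of_subset_of_card_le (fun i hi => ?_) ?_
  · obtain ⟨v, hv, rfl⟩ := mem_image.1 hi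
    exact mem_range.2 (rank_lt_card hv)
  · rw [card_range, card_image_of_injOn (strictMonoOn_rank A).injOn]

lemma card_block (hb : b ≤ #A) : #(block A a b) = b - a := by
  have himage : (block A a b).image (rank A) = Ico a b := by
    ext i
    simp only [mem_image, mem_block, mem_Ico]
    refine ⟨by rintro ⟨v, hv, rfl⟩; exact hv.2, fun hi => ?_⟩
    have hi' : i ∈ A.image (rank A) := image_rank A ▸ mem_range.2 (hi.2.trans_le hb)
    obtain ⟨v, hv, rfl⟩ := mem_image.1 hi'
    exact ⟨v, ⟨hv, hi⟩, rfl⟩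
  rw [← Nat.card_Ico, ← himage,
    card_image_of_injOn ((strictMonoOn_rank A).injOn.mono (block_subset A a b))]

lemma sideCount_le_card (E : Finset V) (u v : V) : sideCount E u v ≤ #E := by
  classical exact card_le_card (filter_subset _ _)

lemma sideCount_mono (h : E ⊆ E') (u v : V) : sideCount E u v ≤ sideCount E' u v := by
  classical exact card_le_card (filter_subset_filter _ h)

lemma sideCount_le_arcLen (hE : E ⊆ A) (hv : v ∈ A) (h : u ≠ v) :
    sideCount E u v ≤ arcLen A u v := by
  classical
  have hv' : v ∈ arc A u v := mem_arc.2 ⟨hv, btw_rfl_right⟩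
  rw [arcLen, ← card_erase_of_mem hv']
  refine card_le_card fun e he => ?_
  rw [mem_filter, mem_cIco] at he
  rw [mem_erase, mem_arc]
  rcases he.2 with rfl | he'
  · exact ⟨h, hE he.1, btw_rfl_left⟩
  · exact ⟨(sbtw_ne he').2.1, hE he.1, he'.btw⟩

lemma exists_mem_of_sideCount_ne_zero (h : sideCount E u v ≠ 0) : ∃ e ∈ E, e ∈ cIco u v := by
  classical
  obtain ⟨e, he⟩ := card_ne_zero.1 h
  exact ⟨e, mem_filter.1 he⟩

lemma le_sideCount_block (hb : b ≤ #A) (hu : u ∈ A) (hv : v ∈ A) (ha' : a ≤ a') (hb' : b' ≤ b)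
    (h : ∀ i, a' ≤ i → i < b' → i ∈ cIco (rank A u) (rank A v)) :
    b' - a' ≤ sideCount (block A a b) u v := by
  classical
  rw [← card_block (hb'.trans hb)]
  refine card_le_card fun e he => mem_filter.2 ⟨block_subset_block ha' hb' he, ?_⟩
  obtain ⟨heA, hae, heb⟩ := mem_block.1 he
  exact (rank_mem_cIco_iff heA hu hv).1 (h _ hae heb)

lemma sbtw_of_mem_block {a₁ b₁ a₂ b₂ a₃ b₃ : ℕ} (h₁ : b₁ ≤ a₂) (h₂ : b₂ ≤ a₃) :
    ∀ e₁ ∈ block A a₁ b₁, ∀ e₂ ∈ block A a₂ b₂, ∀ e₃ ∈ block A a₃ b₃, sbtw e₁ e₂ e₃ := by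
  intro e₁ he₁ e₂ he₂ e₃ he₃
  rw [mem_block] at he₁ he₂ he₃
  rw [← sbtw_rank_iff he₁.1 he₂.1 he₃.1, sbtw_iff_lt]
  lia

end Blocks

section CentralTriangle

variable {V : Type*} [LinearOrder V] {A : Finset V} {s : ℕ} {p p' q q' r r' : V}

/-- The triangle `pqr` passes close to the middle of the polygon: its vertices lie in three
prescribed regions, so that each of its sides leaves a fixed proportion of the polygon behind. -/
structure IsCentral (A : Finset V) (s : ℕ) (p q r : V) : Prop where
  mem_fst : p ∈ A
  mem_snd : q ∈ A
  mem_thd : r ∈ A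
  oriented : sbtw p q r
  rank_fst : rank A p ∈ Set.Ioo s (6 * s)
  rank_snd : rank A q ∈ Set.Ioo (5 * s) (10 * s)
  rank_thd : rank A r ∉ Set.Icc (2 * s) (9 * s)

lemma isCentral_of_mem_cIco {e₁ e₂ e₃ : V} (hp : p ∈ A) (hq : q ∈ A) (hr : r ∈ A)
    (h : sbtw p q r) (he₁ : e₁ ∈ block A s (2 * s)) (he₂ : e₂ ∈ block A (5 * s) (6 * s))
    (he₃ : e₃ ∈ block A (9 * s) (10 * s)) (h₁ : e₁ ∈ cIco r p) (h₂ : e₂ ∈ cIco p q)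
    (h₃ : e₃ ∈ cIco q r) : IsCentral A s p q r := by
  have he : sbtw e₁ e₂ e₃ := sbtw_of_mem_block (by lia) (by lia) e₁ he₁ e₂ he₂ e₃ he₃
  have hp' := mem_cIoc_of_mem_cIco h h₁ h₂
  have hq' := mem_cIoc_of_mem_cIco h.cyclic_left h₂ h₃
  have hr' := mem_cIoc_of_mem_cIco h.cyclic_right h₃ h₁
  rw [mem_block] at he₁ he₂ he₃
  rw [← rank_mem_cIoc_iff hp he₁.1 he₂.1, mem_cIoc, sbtw_iff_lt] at hp'
  rw [← rank_mem_cIoc_iff hq he₂.1 he₃.1, mem_cIoc, sbtw_iff_lt] at hq'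
  rw [← rank_mem_cIoc_iff hr he₃.1 he₁.1, mem_cIoc, sbtw_iff_lt] at hr'
  refine ⟨hp, hq, hr, h, ⟨?_, ?_⟩, ⟨?_, ?_⟩, fun hrI => ?_⟩
  any_goals rw [Set.mem_Icc] at hrI
  all_goals lia

lemma card_arc_add_le_of_le_rank {a b : ℕ} {u v : V} (hu : u ∈ A) (hv : v ∈ A) (h : u ≠ v)
    (hb : b ≤ #A) (hab : s ≤ b - a)
    (hrank : ∀ i, a ≤ i → i < b → i ∈ cIco (rank A v) (rank A u)) :
    #(arc A u v) + s ≤ #A + 1 := by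
  have hlen : b - a ≤ arcLen A v u := (le_sideCount_block hb hv hu le_rfl le_rfl hrank).trans
    (sideCount_le_arcLen (block_subset A a b) hu h.symm)
  have := card_arc hu hv h
  have := arcLen_add_swap hu hv h
  lia

namespace IsCentral

variable (h : IsCentral A s p q r)
include h

lemma sbtw_rank : sbtw (rank A p) (rank A q) (rank A r) :=
  (sbtw_rank_iff h.mem_fst h.mem_snd h.mem_thd).2 h.oriented

lemma card_arc_add_le (hA : 12 * s ≤ #A) : #(arc A p q) + s ≤ #A + 1 ∧
    #(arc A q r) + s ≤ #A + 1 ∧ #(arc A r p) + s ≤ #A + 1 := by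
  obtain ⟨hp, hq, hr, hpqr, hpI, hqI, hrI⟩ := h
  have hrank := (sbtw_rank_iff hp hq hr).2 hpqr
  obtain ⟨hpq, hqr, hpr⟩ := sbtw_ne hpqr
  simp only [Set.mem_Ioo, Set.mem_Icc, sbtw_iff_lt] at hpI hqI hrI hrank
  refine ⟨card_arc_add_le_of_le_rank (a := 11 * s) (b := 12 * s) hp hq hpq hA (by lia) ?_,
    card_arc_add_le_of_le_rank (a := 3 * s) (b := 4 * s) hq hr hqr (by lia) (by lia) ?_,
    card_arc_add_le_of_le_rank (a := 7 * s) (b := 8 * s) hr hp hpr.symm (by lia) (by lia) ?_⟩ <;>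
  · intro i hai hib
    rw [mem_cIco, sbtw_iff_lt]
    lia

section MoveFst

variable (hp' : p' ∈ block A (3 * s) (4 * s))
include hp'

lemma sbtw_of_mem_block_fst : sbtw p' q r := by
  obtain ⟨hp'A, hp'₁, hp'₂⟩ := mem_block.1 hp'
  have hrank := h.sbtw_rank
  obtain ⟨-, hq, hr, -, hpI, hqI, hrI⟩ := h
  rw [← sbtw_rank_iff hp'A hq hr]
  simp only [Set.mem_Ioo, Set.mem_Icc, sbtw_iff_lt] at *
  lia

lemma le_sideCount_thd_fst (hA : 12 * s ≤ #A) : s ≤ sideCount (block A 0 (3 * s)) r p' := by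
  obtain ⟨hp'A, hp'₁, hp'₂⟩ := mem_block.1 hp'
  have hrI := h.rank_thd
  have := le_sideCount_block (a := 0) (b := 3 * s) (a' := 2 * s) (b' := 3 * s) (by lia) h.mem_thd
    hp'A (by lia) le_rfl fun i hai hib => by
      rw [mem_cIco, sbtw_iff_lt]; rw [Set.mem_Icc] at hrI; lia
  lia

lemma le_sideCount_fst_snd (hA : 12 * s ≤ #A) :
    s ≤ sideCount (block A (4 * s) (7 * s)) p' q := by
  obtain ⟨hp'A, -, hp'₂⟩ := mem_block.1 hp'
  have hqI := h.rank_snd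
  have := le_sideCount_block (a := 4 * s) (b := 7 * s) (a' := 4 * s) (b' := 5 * s) (by lia) hp'A
    h.mem_snd le_rfl (by lia) fun i hai hib => by
      rw [mem_cIco, sbtw_iff_lt]; rw [Set.mem_Ioo] at hqI; lia
  lia

end MoveFst

lemma le_sideCount_snd_thd (hA : 12 * s ≤ #A) (hq' : q' ∈ block A (7 * s) (8 * s)) :
    s ≤ sideCount (block A (8 * s) (11 * s)) q' r := by
  obtain ⟨hq'A, hq'₁, hq'₂⟩ := mem_block.1 hq'
  have hrI := h.rank_thd
  have := le_sideCount_block (a := 8 * s) (b := 11 * s) (a' := 8 * s) (b' := 9 * s) (by lia) hq'A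
    h.mem_thd le_rfl (by lia) fun i hai hib => by
      rw [mem_cIco, sbtw_iff_lt]; rw [Set.mem_Icc] at hrI; lia
  lia

lemma sbtw_of_mem_block_snd (hp' : p' ∈ block A (3 * s) (4 * s))
    (hq' : q' ∈ block A (7 * s) (8 * s)) : sbtw p' q' r := by
  obtain ⟨hp'A, hp'₁, hp'₂⟩ := mem_block.1 hp'
  obtain ⟨hq'A, hq'₁, hq'₂⟩ := mem_block.1 hq'
  have hrI := h.rank_thd
  rw [← sbtw_rank_iff hp'A hq'A h.mem_thd, sbtw_iff_lt]
  rw [Set.mem_Icc] at hrI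
  lia

end IsCentral

lemma sideCount_middle_blocks (hA : 12 * s ≤ #A) (hp' : p' ∈ block A (3 * s) (4 * s))
    (hq' : q' ∈ block A (7 * s) (8 * s)) : 3 * s ≤ sideCount (block A (4 * s) (7 * s)) p' q' := by
  obtain ⟨hp'A, -, hp'₂⟩ := mem_block.1 hp'
  obtain ⟨hq'A, hq'₁, -⟩ := mem_block.1 hq'
  have := le_sideCount_block (b := 7 * s) (by lia) hp'A hq'A le_rfl le_rfl
    fun i (hai : 4 * s ≤ i) hib => by rw [mem_cIco, sbtw_iff_lt]; lia
  lia

lemma sideCount_first_blocks (hA : 12 * s ≤ #A) (hp' : p' ∈ block A (3 * s) (4 * s))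
    (hr' : r' ∈ block A (11 * s) (12 * s)) : 3 * s ≤ sideCount (block A 0 (3 * s)) r' p' := by
  obtain ⟨hp'A, hp'₁, hp'₂⟩ := mem_block.1 hp'
  obtain ⟨hr'A, hr'₁, -⟩ := mem_block.1 hr'
  exact le_sideCount_block (a' := 0) (b' := 3 * s) (by lia) hr'A hp'A le_rfl le_rfl
    fun i _ hib => by rw [mem_cIco, sbtw_iff_lt]; lia

lemma sideCount_last_blocks (hA : 12 * s ≤ #A) (hq' : q' ∈ block A (7 * s) (8 * s))
    (hr' : r' ∈ block A (11 * s) (12 * s)) :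
    3 * s ≤ sideCount (block A (8 * s) (11 * s)) q' r' := by
  obtain ⟨hq'A, -, hq'₂⟩ := mem_block.1 hq'
  obtain ⟨hr'A, hr'₁, -⟩ := mem_block.1 hr'
  have := le_sideCount_block (b := 11 * s) (by lia) hq'A hr'A le_rfl le_rfl
    fun i (hai : 8 * s ≤ i) hib => by rw [mem_cIco, sbtw_iff_lt]; lia
  lia

end CentralTriangle

/-! ### Comparing the averages over central triangles -/

section Averaging

variable {α : Type*} {A : Finset α} {g g₁ g₂ g₃ : α → ℝ}

lemma abs_sub_sum_mul_le (hg : ∀ a, 0 ≤ g a) (hsum : ∑ a ∈ A, g a = 1) (c : ℝ) (k : α → ℝ) :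
    |c - ∑ a ∈ A, g a * k a| ≤ ∑ a ∈ A, g a * |c - k a| := by
  have hc : c - ∑ a ∈ A, g a * k a = ∑ a ∈ A, g a * (c - k a) := by
    simp only [mul_sub, sum_sub_distrib, ← sum_mul, hsum, one_mul]
  rw [hc]
  refine (abs_sum_le_sum_abs _ _).trans_eq (sum_congr rfl fun a _ => ?_)
  rw [abs_mul, abs_of_nonneg (hg a)]

variable (hg₁ : ∀ a, 0 ≤ g₁ a) (hg₂ : ∀ a, 0 ≤ g₂ a) (hg₃ : ∀ a, 0 ≤ g₃ a)
  (hsum₁ : ∑ a ∈ A, g₁ a = 1) (hsum₂ : ∑ a ∈ A, g₂ a = 1) (hsum₃ : ∑ a ∈ A, g₃ a = 1)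
  (h : α → α → α → ℝ)
include hg₁ hg₂ hg₃ hsum₁ hsum₂ hsum₃

lemma abs_sub_sum_triple_le (p q r : α) :
    |h p q r - ∑ p' ∈ A, g₁ p' * ∑ q' ∈ A, g₂ q' * ∑ r' ∈ A, g₃ r' * h p' q' r'| ≤
      ∑ p' ∈ A, g₁ p' * (|h p q r - h p' q r| + ∑ q' ∈ A, g₂ q' * (|h p' q r - h p' q' r| +
        ∑ r' ∈ A, g₃ r' * |h p' q' r - h p' q' r'|)) := by
  refine (abs_sub_sum_mul_le hg₁ hsum₁ _ _).trans
    (sum_le_sum fun p' _ => mul_le_mul_of_nonneg_left ?_ (hg₁ p'))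
  refine (abs_sub_le _ (h p' q r) _).trans (add_le_add le_rfl ?_)
  refine (abs_sub_sum_mul_le hg₂ hsum₂ _ _).trans
    (sum_le_sum fun q' _ => mul_le_mul_of_nonneg_left ?_ (hg₂ q'))
  exact (abs_sub_le _ (h p' q' r) _).trans
    (add_le_add le_rfl (abs_sub_sum_mul_le hg₃ hsum₃ _ _))

/-- Replace the vertices of a random triple one after the other by independent ones. -/
lemma sum_mul_abs_sub_sum_triple_le {W : α → α → α → ℝ} (hW : ∀ p q r, 0 ≤ W p q r) :
    ∑ p ∈ A, ∑ q ∈ A, ∑ r ∈ A, W p q r *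
        |h p q r - ∑ p' ∈ A, g₁ p' * ∑ q' ∈ A, g₂ q' * ∑ r' ∈ A, g₃ r' * h p' q' r'| ≤
      ∑ p ∈ A, ∑ q ∈ A, ∑ r ∈ A, ∑ p' ∈ A, W p q r * g₁ p' * |h p q r - h p' q r| +
      ∑ q ∈ A, ∑ r ∈ A, ∑ p' ∈ A, ∑ q' ∈ A,
        (∑ p ∈ A, W p q r) * g₁ p' * g₂ q' * |h p' q r - h p' q' r| +
      ∑ r ∈ A, ∑ p' ∈ A, ∑ q' ∈ A, ∑ r' ∈ A,
        (∑ q ∈ A, ∑ p ∈ A, W p q r) * g₁ p' * g₂ q' * g₃ r' * |h p' q' r - h p' q' r'| := by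
  set F := fun q r p' => ∑ q' ∈ A, g₁ p' * g₂ q' * |h p' q r - h p' q' r| with hF
  set G := fun r p' => ∑ q' ∈ A, ∑ r' ∈ A, g₁ p' * g₂ q' * g₃ r' * |h p' q' r - h p' q' r'|
    with hG
  calc _ ≤ ∑ p ∈ A, ∑ q ∈ A, ∑ r ∈ A, W p q r * ∑ p' ∈ A, g₁ p' * (|h p q r - h p' q r| +
          ∑ q' ∈ A, g₂ q' * (|h p' q r - h p' q' r| +
            ∑ r' ∈ A, g₃ r' * |h p' q' r - h p' q' r'|)) :=
        sum_le_sum fun p _ => sum_le_sum fun q _ => sum_le_sum fun r _ =>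
          mul_le_mul_of_nonneg_left
            (abs_sub_sum_triple_le hg₁ hg₂ hg₃ hsum₁ hsum₂ hsum₃ h p q r) (hW p q r)
    _ = ∑ p ∈ A, ∑ q ∈ A, ∑ r ∈ A, ∑ p' ∈ A, W p q r * g₁ p' * |h p q r - h p' q r| +
          ∑ p ∈ A, ∑ q ∈ A, ∑ r ∈ A, W p q r * ∑ p' ∈ A, F q r p' +
          ∑ p ∈ A, ∑ q ∈ A, ∑ r ∈ A, W p q r * ∑ p' ∈ A, G r p' := by
        simp only [hF, hG, mul_add, mul_sum, sum_add_distrib, mul_assoc, add_assoc]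
    _ = _ := by
        congr 1
        · congr 1
          rw [sum_comm]
          refine sum_congr rfl fun q _ => ?_
          rw [sum_comm]
          refine sum_congr rfl fun r _ => ?_
          rw [← sum_mul, mul_sum]
          simp only [hF, mul_sum, mul_assoc]
        · rw [sum_comm]
          simp only [sum_comm (s := A) (t := A) (f := fun p r => W p _ r * _)]
          rw [sum_comm]
          refine sum_congr rfl fun r _ => ?_
          simp only [hG, ← sum_mul]
          simp only [mul_sum, mul_assoc]

end Averaging

section InverseSquareRoots

lemma sum_inv_sqrt_le (N : ℕ) : ∑ k ∈ Icc 1 N, (√k : ℝ)⁻¹ ≤ 2 * √N := by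
  induction N with
  | zero => simp
  | succ n ih =>
    have hstep : (√(n + 1 : ℕ) : ℝ)⁻¹ ≤ 2 * √(n + 1 : ℕ) - 2 * √n := by
      have hpos : (0 : ℝ) < √(n + 1 : ℕ) := Real.sqrt_pos.2 (by positivity)
      have hsq := Real.sq_sqrt (Nat.cast_nonneg (α := ℝ) (n + 1))
      have hsq' := Real.sq_sqrt (Nat.cast_nonneg (α := ℝ) n)
      rw [inv_le_iff_one_le_mul₀ hpos]
      push_cast at hsq ⊢
      nlinarith [sq_nonneg (√(n + 1 : ℝ) - √n)]
    rw [sum_Icc_succ_top (by lia)]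
    linarith

lemma sum_inv_sqrt_comp_le {α : Type*} {B : Finset α} {ℓ : α → ℕ} {N : ℕ}
    (hinj : Set.InjOn ℓ B) (hℓ : ∀ a ∈ B, 1 ≤ ℓ a ∧ ℓ a ≤ N) :
    ∑ a ∈ B, (√(ℓ a) : ℝ)⁻¹ ≤ 2 * √N := by
  refine le_trans ?_ (sum_inv_sqrt_le N)
  rw [← sum_image (f := fun k : ℕ => (√k : ℝ)⁻¹) hinj]
  exact sum_le_sum_of_subset_of_nonneg
    (image_subset_iff.2 fun a ha => mem_Icc.2 (hℓ a ha)) fun _ _ _ => by positivity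

lemma inv_sqrt_mul_inv_sqrt_le {a b : ℝ} (ha : 0 < a) (hb : 0 < b) :
    (√a)⁻¹ * (√b)⁻¹ ≤ ((√a)⁻¹ + (√b)⁻¹) / √(a + b) := by
  have ha' := Real.sqrt_pos.2 ha
  have hb' := Real.sqrt_pos.2 hb
  have hadd : √(a + b) ≤ √a + √b := Real.sqrt_le_iff.2 ⟨by positivity, by
    nlinarith [Real.sq_sqrt ha.le, Real.sq_sqrt hb.le, mul_pos ha' hb']⟩
  rw [le_div_iff₀ (Real.sqrt_pos.2 (add_pos ha hb))]
  calc (√a)⁻¹ * (√b)⁻¹ * √(a + b) ≤ (√a)⁻¹ * (√b)⁻¹ * (√a + √b) :=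
        mul_le_mul_of_nonneg_left hadd (by positivity)
    _ = (√a)⁻¹ + (√b)⁻¹ := by
        field_simp
        ring

variable {V : Type*} [LinearOrder V] {A : Finset V} {q r : V}

lemma sum_inv_sqrt_arcLen_mul_le (hr : r ∈ A) (hq : q ∈ A) (hrq : r ≠ q) :
    ∑ p ∈ openArc A r q, (√(arcLen A r p) : ℝ)⁻¹ * (√(arcLen A p q))⁻¹ ≤ 4 := by
  have hlen : ∀ p ∈ openArc A r q, p ∈ A ∧ p ≠ r ∧ p ≠ q ∧ 1 ≤ arcLen A r p ∧ 1 ≤ arcLen A p q ∧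
      arcLen A r p + arcLen A p q = arcLen A r q := fun p hp => by
    obtain ⟨hpA, hs⟩ := mem_openArc.1 hp
    obtain ⟨hne, hne', -⟩ := sbtw_ne hs
    exact ⟨hpA, hne.symm, hne', arcLen_pos hr hpA hne, arcLen_pos hpA hq hne',
      arcLen_add hr hpA hq hs⟩
  have hpos : (0 : ℝ) < √(arcLen A r q) :=
    Real.sqrt_pos.2 (Nat.cast_pos.2 (arcLen_pos hr hq hrq))
  have hleft : ∑ p ∈ openArc A r q, (√(arcLen A r p) : ℝ)⁻¹ ≤ 2 * √(arcLen A r q) :=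
    sum_inv_sqrt_comp_le (fun p hp p' hp' =>
      arcLen_left_injOn hr ⟨(hlen p hp).1, (hlen p hp).2.1⟩ ⟨(hlen p' hp').1, (hlen p' hp').2.1⟩)
      fun p hp => by have := hlen p hp; lia
  have hright : ∑ p ∈ openArc A r q, (√(arcLen A p q) : ℝ)⁻¹ ≤ 2 * √(arcLen A r q) :=
    sum_inv_sqrt_comp_le (fun p hp p' hp' => arcLen_right_injOn hq
      ⟨(hlen p hp).1, (hlen p hp).2.2.1⟩ ⟨(hlen p' hp').1, (hlen p' hp').2.2.1⟩)
      fun p hp => by have := hlen p hp; lia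
  calc _ ≤ ∑ p ∈ openArc A r q, ((√(arcLen A r p) : ℝ)⁻¹ + (√(arcLen A p q))⁻¹) /
          √(arcLen A r q) := sum_le_sum fun p hp => by
        obtain ⟨-, -, -, h₁, h₂, hadd⟩ := hlen p hp
        rw [← hadd, Nat.cast_add]
        exact inv_sqrt_mul_inv_sqrt_le (Nat.cast_pos.2 h₁) (Nat.cast_pos.2 h₂)
    _ ≤ 4 := by
        rw [← sum_div, sum_add_distrib, div_le_iff₀ hpos]
        linarith

end InverseSquareRoots

section CentralWeights

variable {V : Type*} [LinearOrder V] {A : Finset V} {s : ℕ} {p p' q q' r r' : V}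

/-- The weight of a triangle as the median of three sides from short blocks; it is supported on the
central triangles. -/
noncomputable def narrowWeight (A : Finset V) (s : ℕ) : V → V → V → ℝ :=
  medianWeight (block A s (2 * s)) (block A (5 * s) (6 * s)) (block A (9 * s) (10 * s))

/-- The weight of a triangle as the median of three sides from long blocks; it remains large when
the vertices of a central triangle are moved to the gaps between these blocks. -/
noncomputable def wideWeight (A : Finset V) (s : ℕ) : V → V → V → ℝ :=
  medianWeight (block A 0 (3 * s)) (block A (4 * s) (7 * s)) (block A (8 * s) (11 * s))

lemma narrowWeight_eq (hA : 12 * s ≤ #A) (h : sbtw p q r) :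
    narrowWeight A s p q r = sideCount (block A s (2 * s)) r p *
      sideCount (block A (5 * s) (6 * s)) p q * sideCount (block A (9 * s) (10 * s)) q r /
        (s : ℝ) ^ 3 := by
  rw [narrowWeight, medianWeight, if_pos h, card_block (by lia), card_block (by lia),
    card_block (by lia), show 2 * s - s = s by lia, show 6 * s - 5 * s = s by lia,
    show 10 * s - 9 * s = s by lia]
  ring

lemma wideWeight_eq (hA : 12 * s ≤ #A) (h : sbtw p q r) :
    wideWeight A s p q r = sideCount (block A 0 (3 * s)) r p *
      sideCount (block A (4 * s) (7 * s)) p q * sideCount (block A (8 * s) (11 * s)) q r /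
        (27 * (s : ℝ) ^ 3) := by
  rw [wideWeight, medianWeight, if_pos h, card_block (by lia), card_block (by lia),
    card_block (by lia), show 7 * s - 4 * s = 3 * s by lia, show 11 * s - 8 * s = 3 * s by lia,
    Nat.sub_zero]
  push_cast
  ring

lemma block_nonempty {a b : ℕ} (hab : a < b) (hb : b ≤ #A) : (block A a b).Nonempty := by
  rw [← card_pos, card_block hb]
  lia

lemma isTriangleWeight_narrowWeight (hs : 0 < s) (hA : 12 * s ≤ #A) :
    IsTriangleWeight A (narrowWeight A s) :=
  isTriangleWeight_medianWeight (block_subset ..) (block_subset ..) (block_subset ..)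
    (block_nonempty (by lia) (by lia)) (block_nonempty (by lia) (by lia))
    (block_nonempty (by lia) (by lia)) (sbtw_of_mem_block (by lia) (by lia))

lemma isTriangleWeight_wideWeight (hs : 0 < s) (hA : 12 * s ≤ #A) :
    IsTriangleWeight A (wideWeight A s) :=
  isTriangleWeight_medianWeight (block_subset ..) (block_subset ..) (block_subset ..)
    (block_nonempty (by lia) (by lia)) (block_nonempty (by lia) (by lia))
    (block_nonempty (by lia) (by lia)) (sbtw_of_mem_block (by lia) (by lia))

lemma isCentral_of_narrowWeight_ne_zero (hp : p ∈ A) (hq : q ∈ A) (hr : r ∈ A)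
    (h : narrowWeight A s p q r ≠ 0) : IsCentral A s p q r := by
  obtain ⟨hs, hne⟩ := ite_ne_right_iff.1 h
  have hmul := (div_ne_zero_iff.1 hne).1
  simp only [mul_ne_zero_iff, Nat.cast_ne_zero] at hmul
  obtain ⟨⟨h₁, h₂⟩, h₃⟩ := hmul
  obtain ⟨e₁, he₁, h₁⟩ := exists_mem_of_sideCount_ne_zero h₁
  obtain ⟨e₂, he₂, h₂⟩ := exists_mem_of_sideCount_ne_zero h₂
  obtain ⟨e₃, he₃, h₃⟩ := exists_mem_of_sideCount_ne_zero h₃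
  exact isCentral_of_mem_cIco hp hq hr hs he₁ he₂ he₃ h₁ h₂ h₃

lemma medianWeight_le_one (E₁ E₂ E₃ : Finset V) (p q r : V) :
    medianWeight E₁ E₂ E₃ p q r ≤ 1 := by
  rw [medianWeight]
  split_ifs
  · refine div_le_one_of_le₀ ?_ (by positivity)
    gcongr <;> exact sideCount_le_card ..
  · exact zero_le_one

lemma narrowWeight_le (hs : 0 < s) (hA : 12 * s ≤ #A) (h : sbtw p q r) :
    narrowWeight A s p q r ≤ sideCount (block A (9 * s) (10 * s)) q r / s := by
  have h₁ := sideCount_le_card (block A s (2 * s)) r p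
  have h₂ := sideCount_le_card (block A (5 * s) (6 * s)) p q
  rw [card_block (by lia)] at h₁ h₂
  replace h₁ := h₁.trans (show 2 * s - s ≤ s by lia)
  replace h₂ := h₂.trans (show 6 * s - 5 * s ≤ s by lia)
  have : (0 : ℝ) < s := Nat.cast_pos.2 hs
  rw [narrowWeight_eq hA h]
  calc _ ≤ (s : ℝ) * s * sideCount (block A (9 * s) (10 * s)) q r / s ^ 3 := by gcongr
    _ = _ := by field_simp

lemma le_wideWeight {x y z : ℕ} (hA : 12 * s ≤ #A) (h : sbtw p q r)
    (hx : x ≤ sideCount (block A 0 (3 * s)) r p)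
    (hy : y ≤ sideCount (block A (4 * s) (7 * s)) p q)
    (hz : z ≤ sideCount (block A (8 * s) (11 * s)) q r) :
    x * y * z / (27 * (s : ℝ) ^ 3) ≤ wideWeight A s p q r := by
  rw [wideWeight_eq hA h]
  gcongr

lemma IsCentral.sideCount_le (h : IsCentral A s p q r) (hs : 0 < s) (hA : 12 * s ≤ #A)
    (hp' : p' ∈ block A (3 * s) (4 * s)) :
    sideCount (block A (9 * s) (10 * s)) q r ≤ 27 * s * wideWeight A s p' q r := by
  have : (0 : ℝ) < s := Nat.cast_pos.2 hs
  have hle := le_wideWeight hA (h.sbtw_of_mem_block_fst hp') (h.le_sideCount_thd_fst hp' hA)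
    (h.le_sideCount_fst_snd hp' hA)
    (sideCount_mono (block_subset_block (a := 8 * s) (b := 11 * s) (a' := 9 * s) (b' := 10 * s)
      (by lia) (by lia)) q r)
  calc (sideCount (block A (9 * s) (10 * s)) q r : ℝ)
      = 27 * s * (s * s * sideCount (block A (9 * s) (10 * s)) q r / (27 * s ^ 3)) := by
        field_simp
    _ ≤ _ := by gcongr

lemma IsCentral.one_le_nine_mul_wideWeight (h : IsCentral A s p q r) (hs : 0 < s)
    (hA : 12 * s ≤ #A) (hp' : p' ∈ block A (3 * s) (4 * s))
    (hq' : q' ∈ block A (7 * s) (8 * s)) : 1 ≤ 9 * wideWeight A s p' q' r := by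
  have : (0 : ℝ) < s := Nat.cast_pos.2 hs
  have hle := le_wideWeight hA (h.sbtw_of_mem_block_snd hp' hq') (h.le_sideCount_thd_fst hp' hA)
    (sideCount_middle_blocks hA hp' hq') (h.le_sideCount_snd_thd hA hq')
  calc (1 : ℝ) = 9 * (s * (3 * s : ℕ) * s / (27 * s ^ 3)) := by
        push_cast
        field_simp
        norm_num
    _ ≤ _ := by gcongr

lemma one_le_wideWeight (hs : 0 < s) (hA : 12 * s ≤ #A) (hp' : p' ∈ block A (3 * s) (4 * s))
    (hq' : q' ∈ block A (7 * s) (8 * s)) (hr' : r' ∈ block A (11 * s) (12 * s)) :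
    1 ≤ wideWeight A s p' q' r' := by
  have : (0 : ℝ) < s := Nat.cast_pos.2 hs
  have hle := le_wideWeight hA (sbtw_of_mem_block (by lia) (by lia) _ hp' _ hq' _ hr')
    (sideCount_first_blocks hA hp' hr') (sideCount_middle_blocks hA hp' hq')
    (sideCount_last_blocks hA hq' hr')
  calc (1 : ℝ) = (3 * s : ℕ) * (3 * s : ℕ) * (3 * s : ℕ) / (27 * s ^ 3) := by
        push_cast
        field_simp
        norm_num
    _ ≤ _ := hle

end CentralWeights

section TriangleMass

variable {V : Type*} [LinearOrder V] {A : Finset V} {s : ℕ} {p p' q q' r : V}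

/-- The number of triangulations that contain the triangle `pqr`, weighted by `narrowWeight`. -/
noncomputable def triMass (A : Finset V) (s : ℕ) (p q r : V) : ℝ :=
  narrowWeight A s p q r * #(withTriangle A p q r)

lemma triMass_nonneg (hs : 0 < s) (hA : 12 * s ≤ #A) (p q r : V) : 0 ≤ triMass A s p q r :=
  mul_nonneg ((isTriangleWeight_narrowWeight hs hA).nonneg p q r) (Nat.cast_nonneg _)

lemma isCentral_of_triMass_ne_zero (hp : p ∈ A) (hq : q ∈ A) (hr : r ∈ A)
    (h : triMass A s p q r ≠ 0) : IsCentral A s p q r :=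
  isCentral_of_narrowWeight_ne_zero hp hq hr (left_ne_zero_of_mul h)

lemma card_withTriangle_mul_pow32_le (hp : p ∈ A) (hq : q ∈ A) (hr : r ∈ A) (hp' : p' ∈ A)
    (h : sbtw p q r) (h' : sbtw p' q r) :
    #(withTriangle A p q r) * (pow32 (arcLen A r p) * pow32 (arcLen A p q)) ≤
      4 * #A ^ 3 * #(withTriangle A p' q r) := by
  obtain ⟨hpq, -, hpr⟩ := sbtw_ne h
  obtain ⟨hpq', -, hpr'⟩ := sbtw_ne h'
  have hcount := triCount_mul_mul_pow32_le (arcLen_pos hr hp hpr.symm) (arcLen_pos hp hq hpq)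
    (arcLen_pos hr hp' hpr'.symm) (arcLen_pos hp' hq hpq')
    (by rw [arcLen_add hr hp hq h.cyclic_right, arcLen_add hr hp' hq h'.cyclic_right])
  have hpow : pow32 (arcLen A r p') * pow32 (arcLen A p' q) ≤ (#A : ℝ) ^ 3 := by
    rw [← pow32_sq, sq]
    exact mul_le_mul (pow32_mono (arcLen_le_card A r p')) (pow32_mono (arcLen_le_card A p' q))
      (pow32_nonneg _) (pow32_nonneg _)
  have := triCount_pos (arcLen A r p')
  have := triCount_pos (arcLen A p' q)
  rw [card_withTriangle hp hq hr h, card_withTriangle hp' hq hr h']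
  calc _ = triCount (arcLen A r p) * triCount (arcLen A p q) *
          (pow32 (arcLen A r p) * pow32 (arcLen A p q)) * triCount (arcLen A q r) := by ring
    _ ≤ 4 * (triCount (arcLen A r p') * triCount (arcLen A p' q)) * #A ^ 3 *
          triCount (arcLen A q r) := by
        refine mul_le_mul_of_nonneg_right (hcount.trans ?_) (triCount_pos _).le
        gcongr
    _ = _ := by ring

lemma triMass_le (hs : 0 < s) (hA : 12 * s ≤ #A) (hA' : #A ≤ 24 * s) (hp : p ∈ A) (hq : q ∈ A)
    (hr : r ∈ A) (hp' : p' ∈ A) (h : sbtw p q r) (h' : sbtw p' q r) :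
    triMass A s p q r ≤
      4 * 24 ^ 3 * sideCount (block A (9 * s) (10 * s)) q r * #(withTriangle A p' q r) *
        ((√(arcLen A r p))⁻¹ * (√(arcLen A p q))⁻¹) := by
  obtain ⟨hpq, -, hpr⟩ := sbtw_ne h
  have : (0 : ℝ) < s := Nat.cast_pos.2 hs
  have hrp₀ : (0 : ℝ) < √(arcLen A r p) :=
    Real.sqrt_pos.2 (Nat.cast_pos.2 (arcLen_pos hr hp hpr.symm))
  have hpq₀ : (0 : ℝ) < √(arcLen A p q) := Real.sqrt_pos.2 (Nat.cast_pos.2 (arcLen_pos hp hq hpq))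
  have hcount := card_withTriangle_mul_pow32_le hp hq hr hp' h h'
  have hcube : (#A : ℝ) ^ 3 ≤ 24 ^ 3 * s ^ 3 := by
    rw [← mul_pow]
    gcongr
    exact_mod_cast hA'
  have hrp := sideCount_le_arcLen (block_subset A s (2 * s)) hp hpr.symm
  have hpq := sideCount_le_arcLen (block_subset A (5 * s) (6 * s)) hq hpq
  rw [pow32, pow32] at hcount
  rw [triMass, narrowWeight_eq hA h]
  set k := (sideCount (block A (9 * s) (10 * s)) q r : ℝ)
  set x := √(arcLen A r p : ℝ)
  set y := √(arcLen A p q : ℝ)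
  calc _ ≤ (arcLen A r p : ℝ) * arcLen A p q * k / s ^ 3 * #(withTriangle A p q r) := by gcongr
    _ = k / s ^ 3 * (x⁻¹ * y⁻¹) *
          (#(withTriangle A p q r) * (arcLen A r p * x * (arcLen A p q * y))) := by
        field_simp
    _ ≤ k / s ^ 3 * (x⁻¹ * y⁻¹) * (4 * (24 ^ 3 * s ^ 3) * #(withTriangle A p' q r)) := by
        refine mul_le_mul_of_nonneg_left (hcount.trans ?_) (by positivity)
        gcongr
    _ = _ := by field_simp

lemma sum_triMass_le (hs : 0 < s) (hA : 12 * s ≤ #A) (hA' : #A ≤ 24 * s) (hq : q ∈ A)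
    (hr : r ∈ A) (hp' : p' ∈ A) (h' : sbtw p' q r) :
    ∑ p ∈ A, triMass A s p q r ≤
      16 * 24 ^ 3 * sideCount (block A (9 * s) (10 * s)) q r * #(withTriangle A p' q r) := by
  have hsupp : ∑ p ∈ openArc A r q, triMass A s p q r = ∑ p ∈ A, triMass A s p q r := by
    refine sum_subset (filter_subset _ _) fun p hp hpn => ?_
    by_contra hne
    have hc := isCentral_of_triMass_ne_zero hp hq hr hne
    exact hpn (mem_openArc.2 ⟨hp, hc.oriented.cyclic_right⟩)
  rw [← hsupp]
  calc _ ≤ ∑ p ∈ openArc A r q, 4 * 24 ^ 3 * sideCount (block A (9 * s) (10 * s)) q r *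
          #(withTriangle A p' q r) * ((√(arcLen A r p) : ℝ)⁻¹ * (√(arcLen A p q))⁻¹) :=
        sum_le_sum fun p hp => triMass_le hs hA hA' (mem_openArc.1 hp).1 hq hr hp'
          (mem_openArc.1 hp).2.cyclic_left h'
    _ ≤ 4 * 24 ^ 3 * sideCount (block A (9 * s) (10 * s)) q r * #(withTriangle A p' q r) * 4 := by
        rw [← mul_sum]
        gcongr
        exact sum_inv_sqrt_arcLen_mul_le hr hq (sbtw_ne h').2.1.symm
    _ = _ := by ring

lemma sum_triMass_le_mul_wideWeight (hs : 0 < s) (hA : 12 * s ≤ #A) (hA' : #A ≤ 24 * s)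
    (h : IsCentral A s p q r) (hp' : p' ∈ block A (3 * s) (4 * s)) :
    ∑ a ∈ A, triMass A s a q r ≤
      27 * 16 * 24 ^ 3 * s * wideWeight A s p' q r * #(withTriangle A p' q r) := by
  refine (sum_triMass_le hs hA hA' h.mem_snd h.mem_thd (mem_block.1 hp').1
    (h.sbtw_of_mem_block_fst hp')).trans ?_
  calc _ ≤ 16 * 24 ^ 3 * (27 * s * wideWeight A s p' q r) * #(withTriangle A p' q r) := by
        gcongr
        exact h.sideCount_le hs hA hp'
    _ = _ := by ring

lemma sum_triMass_le_inv_sqrt (hs : 0 < s) (hA : 12 * s ≤ #A) (hA' : #A ≤ 24 * s)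
    (h : IsCentral A s p q r) (hp' : p' ∈ block A (3 * s) (4 * s)) (hq' : q' ∈ A)
    (h' : sbtw p' q' r) :
    ∑ a ∈ A, triMass A s a q r ≤
      64 * 24 ^ 6 * s ^ 3 * (pow32 s)⁻¹ * #(withTriangle A p' q' r) * (√(arcLen A q r))⁻¹ := by
  have hpqr := h.sbtw_of_mem_block_fst hp'
  obtain ⟨hpq, hqr, -⟩ := sbtw_ne hpqr
  have hp'A := (mem_block.1 hp').1
  have hroot : (0 : ℝ) < √(arcLen A q r) :=
    Real.sqrt_pos.2 (Nat.cast_pos.2 (arcLen_pos h.mem_snd h.mem_thd hqr))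
  have hpow := pow32_pos hs
  have hside := sideCount_le_arcLen (block_subset A (9 * s) (10 * s)) h.mem_thd hqr
  have hlong : pow32 s ≤ pow32 (arcLen A p' q) := pow32_mono <|
    (h.le_sideCount_fst_snd hp' hA).trans (sideCount_le_arcLen (block_subset ..) h.mem_snd hpq)
  have hcount := card_withTriangle_mul_pow32_le h.mem_snd h.mem_thd hp'A hq' hpqr.cyclic_left
    h'.cyclic_left
  have hcube : (#A : ℝ) ^ 3 ≤ 24 ^ 3 * s ^ 3 := by
    rw [← mul_pow]
    gcongr
    exact_mod_cast hA'
  rw [← withTriangle_rotate A p' q r, ← withTriangle_rotate A p' q' r] at hcount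
  refine (sum_triMass_le hs hA hA' h.mem_snd h.mem_thd hp'A hpqr).trans ?_
  set y := √(arcLen A q r : ℝ)
  calc _ ≤ 16 * 24 ^ 3 * (arcLen A q r : ℝ) * #(withTriangle A p' q r) := by gcongr
    _ = 16 * 24 ^ 3 * ((pow32 s)⁻¹ * y⁻¹) *
          (#(withTriangle A p' q r) * (pow32 s * pow32 (arcLen A q r))) := by
        rw [show pow32 (arcLen A q r) = arcLen A q r * y from rfl]
        field_simp
    _ ≤ 16 * 24 ^ 3 * ((pow32 s)⁻¹ * y⁻¹) *
          (4 * (24 ^ 3 * s ^ 3) * #(withTriangle A p' q' r)) := by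
        have hshort := mul_le_mul_of_nonneg_right hlong (pow32_nonneg (arcLen A q r))
        refine mul_le_mul_of_nonneg_left ?_ (by positivity)
        refine (mul_le_mul_of_nonneg_left hshort (Nat.cast_nonneg _)).trans (hcount.trans ?_)
        gcongr
    _ = _ := by ring

lemma sum_sum_triMass_le (hs : 0 < s) (hA : 12 * s ≤ #A) (hA' : #A ≤ 24 * s) (hr : r ∈ A)
    (hp' : p' ∈ block A (3 * s) (4 * s)) (hq' : q' ∈ A) (h' : sbtw p' q' r) :
    ∑ q ∈ A, ∑ p ∈ A, triMass A s p q r ≤ 640 * 24 ^ 6 * s ^ 2 * #(withTriangle A p' q' r) := by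
  have hsupp : ∑ q ∈ A with q ≠ r, ∑ p ∈ A, triMass A s p q r =
      ∑ q ∈ A, ∑ p ∈ A, triMass A s p q r := by
    refine sum_filter_of_ne fun q hq hne => ?_
    obtain ⟨p, hp, hne⟩ := exists_ne_zero_of_sum_ne_zero hne
    exact (sbtw_ne (isCentral_of_triMass_ne_zero hp hq hr hne).oriented).2.1
  have hterm (q : V) (hq : q ∈ A) : ∑ p ∈ A, triMass A s p q r ≤
      64 * 24 ^ 6 * s ^ 3 * (pow32 s)⁻¹ * #(withTriangle A p' q' r) * (√(arcLen A q r))⁻¹ := by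
    by_cases hzero : ∑ p ∈ A, triMass A s p q r = 0
    · have := pow32_nonneg s
      rw [hzero]
      positivity
    · obtain ⟨p, hp, hne⟩ := exists_ne_zero_of_sum_ne_zero hzero
      exact sum_triMass_le_inv_sqrt hs hA hA' (isCentral_of_triMass_ne_zero hp hq hr hne) hp' hq' h'
  have hroots : ∑ q ∈ A with q ≠ r, (√(arcLen A q r) : ℝ)⁻¹ ≤ 2 * √(#A) := by
    refine sum_inv_sqrt_comp_le ((arcLen_right_injOn hr).mono fun q hq => mem_filter.1 hq)
      fun q hq => ⟨?_, arcLen_le_card ..⟩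
    exact arcLen_pos (mem_filter.1 hq).1 hr (mem_filter.1 hq).2
  have hsqrt : √(#A) ≤ 5 * √s := by
    rw [Real.sqrt_le_left (by positivity), mul_pow, Real.sq_sqrt s.cast_nonneg]
    exact_mod_cast hA'.trans (by lia)
  have hpow := pow32_pos hs
  have : 0 < √(s : ℝ) := Real.sqrt_pos.2 (Nat.cast_pos.2 hs)
  rw [← hsupp]
  calc _ ≤ ∑ q ∈ A with q ≠ r, 64 * 24 ^ 6 * s ^ 3 * (pow32 s)⁻¹ * #(withTriangle A p' q' r) *
          (√(arcLen A q r) : ℝ)⁻¹ := sum_le_sum fun q hq => hterm q (mem_filter.1 hq).1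
    _ ≤ 64 * 24 ^ 6 * s ^ 3 * (pow32 s)⁻¹ * #(withTriangle A p' q' r) * (2 * (5 * √s)) := by
        rw [← mul_sum]
        gcongr
        exact hroots.trans (by gcongr)
    _ = _ := by
        rw [pow32]
        field_simp
        ring

end TriangleMass

section UniformWeight

variable {α : Type*} [DecidableEq α] {A B : Finset α} {a : α}

/-- The density of the uniform distribution on `B`. -/
noncomputable def uniformWeight (B : Finset α) (a : α) : ℝ := if a ∈ B then (#B : ℝ)⁻¹ else 0

lemma uniformWeight_nonneg (B : Finset α) (a : α) : 0 ≤ uniformWeight B a := by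
  unfold uniformWeight
  split_ifs <;> positivity

lemma uniformWeight_of_mem (h : a ∈ B) : uniformWeight B a = (#B : ℝ)⁻¹ := if_pos h

lemma mem_of_uniformWeight_ne_zero (h : uniformWeight B a ≠ 0) : a ∈ B :=
  (ite_ne_right_iff.1 h).1

lemma sum_uniformWeight (hBA : B ⊆ A) (hB : B.Nonempty) : ∑ a ∈ A, uniformWeight B a = 1 := by
  unfold uniformWeight
  rw [← sum_filter, filter_mem_eq_inter, inter_eq_right.2 hBA, sum_const, nsmul_eq_mul,
    mul_inv_cancel₀ (Nat.cast_ne_zero.2 hB.card_ne_zero)]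

end UniformWeight

section CentralTransport

variable {V : Type*} [LinearOrder V] {A : Finset V} {s : ℕ}

lemma sum_uniformWeight_block {a b : ℕ} (hab : a < b) (hb : b ≤ #A) :
    ∑ v ∈ A, uniformWeight (block A a b) v = 1 :=
  sum_uniformWeight (block_subset ..) (block_nonempty hab hb)

lemma uniformWeight_block {i : ℕ} {v : V} (hA : (i + 1) * s ≤ #A)
    (hv : v ∈ block A (i * s) ((i + 1) * s)) :
    uniformWeight (block A (i * s) ((i + 1) * s)) v = (s : ℝ)⁻¹ := by
  rw [uniformWeight_of_mem hv, card_block hA, ← Nat.sub_mul, Nat.add_sub_cancel_left, one_mul]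

variable (hs : 0 < s) (hA : 12 * s ≤ #A)
include hs hA

lemma sum_triMass_mul_abs_triAvg_fst_sub_le (f : Finset (Sym2 V) → ℝ) :
    ∑ p ∈ A, ∑ q ∈ A, ∑ r ∈ A, ∑ p' ∈ A, triMass A s p q r *
        uniformWeight (block A (3 * s) (4 * s)) p' * |triAvg A f p q r - triAvg A f p' q r| ≤
      96 * (27 / s) * pow32 #A * energy (triangulations A) f := by
  have : (0 : ℝ) < s := Nat.cast_pos.2 hs
  refine sum_mul_abs_triAvg_sub_le (isTriangleWeight_narrowWeight hs hA)
    (isTriangleWeight_wideWeight hs hA) (by positivity)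
    (fun p q r p' => mul_nonneg (triMass_nonneg hs hA p q r) (uniformWeight_nonneg _ p'))
    (fun p hp q hq r hr p' _ hne => ?_) f
  have hc := isCentral_of_triMass_ne_zero hp hq hr (left_ne_zero_of_mul hne)
  have hp' := mem_of_uniformWeight_ne_zero (right_ne_zero_of_mul hne)
  have hnarrow := (isTriangleWeight_narrowWeight hs hA).nonneg p q r
  have hwide : narrowWeight A s p q r ≤ 27 * wideWeight A s p' q r :=
    (narrowWeight_le hs hA hc.oriented).trans <|
      (div_le_iff₀ ‹_›).2 ((hc.sideCount_le hs hA hp').trans_eq (by ring))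
  rw [uniformWeight_block (i := 3) (by lia) hp', triMass]
  refine ⟨hc.oriented, hc.sbtw_of_mem_block_fst hp', ?_, ?_⟩
  · calc _ ≤ 27 * (narrowWeight A s p q r * #(withTriangle A p q r) * (s : ℝ)⁻¹) :=
          le_mul_of_one_le_left (by positivity) (by norm_num)
      _ = _ := by ring
  · calc _ ≤ 27 * wideWeight A s p' q r * #(withTriangle A p q r) * (s : ℝ)⁻¹ := by gcongr
      _ = _ := by ring

lemma sum_triMass_mul_abs_triAvg_snd_sub_le (hA' : #A ≤ 24 * s) (f : Finset (Sym2 V) → ℝ) :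
    ∑ q ∈ A, ∑ r ∈ A, ∑ p' ∈ A, ∑ q' ∈ A, (∑ p ∈ A, triMass A s p q r) *
        uniformWeight (block A (3 * s) (4 * s)) p' * uniformWeight (block A (7 * s) (8 * s)) q' *
        |triAvg A f p' q r - triAvg A f p' q' r| ≤
      96 * (9 * 27 * 16 * 24 ^ 3 / s) * pow32 #A * energy (triangulations A) f := by
  have : (0 : ℝ) < s := Nat.cast_pos.2 hs
  have hκ := (isTriangleWeight_wideWeight hs hA).rotate
  have hmove := sum_mul_abs_triAvg_sub_le hκ hκ (K := 9 * 27 * 16 * 24 ^ 3 / s) (by positivity)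
    (w := fun q r p' q' => (∑ p ∈ A, triMass A s p q r) *
      uniformWeight (block A (3 * s) (4 * s)) p' * uniformWeight (block A (7 * s) (8 * s)) q')
    (fun q r p' q' => mul_nonneg (mul_nonneg (sum_nonneg fun p _ => triMass_nonneg hs hA p q r)
      (uniformWeight_nonneg _ p')) (uniformWeight_nonneg _ q'))
    (fun q hq r hr p' _ q' _ hne => ?_) f
  · refine le_of_eq_of_le (sum_congr rfl fun q _ => sum_congr rfl fun r _ =>
      sum_congr rfl fun p' _ => sum_congr rfl fun q' _ => ?_) hmove
    rw [triAvg_rotate A f p' q r, triAvg_rotate A f p' q' r]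
  have hne' := left_ne_zero_of_mul hne
  obtain ⟨p, hp, hpne⟩ := exists_ne_zero_of_sum_ne_zero (left_ne_zero_of_mul hne')
  have hc := isCentral_of_triMass_ne_zero hp hq hr hpne
  have hp' := mem_of_uniformWeight_ne_zero (right_ne_zero_of_mul hne')
  have hq' := mem_of_uniformWeight_ne_zero (right_ne_zero_of_mul hne)
  have hmass := sum_triMass_le_mul_wideWeight hs hA hA' hc hp'
  have hwide := (isTriangleWeight_wideWeight hs hA).nonneg p' q r
  have hwide' : wideWeight A s p' q r ≤ 9 * wideWeight A s p' q' r :=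
    (medianWeight_le_one ..).trans (hc.one_le_nine_mul_wideWeight hs hA hp' hq')
  have hweight : (∑ p ∈ A, triMass A s p q r) * (s : ℝ)⁻¹ * (s : ℝ)⁻¹ ≤
      27 * 16 * 24 ^ 3 / s * wideWeight A s p' q r * #(withTriangle A p' q r) := by
    calc _ ≤ 27 * 16 * 24 ^ 3 * s * wideWeight A s p' q r * #(withTriangle A p' q r) *
          (s : ℝ)⁻¹ * (s : ℝ)⁻¹ := by gcongr
      _ = _ := by field_simp
  rw [uniformWeight_block (i := 3) (by lia) hp', uniformWeight_block (i := 7) (by lia) hq',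
    ← withTriangle_rotate A p' q r]
  refine ⟨(hc.sbtw_of_mem_block_fst hp').cyclic_left,
    (hc.sbtw_of_mem_block_snd hp' hq').cyclic_left, hweight.trans ?_, hweight.trans ?_⟩
  · calc _ ≤ 9 * (27 * 16 * 24 ^ 3 / s * wideWeight A s p' q r * #(withTriangle A p' q r)) :=
          le_mul_of_one_le_left (by positivity) (by norm_num)
      _ = _ := by ring
  · calc _ ≤ 27 * 16 * 24 ^ 3 / s * (9 * wideWeight A s p' q' r) * #(withTriangle A p' q r) := by
          gcongr
      _ = _ := by ring

lemma sum_sum_triMass_mul_inv_le {p q r : V} {c : ℝ} (hA' : #A ≤ 24 * s) (hr : r ∈ A)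
    (hp : p ∈ block A (3 * s) (4 * s)) (hq : q ∈ A) (h : sbtw p q r) (hc : 1 ≤ 9 * c) :
    (∑ q' ∈ A, ∑ p' ∈ A, triMass A s p' q' r) * (s : ℝ)⁻¹ * (s : ℝ)⁻¹ * (s : ℝ)⁻¹ ≤
      9 * 640 * 24 ^ 6 / s * c * #(withTriangle A p q r) := by
  have : (0 : ℝ) < s := Nat.cast_pos.2 hs
  calc _ ≤ 640 * 24 ^ 6 * s ^ 2 * #(withTriangle A p q r) * (s : ℝ)⁻¹ * (s : ℝ)⁻¹ * (s : ℝ)⁻¹ := by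
        gcongr
        exact sum_sum_triMass_le hs hA hA' hr hp hq h
    _ = 640 * 24 ^ 6 / s * #(withTriangle A p q r) := by field_simp
    _ ≤ 9 * c * (640 * 24 ^ 6 / s * #(withTriangle A p q r)) :=
        le_mul_of_one_le_left (by positivity) hc
    _ = _ := by ring

lemma sum_triMass_mul_abs_triAvg_thd_sub_le (hA' : #A ≤ 24 * s) (f : Finset (Sym2 V) → ℝ) :
    ∑ r ∈ A, ∑ p' ∈ A, ∑ q' ∈ A, ∑ r' ∈ A, (∑ q ∈ A, ∑ p ∈ A, triMass A s p q r) *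
        uniformWeight (block A (3 * s) (4 * s)) p' * uniformWeight (block A (7 * s) (8 * s)) q' *
        uniformWeight (block A (11 * s) (12 * s)) r' *
        |triAvg A f p' q' r - triAvg A f p' q' r'| ≤
      96 * (9 * 640 * 24 ^ 6 / s) * pow32 #A * energy (triangulations A) f := by
  have : (0 : ℝ) < s := Nat.cast_pos.2 hs
  have hκ := (isTriangleWeight_wideWeight hs hA).rotate.rotate
  have hmove := sum_mul_abs_triAvg_sub_le hκ hκ (K := 9 * 640 * 24 ^ 6 / s) (by positivity)
    (w := fun r p' q' r' => (∑ q ∈ A, ∑ p ∈ A, triMass A s p q r) *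
      uniformWeight (block A (3 * s) (4 * s)) p' * uniformWeight (block A (7 * s) (8 * s)) q' *
      uniformWeight (block A (11 * s) (12 * s)) r')
    (fun r p' q' r' => mul_nonneg (mul_nonneg (mul_nonneg
      (sum_nonneg fun q _ => sum_nonneg fun p _ => triMass_nonneg hs hA p q r)
      (uniformWeight_nonneg _ p')) (uniformWeight_nonneg _ q')) (uniformWeight_nonneg _ r'))
    (fun r hr p' _ q' hq'A r' _ hne => ?_) f
  · refine le_of_eq_of_le (sum_congr rfl fun r _ => sum_congr rfl fun p' _ =>
      sum_congr rfl fun q' _ => sum_congr rfl fun r' _ => ?_) hmove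
    rw [triAvg_rotate A f r p' q', triAvg_rotate A f r' p' q']
  have hne₂ := left_ne_zero_of_mul hne
  have hne₁ := left_ne_zero_of_mul hne₂
  obtain ⟨q, hq, hqne⟩ := exists_ne_zero_of_sum_ne_zero (left_ne_zero_of_mul hne₁)
  obtain ⟨p, hp, hpne⟩ := exists_ne_zero_of_sum_ne_zero hqne
  have hc := isCentral_of_triMass_ne_zero hp hq hr hpne
  have hp' := mem_of_uniformWeight_ne_zero (right_ne_zero_of_mul hne₁)
  have hq' := mem_of_uniformWeight_ne_zero (right_ne_zero_of_mul hne₂)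
  have hr' := mem_of_uniformWeight_ne_zero (right_ne_zero_of_mul hne)
  have hs₁ := hc.sbtw_of_mem_block_snd hp' hq'
  have hwide := hc.one_le_nine_mul_wideWeight hs hA hp' hq'
  have hwide' : 1 ≤ 9 * wideWeight A s p' q' r' := by linarith [one_le_wideWeight hs hA hp' hq' hr']
  have hweight {c : ℝ} := sum_sum_triMass_mul_inv_le (c := c) hs hA hA' hr hp' hq'A hs₁
  rw [uniformWeight_block (i := 3) (by lia) hp', uniformWeight_block (i := 7) (by lia) hq',
    uniformWeight_block (i := 11) (by lia) hr', withTriangle_rotate A r p' q']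
  exact ⟨hs₁.cyclic_right, (sbtw_of_mem_block (by lia) (by lia) p' hp' q' hq' r' hr').cyclic_right,
    hweight hwide, hweight hwide'⟩

end CentralTransport

/-! ### The recursion -/

section MainStep

variable {V : Type*} [LinearOrder V] {A : Finset V} {s : ℕ} {K : ℝ}

lemma card_mul_abs_average_sub {α : Type*} (T : Finset α) (f : α → ℝ) (μ : ℝ) :
    #T * |(∑ x ∈ T, f x) / #T - μ| = |∑ x ∈ T, (f x - μ)| := by
  obtain rfl | hT := T.eq_empty_or_nonempty
  · simp
  have : (0 : ℝ) < #T := Nat.cast_pos.2 hT.card_pos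
  rw [sum_sub_distrib, sum_const, nsmul_eq_mul, ← abs_of_pos this, ← abs_mul, abs_of_pos this]
  congr 1
  field_simp

lemma sum_abs_sub_le_meanDev_add {α : Type*} (T : Finset α) (f : α → ℝ) (μ : ℝ) :
    ∑ x ∈ T, |f x - μ| ≤ meanDev T f + #T * |(∑ x ∈ T, f x) / #T - μ| := by
  rw [meanDev, ← nsmul_eq_mul, ← sum_const, ← sum_add_distrib]
  exact sum_le_sum fun x _ => abs_sub_le ..

lemma IsTriangleWeight.meanDev_triangulations_le {κ : V → V → V → ℝ} (hκ : IsTriangleWeight A κ)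
    (f : Finset (Sym2 V) → ℝ) (μ : ℝ) :
    meanDev (triangulations A) f ≤
      ∑ p ∈ A, ∑ q ∈ A, ∑ r ∈ A, κ p q r * meanDev (withTriangle A p q r) f +
        2 * ∑ p ∈ A, ∑ q ∈ A, ∑ r ∈ A,
          κ p q r * #(withTriangle A p q r) * |triAvg A f p q r - μ| := by
  have hdev : ∑ x ∈ triangulations A, |f x - μ| ≤
      ∑ p ∈ A, ∑ q ∈ A, ∑ r ∈ A, κ p q r * meanDev (withTriangle A p q r) f +
        ∑ p ∈ A, ∑ q ∈ A, ∑ r ∈ A,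
          κ p q r * #(withTriangle A p q r) * |triAvg A f p q r - μ| := by
    simp only [← hκ.sum_eq, ← sum_add_distrib, mul_assoc, ← mul_add]
    gcongr with p _ q _ r _
    · exact hκ.nonneg p q r
    · exact sum_abs_sub_le_meanDev_add ..
  have hmean : |∑ x ∈ triangulations A, (f x - μ)| ≤ ∑ p ∈ A, ∑ q ∈ A, ∑ r ∈ A,
      κ p q r * #(withTriangle A p q r) * |triAvg A f p q r - μ| := by
    rw [← hκ.sum_eq]
    refine (abs_sum_le_sum_abs _ _).trans (sum_le_sum fun p _ => ?_)
    refine (abs_sum_le_sum_abs _ _).trans (sum_le_sum fun q _ => ?_)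
    refine (abs_sum_le_sum_abs _ _).trans (sum_le_sum fun r _ => ?_)
    rw [abs_mul, abs_of_nonneg (hκ.nonneg p q r), ← card_mul_abs_average_sub, mul_assoc, triAvg]
  have htri : meanDev (triangulations A) f ≤
      ∑ x ∈ triangulations A, |f x - μ| + |∑ x ∈ triangulations A, (f x - μ)| := by
    rw [← card_mul_abs_average_sub (triangulations A), meanDev, ← nsmul_eq_mul, ← sum_const,
      ← sum_add_distrib]
    refine sum_le_sum fun x _ => ?_
    rw [abs_sub_comm (_ / _) μ]
    exact abs_sub_le (f x) μ _
  linarith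

lemma sum_narrowWeight_mul_meanDev_le (hs : 0 < s) (hA : 12 * s ≤ #A) (hK : 0 ≤ K)
    (hrec : ∀ u ∈ A, ∀ v ∈ A, u ≠ v → #(arc A u v) + s ≤ #A + 1 →
      Poincare (triangulations (arc A u v)) K) (f : Finset (Sym2 V) → ℝ) :
    ∑ p ∈ A, ∑ q ∈ A, ∑ r ∈ A, narrowWeight A s p q r * meanDev (withTriangle A p q r) f ≤
      K * energy (triangulations A) f := by
  have hκ := isTriangleWeight_narrowWeight hs hA
  refine le_trans ?_ (mul_le_mul_of_nonneg_left (hκ.sum_mul_energy_le f) hK)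
  simp only [mul_sum]
  refine sum_le_sum fun p hp => sum_le_sum fun q hq => sum_le_sum fun r hr => ?_
  by_cases hne : narrowWeight A s p q r = 0
  · simp only [hne, zero_mul, mul_zero, le_refl]
  have hc := isCentral_of_narrowWeight_ne_zero hp hq hr hne
  obtain ⟨hpq, hqr, hpr⟩ := sbtw_ne hc.oriented
  obtain ⟨h₁, h₂, h₃⟩ := hc.card_arc_add_le hA
  rw [mul_left_comm]
  exact mul_le_mul_of_nonneg_left (poincare_withTriangle hp hq hr hc.oriented hK
    (hrec p hp q hq hpq h₁) (hrec q hq r hr hqr h₂) (hrec r hr p hp hpr.symm h₃) f)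
    (hκ.nonneg p q r)

/-- Twice the total cost of moving the three vertices of a central triangle, relative to
`√n * energy`. -/
noncomputable def stepConst : ℝ :=
  2 * (96 * 24 * (27 + 9 * 27 * 16 * 24 ^ 3 + 9 * 640 * 24 ^ 6))

lemma one_le_stepConst : 1 ≤ stepConst := by
  norm_num [stepConst]

lemma exists_sum_triMass_mul_abs_triAvg_sub_le (hs : 0 < s) (hA : 12 * s ≤ #A)
    (hA' : #A ≤ 24 * s) (f : Finset (Sym2 V) → ℝ) :
    ∃ μ, 2 * ∑ p ∈ A, ∑ q ∈ A, ∑ r ∈ A, triMass A s p q r * |triAvg A f p q r - μ| ≤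
      stepConst * √(#A) * energy (triangulations A) f := by
  have hs₀ : (0 : ℝ) < s := Nat.cast_pos.2 hs
  have htele := sum_mul_abs_sub_sum_triple_le (uniformWeight_nonneg (block A (3 * s) (4 * s)))
    (uniformWeight_nonneg (block A (7 * s) (8 * s)))
    (uniformWeight_nonneg (block A (11 * s) (12 * s)))
    (sum_uniformWeight_block (by lia) (by lia)) (sum_uniformWeight_block (by lia) (by lia))
    (sum_uniformWeight_block (by lia) (by lia)) (triAvg A f) (triMass_nonneg hs hA)
  refine ⟨_, (mul_le_mul_of_nonneg_left (htele.trans (add_le_add_three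
    (sum_triMass_mul_abs_triAvg_fst_sub_le hs hA f)
    (sum_triMass_mul_abs_triAvg_snd_sub_le hs hA hA' f)
    (sum_triMass_mul_abs_triAvg_thd_sub_le hs hA hA' f))) zero_le_two).trans ?_⟩
  have hpow : pow32 #A / s ≤ 24 * √(#A) := by
    rw [pow32, mul_div_right_comm]
    gcongr
    rw [div_le_iff₀ hs₀]
    exact_mod_cast hA'
  have henergy : 0 ≤ energy (triangulations A) f := energy_nonneg f
  calc _ = 2 * (96 * (27 + 9 * 27 * 16 * 24 ^ 3 + 9 * 640 * 24 ^ 6)) * (pow32 #A / s) *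
          energy (triangulations A) f := by ring
    _ ≤ 2 * (96 * (27 + 9 * 27 * 16 * 24 ^ 3 + 9 * 640 * 24 ^ 6)) * (24 * √(#A)) *
          energy (triangulations A) f := by gcongr
    _ = _ := by
        rw [stepConst]
        ring

lemma poincare_triangulations_of_arcs (hs : 0 < s) (hA : 12 * s ≤ #A) (hA' : #A ≤ 24 * s)
    (hK : 0 ≤ K)
    (hrec : ∀ u ∈ A, ∀ v ∈ A, u ≠ v → #(arc A u v) + s ≤ #A + 1 →
      Poincare (triangulations (arc A u v)) K) :
    Poincare (triangulations A) (K + stepConst * √(#A)) := fun f => by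
  obtain ⟨μ, hμ⟩ := exists_sum_triMass_mul_abs_triAvg_sub_le hs hA hA' f
  rw [add_mul]
  exact ((isTriangleWeight_narrowWeight hs hA).meanDev_triangulations_le f μ).trans
    (add_le_add (sum_narrowWeight_mul_meanDev_le hs hA hK hrec f) hμ)

theorem poincare_triangulations_sqrt {A : Finset V} (hA : 2 ≤ #A) :
    Poincare (triangulations A) (96 * stepConst * √(#A)) := by
  induction hn : #A using Nat.strong_induction_on generalizing A with
  | _ n ih =>
  have hC := one_le_stepConst
  rw [hn] at hA
  obtain h48 | h48 := lt_or_ge n 48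
  · refine (poincare_triangulations_card (hn.symm ▸ hA)).mono ?_
    have hsqrt : (1 : ℝ) ≤ √n := Real.one_le_sqrt.2 (by exact_mod_cast one_le_two.trans hA)
    have hn48 : (n : ℝ) ≤ 48 := by exact_mod_cast h48.le
    rw [hn]
    nlinarith
  obtain ⟨s, hs⟩ : ∃ s, s = n / 12 := ⟨_, rfl⟩
  have hstep := poincare_triangulations_of_arcs (A := A) (s := s) (by lia) (by lia) (by lia)
    (K := 96 * stepConst * √(n + 1 - s : ℕ)) (by positivity) fun u hu v hv huv hcard => by
      refine (ih #(arc A u v) (by lia) (two_le_card_arc hu hv huv) rfl).mono ?_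
      gcongr
      lia
  refine hstep.mono ?_
  have hlin : ((n + 1 - s : ℕ) : ℝ) ≤ 47 / 48 * n := by
    have : 48 * ((n + 1 - s : ℕ) : ℝ) ≤ 47 * n := by
      exact_mod_cast (show 48 * (n + 1 - s) ≤ 47 * n by lia)
    linarith
  have hsqrt : √(n + 1 - s : ℕ) ≤ 95 / 96 * √n := by
    rw [Real.sqrt_le_left (by positivity), mul_pow, Real.sq_sqrt n.cast_nonneg]
    nlinarith
  rw [hn]
  calc 96 * stepConst * √(n + 1 - s : ℕ) + stepConst * √n
      ≤ 96 * stepConst * (95 / 96 * √n) + stepConst * √n := by gcongr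
    _ = _ := by ring

end MainStep

/-! ### The associahedron graph -/

section Polygon

variable {m : ℕ} {a b c d : Fin m}

lemma cycBtw_iff_sbtw : CycBtw a b c ↔ sbtw a c b := by
  have fin_sub_val (x y : Fin m) :
      (x - y).val = if y.val ≤ x.val then x.val - y.val else m + x.val - y.val := by
    split_ifs with h
    · exact Fin.coe_sub_iff_le.2 h
    · exact Fin.coe_sub_iff_lt.2 (Fin.lt_def.2 (not_le.1 h))
  rw [CycBtw, fin_sub_val, fin_sub_val, sbtw_iff_lt]
  simp only [Fin.lt_def]
  split_ifs <;> lia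

lemma crosses_mk_iff : Crosses s(a, b) s(c, d) ↔ Cross a b c d ∨ Cross a b d c := by
  have hxor : Crosses s(a, b) s(c, d) ↔
      Xor (CycBtw a b c) (CycBtw a b d) ∧ Xor (CycBtw b a c) (CycBtw b a d) := by
    have hcd (u v : Fin m) : (∃ c' d', s(c, d) = s(c', d') ∧ Xor (CycBtw u v c') (CycBtw u v d')) ↔
        Xor (CycBtw u v c) (CycBtw u v d) := by
      refine ⟨?_, fun h => ⟨c, d, rfl, h⟩⟩
      rintro ⟨c', d', hcd, h⟩
      obtain ⟨rfl, rfl⟩ | ⟨rfl, rfl⟩ := Sym2.eq_iff.1 hcd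
      exacts [h, (xor_comm _ _).mp h]
    refine ⟨fun h => ⟨(hcd a b).1 (h a b rfl), (hcd b a).1 (h b a Sym2.eq_swap)⟩, ?_⟩
    rintro ⟨h₁, h₂⟩ u v huv
    obtain ⟨rfl, rfl⟩ | ⟨rfl, rfl⟩ := Sym2.eq_iff.1 huv
    exacts [(hcd a b).2 h₁, (hcd b a).2 h₂]
  simp only [hxor, cycBtw_iff_sbtw, Cross, sbtw_iff_lt, Xor]
  grind (splits := 30)

lemma not_cross_of_polyAdj (h : PolyAdj a b) : ¬ Cross a b c d := by
  rw [Cross, ← cycBtw_iff_sbtw, ← cycBtw_iff_sbtw, CycBtw, CycBtw]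
  rw [PolyAdj] at h
  lia

lemma not_cross_of_not_isDiagonal (h : ¬ IsDiagonal s(a, b)) : ¬ Cross a b c d := by
  rw [IsDiagonal, not_and_or, not_not, Sym2.mk_isDiag_iff] at h
  obtain rfl | h := h
  · exact not_cross_self
  push Not at h
  obtain ⟨a', b', hab, hadj⟩ := h
  obtain ⟨rfl, rfl⟩ | ⟨rfl, rfl⟩ := Sym2.eq_iff.1 hab
  · exact not_cross_of_polyAdj hadj
  · exact fun hc => not_cross_of_polyAdj hadj hc.reverse

end Polygon

section Triangulation

variable {n : ℕ} {s t : Triangulation n} {e : Sym2 (Fin (n + 2))}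
  {x : Finset (Sym2 (Fin (n + 2)))}

open Classical in
/-- The chords of a triangulation: its diagonals together with all sides and loops. This is the
encoding of `t` as a member of `triangulations univ`. -/
noncomputable def chords (t : Triangulation n) : Finset (Sym2 (Fin (n + 2))) :=
  t.val ∪ ({e | ¬ IsDiagonal e} : Finset _)

lemma mem_chords : e ∈ chords t ↔ e ∈ t.val ∨ ¬ IsDiagonal e := by
  simp [chords]

lemma chords_mem_triangulations (t : Triangulation n) : chords t ∈ triangulations univ := by
  obtain ⟨-, hcross, hmax⟩ := t.2
  refine mem_triangulations.2 ⟨fun a b _ => ⟨mem_univ a, mem_univ b⟩, fun a _ b _ =>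
    ⟨fun hab c d hcd hc => ?_, fun h => ?_⟩⟩
  · rw [mem_chords] at hab hcd
    obtain hab | hab := hab
    · obtain hcd | hcd := hcd
      · exact hcross _ hab _ hcd (crosses_mk_iff.2 (.inl hc))
      · exact not_cross_of_not_isDiagonal hcd hc.symm
    · exact not_cross_of_not_isDiagonal hab hc
  · by_contra hab
    rw [mem_chords, not_or, not_not] at hab
    refine hab.1 (hmax _ hab.2 (Sym2.forall.2 fun c d hcd => ?_))
    rw [crosses_mk_iff, not_or]
    exact ⟨h c d (mem_chords.2 (.inl hcd)), h d c (mem_chords.2 (.inl (Sym2.eq_swap ▸ hcd)))⟩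

lemma chords_sdiff_chords (s t : Triangulation n) : chords s \ chords t = s.val \ t.val := by
  ext e
  have := s.2.1 e
  simp only [mem_sdiff, mem_chords]
  tauto

lemma chords_injective : Function.Injective (chords (n := n)) := fun s t h => by
  refine Subtype.ext (subset_antisymm ?_ ?_) <;> rw [← sdiff_eq_empty_iff_subset]
  · rw [← chords_sdiff_chords, h, sdiff_self]
    rfl
  · rw [← chords_sdiff_chords, h, sdiff_self]
    rfl

lemma flipAdj_chords : FlipAdj (chords s) (chords t) ↔ (assocGraph n).Adj s t := by
  have hcard (u v : Triangulation n) : #(chords u \ chords v) = #(u.val \ v.val) :=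
    congrArg card (chords_sdiff_chords u v)
  simp only [FlipAdj, assocGraph]
  convert Iff.rfl using 3
  exacts [(hcard s t).symm, (hcard t s).symm]

lemma isTriangulation_filter_isDiagonal [DecidablePred (IsDiagonal (m := n + 2))]
    (hx : x ∈ triangulations univ) : IsTriangulation n {e ∈ x | IsDiagonal e} := by
  refine ⟨fun e he => (mem_filter.1 he).2, Sym2.forall.2 fun a b hab => Sym2.forall.2 fun c d hcd =>
    ?_, Sym2.forall.2 fun a b hab h => ?_⟩
  · have hab := (mem_filter.1 hab).1
    have hcd := (mem_filter.1 hcd).1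
    rw [crosses_mk_iff, not_or]
    exact ⟨not_cross_of_mem hx hab hcd, not_cross_of_mem hx hab (Sym2.eq_swap ▸ hcd)⟩
  · refine mem_filter.2 ⟨chord_mem_of_forall_not_cross hx (mem_univ a) (mem_univ b)
      fun c d hcd hc => ?_, hab⟩
    by_cases hdiag : IsDiagonal s(c, d)
    · exact h _ (mem_filter.2 ⟨hcd, hdiag⟩) (crosses_mk_iff.2 (.inl hc))
    · exact not_cross_of_not_isDiagonal hdiag hc.symm

lemma exists_chords_eq (hx : x ∈ triangulations univ) : ∃ t : Triangulation n, chords t = x := by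
  classical
  refine ⟨⟨_, isTriangulation_filter_isDiagonal hx⟩, sym2_finset_ext fun a b => ?_⟩
  have hside : ¬ IsDiagonal s(a, b) → s(a, b) ∈ x := fun h =>
    chord_mem_of_forall_not_cross hx (mem_univ a) (mem_univ b) fun _ _ _ =>
      not_cross_of_not_isDiagonal h
  refine mem_chords.trans ?_
  simp only [mem_filter]
  tauto

lemma sum_triangulations_univ (g : Finset (Sym2 (Fin (n + 2))) → ℝ) :
    ∑ x ∈ triangulations univ, g x = ∑ t : Triangulation n, g (chords t) := by
  refine (sum_nbij chords (fun t _ => chords_mem_triangulations t) chords_injective.injOn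
    (fun x hx => ?_) fun _ _ => rfl).symm
  obtain ⟨t, rfl⟩ := exists_chords_eq (mem_coe.1 hx)
  exact ⟨t, by simp, rfl⟩

open Classical in
theorem meanDev_univ_le (g : Triangulation n → ℝ) :
    meanDev univ g ≤ 96 * stepConst * √(n + 2) *
      ∑ s, ∑ t, if (assocGraph n).Adj s t then |g s - g t| else 0 := by
  have hP := poincare_triangulations_sqrt (A := (univ : Finset (Fin (n + 2)))) (by simp)
    (Function.extend chords g 0)
  have hcard : (#(triangulations (univ : Finset (Fin (n + 2)))) : ℝ) =
      #(univ (α := Triangulation n)) := by simpa using sum_triangulations_univ (n := n) fun _ => 1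
  simpa only [meanDev, energy, edgeVar, hcard, sum_triangulations_univ, flipAdj_chords,
    chords_injective.extend_apply, card_fin, Nat.cast_add, Nat.cast_ofNat] using hP

end Triangulation

section Expansion

variable {V : Type*} [Fintype V]

open Classical in
lemma ncard_le_two_mul_meanDev_indicator {S : Set V} (hS : 2 * S.ncard ≤ Nat.card V) :
    S.ncard ≤ 2 * meanDev univ (S.indicator (1 : V → ℝ)) := by
  have hsum : ∑ v, S.indicator (1 : V → ℝ) v = S.ncard := by
    simp [Set.indicator_apply, Set.ncard_eq_toFinset_card']
  have hmean : (S.ncard : ℝ) / #(univ (α := V)) ≤ 1 / 2 := by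
    refine div_le_of_le_mul₀ (by positivity) (by norm_num) ?_
    have : (2 * S.ncard : ℝ) ≤ #(univ (α := V)) := by
      exact_mod_cast (Nat.card_eq_fintype_card (α := V)) ▸ hS
    linarith
  rw [meanDev, hsum, ← hsum, mul_sum]
  refine sum_le_sum fun v _ => ?_
  by_cases hv : v ∈ S
  · rw [hsum, Set.indicator_of_mem hv, Pi.one_apply]
    linarith [le_abs_self (1 - (S.ncard : ℝ) / #(univ (α := V)))]
  · rw [Set.indicator_of_notMem hv]
    positivity

open Classical in
lemma card_filter_adj_le_ncard_edgeBoundary (G : SimpleGraph V) (S : Set V) :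
    #{z : V × V | G.Adj z.1 z.2 ∧ z.1 ∈ S ∧ z.2 ∉ S} ≤ (edgeBoundary G S).ncard := by
  rw [← Set.ncard_coe_finset]
  refine Set.ncard_le_ncard_of_injOn (fun z => s(z.1, z.2)) ?_ ?_ (Set.toFinite _)
  · intro z hz
    obtain ⟨hadj, hz₁, hz₂⟩ := (mem_filter.1 (mem_coe.1 hz)).2
    exact ⟨hadj, z.1, z.2, rfl, hz₁, hz₂⟩
  · intro z hz w hw h
    have hz := (mem_filter.1 (mem_coe.1 hz)).2
    have hw := (mem_filter.1 (mem_coe.1 hw)).2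
    obtain h | h := Sym2.eq_iff.1 h
    · exact Prod.ext h.1 h.2
    · exact absurd (h.1 ▸ hz.2.1) hw.2.2

open Classical in
lemma sum_adj_abs_indicator_sub_le (G : SimpleGraph V) (S : Set V) :
    ∑ u, ∑ v, (if G.Adj u v then |S.indicator (1 : V → ℝ) u - S.indicator 1 v| else 0) ≤
      2 * (edgeBoundary G S).ncard := by
  have hcut : ∑ u, ∑ v, (if G.Adj u v ∧ u ∈ S ∧ v ∉ S then (1 : ℝ) else 0) ≤
      (edgeBoundary G S).ncard := by
    rw [← Fintype.sum_prod_type', sum_boole]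
    exact_mod_cast card_filter_adj_le_ncard_edgeBoundary G S
  calc _ = ∑ u, ∑ v, ((if G.Adj u v ∧ u ∈ S ∧ v ∉ S then (1 : ℝ) else 0) +
          if G.Adj v u ∧ v ∈ S ∧ u ∉ S then 1 else 0) := by
        refine sum_congr rfl fun u _ => sum_congr rfl fun v _ => ?_
        rw [G.adj_comm v u]
        by_cases hu : u ∈ S <;> by_cases hv : v ∈ S <;> simp [hu, hv]
    _ = 2 * ∑ u, ∑ v, (if G.Adj u v ∧ u ∈ S ∧ v ∉ S then (1 : ℝ) else 0) := by
        simp only [sum_add_distrib]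
        rw [sum_comm (f := fun u v => if G.Adj v u ∧ v ∈ S ∧ u ∉ S then (1 : ℝ) else 0), two_mul]
    _ ≤ _ := by gcongr

end Expansion

theorem assocGraph_ncard_le {n : ℕ} {S : Set (Triangulation n)}
    (hS : 2 * S.ncard ≤ Nat.card (Triangulation n)) :
    S.ncard ≤ 384 * stepConst * √(n + 2) * (edgeBoundary (assocGraph n) S).ncard := by
  classical
  have hC := one_le_stepConst
  calc (S.ncard : ℝ) ≤ 2 * meanDev univ (S.indicator 1) := ncard_le_two_mul_meanDev_indicator hS
    _ ≤ 2 * (96 * stepConst * √(n + 2) * (2 * (edgeBoundary (assocGraph n) S).ncard)) := by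
        grw [meanDev_univ_le, sum_adj_abs_indicator_sub_le]
    _ = _ := by ring

end Associahedron

theorem assocGraph_expansion_lower_bound_general :
    ∃ c : ℝ, 0 < c ∧ ∀ n : ℕ, 1 ≤ n → ∀ S : Set (Triangulation n),
      2 * S.ncard ≤ Nat.card (Triangulation n) →
      c * (S.ncard : ℝ) / √n ≤ ((edgeBoundary (assocGraph n) S).ncard : ℝ) := by
  have hC : 0 < Associahedron.stepConst := one_pos.trans_le Associahedron.one_le_stepConst
  refine ⟨1 / (768 * Associahedron.stepConst), by positivity, fun n hn S hS => ?_⟩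
  have hn₁ : (1 : ℝ) ≤ n := by exact_mod_cast hn
  have hsqrt : √(n + 2) ≤ 2 * √n := by
    rw [Real.sqrt_le_left (by positivity), mul_pow, Real.sq_sqrt n.cast_nonneg]
    linarith
  rw [div_le_iff₀ (by positivity), one_div_mul_eq_div, div_le_iff₀ (by positivity)]
  calc (S.ncard : ℝ)
      ≤ 384 * Associahedron.stepConst * √(n + 2) * (edgeBoundary (assocGraph n) S).ncard :=
        Associahedron.assocGraph_ncard_le hS
    _ ≤ 384 * Associahedron.stepConst * (2 * √n) * (edgeBoundary (assocGraph n) S).ncard := by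
        gcongr
    _ = _ := by ring

/-- there is a constant `c > 0` such that for every `n ≥ 2` and every
nonempty set `S` of triangulations of the convex `(n+2)`-gon with `2|S| ≤ |V(K_n)|`,
the number of edges of `K_n` with exactly one endpoint in `S` is at least
`c·|S|/(√n·log n)`; i.e. the edge expansion of `K_n` is `Ω(1/(√n·log n))`. -/
theorem assocGraph_expansion_lower_bound :
    ∃ c : ℝ, 0 < c ∧ ∀ n : ℕ, 2 ≤ n → ∀ S : Set (Triangulation n),
      S.Nonempty → 2 * S.ncard ≤ Nat.card (Triangulation n) →
      c * (S.ncard : ℝ) / (Real.sqrt n * Real.log n) ≤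
        ((edgeBoundary (assocGraph n) S).ncard : ℝ) := by
  obtain ⟨c, hc, hcut⟩ := assocGraph_expansion_lower_bound_general
  have hlog₂ := Real.log_pos one_lt_two
  refine ⟨c * Real.log 2, by positivity, fun n hn S _ hS => ?_⟩
  have hlog : Real.log 2 ≤ Real.log n := Real.log_le_log two_pos (by exact_mod_cast hn)
  calc c * Real.log 2 * S.ncard / (√n * Real.log n)
      = c * S.ncard / √n * (Real.log 2 / Real.log n) := by ring
    _ ≤ c * S.ncard / √n :=
        mul_le_of_le_one_right (by positivity) (div_le_one_of_le₀ hlog (hlog₂.le.trans hlog))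
    _ ≤ _ := hcut n (one_le_two.trans hn) S hS
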